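/- arXiv:2604.24412 — 14 statements merged into one kernel-verified Lean document; each statement's English description precedes it below -/
import Mathlib

section
/- For every integer h ≥ 4, there exists a (2h−1)-uniform hypergraph H which has no polychromatic 3-coloring, but all of whose h-heavy restricted subhypergraphs are 2-colorable. -/
/-- Every edge of the hypergraph has exactly `m` vertices. -/
def IsUniform {α : Type*} (E : Finset (Finset α)) (m : ℕ) : Prop :=
  ∀ e ∈ E, e.card = m

/-- There is no coloring of the vertices with 3 colors such that every
edge contains all 3 colors. -/
def NoPolychromatic3 {α : Type*} (E : Finset (Finset α)) : Prop :=
  ∀ c : α → Fin 3, ∃ e ∈ E, ∃ i : Fin 3, ∀ v ∈ e, c v ≠ i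

/-- Every `h`-heavy restricted subhypergraph (a family of trace edges on some
`X`, all of size at least `h`) admits a proper two-coloring. -/
def HeavyRestrictedTwoColorable {α : Type*} [DecidableEq α]
    (E : Finset (Finset α)) (h : ℕ) : Prop :=
  ∀ X : Finset α, ∀ F : Finset (Finset α),
    (∀ f ∈ F, (∃ e ∈ E, f = e ∩ X) ∧ h ≤ f.card) →
    ∃ c : α → Bool, ∀ f ∈ F, (∃ v ∈ f, c v = true) ∧ (∃ v ∈ f, c v = false)

/-- Reduction: a family `K` of `h`-sets (complements of edges) on `3h-1` points. -/
lemma reduction {α : Type*} [Fintype α] [DecidableEq α] (h : ℕ) (hh : 4 ≤ h)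
    (hcard : Fintype.card α = 3 * h - 1) (K : Finset α → Prop)
    (hcov : ∀ B : Finset α, B.card = h - 1 → ∃ S, B ⊆ S ∧ S.card = h ∧ K S)
    (h1 : ∀ C : Finset α, C.card = h → ∃ B, Disjoint B C ∧ B.card = h - 1 ∧
      ∀ v ∈ C, ¬ K (insert v B))
    (h2 : ∀ C : Finset α, C.card = h - 1 → ∃ A B, Disjoint A B ∧ A ∪ B = Cᶜ ∧
      A.card = h ∧ B.card = h ∧ ¬ K A ∧ ¬ K B) :
    ∃ E : Finset (Finset α), IsUniform E (2 * h - 1) ∧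
      NoPolychromatic3 E ∧ HeavyRestrictedTwoColorable E h := by
  classical
  refine ⟨Finset.univ.filter (fun e => e.card = 2 * h - 1 ∧ K eᶜ), ?_, ?_, ?_⟩
  · intro e he
    simp only [Finset.mem_filter, Finset.mem_univ, true_and] at he
    exact he.1
  · intro c
    have hsum : ∑ i : Fin 3, (Finset.univ.filter (fun v => c v = i)).card = 3 * h - 1 := by
      rw [← hcard, ← Finset.card_univ]
      exact (Finset.card_eq_sum_card_fiberwise (fun v _ => Finset.mem_coe.2 (Finset.mem_univ (c v)))).symm
    have : ∃ i : Fin 3, (Finset.univ.filter (fun v => c v = i)).card ≤ h - 1 := by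
      by_contra! hcon
      rw [Fin.sum_univ_three] at hsum
      have a0 := hcon 0
      have a1 := hcon 1
      have a2 := hcon 2
      omega
    obtain ⟨i, hi⟩ := this
    obtain ⟨B, hB1, -, hB2⟩ := Finset.exists_subsuperset_card_eq
      (Finset.subset_univ (Finset.univ.filter (fun v => c v = i))) hi
      (by rw [Finset.card_univ]; omega)
    obtain ⟨S, hS1, hS2, hS3⟩ := hcov B hB2
    refine ⟨Sᶜ, ?_, i, ?_⟩
    · simp only [Finset.mem_filter, Finset.mem_univ, true_and, compl_compl, hS3, and_true]
      rw [Finset.card_compl]; omega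
    · intro v hv hc
      have : v ∈ S := hS1 (hB1 (by simp [hc]))
      simp at hv
      exact hv this
  · intro X F hF
    suffices hR : ∃ R : Finset α, ∀ e : Finset α, e.card = 2 * h - 1 → K eᶜ → h ≤ (e ∩ X).card →
        ¬ (e ∩ X ⊆ R) ∧ ¬ (Disjoint (e ∩ X) R) by
      obtain ⟨R, hR⟩ := hR
      refine ⟨fun v => decide (v ∈ R), ?_⟩
      intro f hf
      obtain ⟨⟨e, he, rfl⟩, hc⟩ := hF f hf
      simp only [Finset.mem_filter, Finset.mem_univ, true_and] at he
      obtain ⟨r1, r2⟩ := hR e he.1 he.2 hc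
      rw [Finset.not_subset] at r1
      rw [Finset.not_disjoint_iff] at r2
      obtain ⟨a, ha, ha'⟩ := r1
      obtain ⟨b, hb, hb'⟩ := r2
      exact ⟨⟨b, hb, by simpa using hb'⟩, ⟨a, ha, by simpa using ha'⟩⟩
    have hXc : X.card + Xᶜ.card = 3 * h - 1 := by rw [Finset.card_add_card_compl, hcard]
    have hec : ∀ e : Finset α, e.card = 2 * h - 1 → eᶜ.card = h := by
      intro e he; rw [Finset.card_compl]; omega
    rcases Nat.lt_or_ge X.card (2 * h - 1) with hx | hx
    · obtain ⟨R, hR1, hR2⟩ := Finset.exists_subset_card_eq (s := X) (n := X.card / 2) (by omega)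
      refine ⟨R, fun e he hK hc => ⟨fun hs => ?_, fun hd => ?_⟩⟩
      · have := Finset.card_le_card hs
        omega
      · have : e ∩ X ⊆ X \ R := by
          intro v hv
          rw [Finset.mem_sdiff]
          exact ⟨(Finset.mem_inter.1 hv).2, Finset.disjoint_left.1 hd hv⟩
        have := Finset.card_le_card this
        rw [Finset.card_sdiff_of_subset hR1] at this
        omega
    rcases Nat.lt_or_ge X.card (2 * h) with hx2 | hx2
    · obtain ⟨B, hB1, hB2, hB3⟩ := h1 Xᶜ (by omega)
      have hBX : B ⊆ X := by
        intro v hv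
        have := Finset.disjoint_left.1 hB1 hv
        simpa using this
      have hRc : (X \ B).card = h := by
        rw [Finset.card_sdiff_of_subset hBX]; omega
      refine ⟨X \ B, fun e he hK hc => ⟨fun hs => ?_, fun hd => ?_⟩⟩
      · have heq : e ∩ X = X \ B := Finset.eq_of_subset_of_card_le hs (by omega)
        have hBe : B ⊆ eᶜ := by
          intro v hv
          rw [Finset.mem_compl]
          intro hve
          have : v ∈ X \ B := heq ▸ Finset.mem_inter.2 ⟨hve, hBX hv⟩
          exact (Finset.mem_sdiff.1 this).2 hv
        have hcd : (eᶜ \ B).card = 1 := by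
          rw [Finset.card_sdiff_of_subset hBe, hec e he]; omega
        obtain ⟨v, hv⟩ := Finset.card_eq_one.1 hcd
        have hvm : v ∈ eᶜ \ B := by rw [hv]; simp
        rw [Finset.mem_sdiff, Finset.mem_compl] at hvm
        have hvX : v ∈ Xᶜ := by
          rw [Finset.mem_compl]
          intro hvX
          have : v ∈ e ∩ X := heq ▸ Finset.mem_sdiff.2 ⟨hvX, hvm.2⟩
          exact hvm.1 (Finset.mem_inter.1 this).1
        apply hB3 v hvX
        have : insert v B = eᶜ := by
          rw [Finset.insert_eq, ← hv, Finset.sdiff_union_of_subset hBe]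
        rw [this]; exact hK
      · have : e ∩ X ⊆ B := by
          intro v hv
          by_contra hvB
          exact Finset.disjoint_left.1 hd hv (Finset.mem_sdiff.2 ⟨(Finset.mem_inter.1 hv).2, hvB⟩)
        have := Finset.card_le_card this
        omega
    have key : ∀ e B R: Finset α, e.card = 2 * h - 1 → B ⊆ X → Disjoint B R → e ∩ X ⊆ R → B ⊆ eᶜ := by
      intro e B R he hBX hBR hs v hv
      rw [Finset.mem_compl]
      intro hve
      exact Finset.disjoint_left.1 hBR hv (hs (Finset.mem_inter.2 ⟨hve, hBX hv⟩))
    have key2 : ∀ e R B: Finset α, X ⊆ B ∪ R → Disjoint (e ∩ X) R → e ∩ X ⊆ B := by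
      intro e R B hX hd v hv
      have := hX (Finset.mem_inter.1 hv).2
      rw [Finset.mem_union] at this
      exact this.resolve_right (Finset.disjoint_left.1 hd hv)
    rcases Nat.lt_or_ge X.card (2 * h + 1) with hx3 | hx3
    · obtain ⟨A, B, hAB, hU, hA, hB, hKA, hKB⟩ := h2 Xᶜ (by omega)
      rw [compl_compl] at hU
      have hAX : A ⊆ X := hU ▸ Finset.subset_union_left
      have hBX : B ⊆ X := hU ▸ Finset.subset_union_right
      refine ⟨A, fun e he hK hc => ⟨fun hs => ?_, fun hd => ?_⟩⟩
      · have := key e B A he hBX hAB.symm hs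
        have := Finset.eq_of_subset_of_card_le this (by rw [hec e he]; omega)
        exact hKB (this ▸ hK)
      · have hs := key2 e A B (by rw [← hU, Finset.union_comm]) hd
        have := key e A B he hAX hAB hs
        have := Finset.eq_of_subset_of_card_le this (by rw [hec e he]; omega)
        exact hKA (this ▸ hK)
    have fin : ∀ R : Finset α, R ⊆ X → h + 1 ≤ R.card → (∀ e : Finset α, e.card = 2 * h - 1 → K eᶜ →
        ¬ (X \ R ⊆ eᶜ)) → ∃ R : Finset α, ∀ e : Finset α, e.card = 2 * h - 1 → K eᶜ → h ≤ (e ∩ X).card →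
        ¬ (e ∩ X ⊆ R) ∧ ¬ (Disjoint (e ∩ X) R) := by
      intro R hRX hRc hR
      refine ⟨R, fun e he hK hc => ⟨fun hs => ?_, fun hd => ?_⟩⟩
      · exact hR e he hK (key e _ R he Finset.sdiff_subset Finset.sdiff_disjoint hs)
      · have hs := key2 e R (X \ R) (by rw [Finset.sdiff_union_of_subset hRX]) hd
        have := Finset.card_le_card (key e R _ he hRX Finset.disjoint_sdiff hs)
        rw [hec e he] at this
        omega
    rcases Nat.lt_or_ge X.card (2 * h + 2) with hx4 | hx4
    · obtain ⟨C, hC1, -, hC2⟩ := Finset.exists_subsuperset_card_eq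
        (Finset.subset_univ Xᶜ) (n := h - 1) (by omega) (by rw [Finset.card_univ]; omega)
      obtain ⟨A, B, hAB, hU, hA, hB, hKA, hKB⟩ := h2 C hC2
      have hBX : B ⊆ X := by
        intro v hv
        have : v ∈ Cᶜ := hU ▸ Finset.mem_union_right _ hv
        by_contra hvX
        exact (Finset.mem_compl.1 this) (hC1 (Finset.mem_compl.2 hvX))
      apply fin (X \ B) Finset.sdiff_subset
      · rw [Finset.card_sdiff_of_subset hBX]; omega
      · intro e he hK hs
        rw [Finset.sdiff_sdiff_eq_self hBX] at hs
        have := Finset.eq_of_subset_of_card_le hs (by rw [hec e he]; omega)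
        exact hKB (this ▸ hK)
    · obtain ⟨R, hR1, hR2⟩ := Finset.exists_subset_card_eq (s := X) (n := h + 1) (by omega)
      apply fin R hR1 (by omega)
      intro e he hK hs
      have := Finset.card_le_card hs
      rw [Finset.card_sdiff_of_subset hR1, hec e he] at this
      omega

/-- The ground configuration. -/
structure Cfg (α : Type*) [Fintype α] [DecidableEq α] (h : ℕ) where
  P : Finset α
  Q : Finset α
  W : Finset α
  hP : P.card = h
  hQ : Q.card + 1 = h
  hW : W.card = h
  PQ : Disjoint P Q
  PW : Disjoint P W
  QW : Disjoint Q W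
  cover : ∀ v, v ∈ P ∨ v ∈ Q ∨ v ∈ W
  d : ℕ → α
  dW : ∀ i < h, d i ∈ W
  dinj : ∀ i < h, ∀ j < h, d i = d j → i = j
  x0 : α
  x0P : x0 ∈ P
  S1 : Finset α
  S1c : S1.card = h
  S1W : Disjoint S1 W
  x0S : x0 ∉ S1
  S1P : (S1 ∩ P).card = 2
  S1Q : (S1 ∩ Q).card + 2 = h
  s0 : α
  s0S : s0 ∈ S1
  w0 : α
  w0W : w0 ∈ W

namespace Cfg

variable {α : Type*} [Fintype α] [DecidableEq α] {h : ℕ} (g : Cfg α h)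

def S2 : Finset α := insert g.s0 (g.W.erase g.w0)

def D (B : Finset α) : ℕ := if B = g.P.erase g.x0 then 0 else (B ∩ g.P).card

def K (S : Finset α) : Prop :=
  S = g.S1 ∨
  (∃ B : Finset α, Disjoint B g.W ∧ B.card = h - 1 ∧ ¬ B ⊆ g.S1 ∧ S = insert (g.d (g.D B)) B) ∨
  (Even (S ∩ g.W).card ∧ 2 ≤ (S ∩ g.W).card ∧ S ≠ g.S2)

lemma D_lt (hh : 4 ≤ h) (B : Finset α) (hB : B.card = h - 1) : g.D B < h := by
  unfold D
  split_ifs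
  · omega
  · have := Finset.card_le_card (Finset.inter_subset_left (s₁ := B) (s₂ := g.P))
    omega

lemma insert_inter_W {B : Finset α} (hB : Disjoint B g.W) {w : α} (hw : w ∈ g.W) :
    insert w B ∩ g.W = {w} := by
  rw [Finset.insert_inter_of_mem hw, Finset.disjoint_iff_inter_eq_empty.1 hB]
  rfl

lemma K_card (hh : 4 ≤ h) {S : Finset α} (hS : g.K S) :
    (S ∩ g.W).card = 0 ∨ (S ∩ g.W).card = 1 ∨ Even (S ∩ g.W).card := by
  rcases hS with rfl | ⟨B, hB, hc, -, rfl⟩ | hS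
  · left
    rw [Finset.disjoint_iff_inter_eq_empty.1 g.S1W]; rfl
  · right; left
    rw [g.insert_inter_W hB (g.dW _ (g.D_lt hh B hc))]; simp
  · exact Or.inr (Or.inr hS.1)

lemma K_zero (hh : 4 ≤ h) {S : Finset α} (hS : g.K S) (hd : Disjoint S g.W) : S = g.S1 := by
  have h0 : (S ∩ g.W).card = 0 := by rw [Finset.disjoint_iff_inter_eq_empty.1 hd]; rfl
  rcases hS with rfl | ⟨B, hB, hc, -, rfl⟩ | hS
  · rfl
  · rw [g.insert_inter_W hB (g.dW _ (g.D_lt hh B hc))] at h0; simp at h0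
  · omega

lemma K_one (hh : 4 ≤ h) {A : Finset α} {w : α} (hd : Disjoint A g.W) (hw : w ∈ g.W)
    (hS : g.K (insert w A)) : ¬ A ⊆ g.S1 ∧ w = g.d (g.D A) := by
  have h0 := g.insert_inter_W hd hw
  rcases hS with hS | ⟨B, hB, hc, hn, hS⟩ | hS
  · exfalso
    have : w ∈ g.S1 := by rw [← hS]; simp
    exact Finset.disjoint_left.1 g.S1W this hw
  · have hdW := g.dW _ (g.D_lt hh B hc)
    have h3 := g.insert_inter_W hB hdW
    rw [hS, h3] at h0
    have hwd : w = g.d (g.D B) := by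
      rw [Finset.singleton_inj] at h0; exact h0.symm
    have hAB : A = B := by
      have e1 : (insert w A).erase w = A := Finset.erase_insert (fun hx => Finset.disjoint_left.1 hd hx hw)
      have e2 : (insert (g.d (g.D B)) B).erase (g.d (g.D B)) = B :=
        Finset.erase_insert (fun hx => Finset.disjoint_left.1 hB hx hdW)
      rw [← e1, hS, hwd, e2]
    subst hAB
    exact ⟨hn, hwd⟩
  · rw [h0] at hS
    simp at hS

lemma disjW_iff (A : Finset α) : Disjoint A g.W ↔ A ⊆ g.P ∪ g.Q := by
  constructor
  · intro hd v hv
    have := Finset.disjoint_left.1 hd hv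
    rcases g.cover v with h1 | h1 | h1
    · simp [h1]
    · simp [h1]
    · exact absurd h1 this
  · intro hs
    refine Finset.disjoint_of_subset_left hs ?_
    rw [Finset.disjoint_union_left]
    exact ⟨g.PW, g.QW⟩

lemma card_split (A : Finset α) :
    A.card = (A ∩ g.P).card + (A ∩ g.Q).card + (A ∩ g.W).card := by
  have : A = (A ∩ g.P ∪ A ∩ g.Q) ∪ A ∩ g.W := by
    ext v
    have := g.cover v
    simp only [Finset.mem_union, Finset.mem_inter]
    tauto
  have d1 : Disjoint (A ∩ g.P) (A ∩ g.Q) :=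
    Finset.disjoint_of_subset_left Finset.inter_subset_right
      (Finset.disjoint_of_subset_right Finset.inter_subset_right g.PQ)
  have d2 : Disjoint (A ∩ g.P ∪ A ∩ g.Q) (A ∩ g.W) := by
    rw [Finset.disjoint_union_left]
    exact ⟨Finset.disjoint_of_subset_left Finset.inter_subset_right
      (Finset.disjoint_of_subset_right Finset.inter_subset_right g.PW),
      Finset.disjoint_of_subset_left Finset.inter_subset_right
      (Finset.disjoint_of_subset_right Finset.inter_subset_right g.QW)⟩
  conv_lhs => rw [this]
  rw [Finset.card_union_of_disjoint d2, Finset.card_union_of_disjoint d1]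

lemma cov (hh : 4 ≤ h) (B : Finset α) (hB : B.card = h - 1) :
    ∃ S, B ⊆ S ∧ S.card = h ∧ g.K S := by
  have hBs := g.card_split B
  have hcP : (B ∩ g.P).card + (g.P \ B).card = h := by
    rw [Finset.inter_comm, Finset.card_inter_add_card_sdiff, g.hP]
  have hcW : (B ∩ g.W).card + (g.W \ B).card = h := by
    rw [Finset.inter_comm, Finset.card_inter_add_card_sdiff, g.hW]
  have hcQ : (B ∩ g.Q).card + (g.Q \ B).card = h - 1 := by
    rw [Finset.inter_comm, Finset.card_inter_add_card_sdiff]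
    have := g.hQ
    omega
  -- two candidates
  have two : ∀ T : Finset α, Disjoint T B → 2 ≤ T.card →
      (∀ v ∈ T, Even (insert v B ∩ g.W).card ∧ 2 ≤ (insert v B ∩ g.W).card) →
      ∃ S, B ⊆ S ∧ S.card = h ∧ g.K S := by
    intro T hT hT2 hK
    obtain ⟨a, ha, b, hb, hab⟩ := Finset.one_lt_card.1 (show 1 < T.card by omega)
    have haB := Finset.disjoint_left.1 hT ha
    have hbB := Finset.disjoint_left.1 hT hb
    by_cases hS : insert a B = g.S2
    · refine ⟨insert b B, Finset.subset_insert _ _, by rw [Finset.card_insert_of_notMem hbB]; omega,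
        Or.inr (Or.inr ⟨(hK b hb).1, (hK b hb).2, ?_⟩)⟩
      intro hS'
      have : a ∈ insert b B := by rw [hS', ← hS]; simp
      rw [Finset.mem_insert] at this
      tauto
    · exact ⟨insert a B, Finset.subset_insert _ _, by rw [Finset.card_insert_of_notMem haB]; omega,
        Or.inr (Or.inr ⟨(hK a ha).1, (hK a ha).2, hS⟩)⟩
  have insW : ∀ v ∈ g.W \ B, (insert v B ∩ g.W).card = (B ∩ g.W).card + 1 := by
    intro v hv
    rw [Finset.mem_sdiff] at hv
    rw [Finset.insert_inter_of_mem hv.1, Finset.card_insert_of_notMem]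
    simp [hv.2]
  rcases Nat.eq_zero_or_pos (B ∩ g.W).card with h0 | hpos
  · have hd : Disjoint B g.W := Finset.disjoint_iff_inter_eq_empty.2 (Finset.card_eq_zero.1 h0)
    by_cases hs : B ⊆ g.S1
    · exact ⟨g.S1, hs, g.S1c, Or.inl rfl⟩
    · refine ⟨insert (g.d (g.D B)) B, Finset.subset_insert _ _, ?_, Or.inr (Or.inl ⟨B, hd, hB, hs, rfl⟩)⟩
      have hdW := g.dW _ (g.D_lt hh B hB)
      rw [Finset.card_insert_of_notMem (fun hx => Finset.disjoint_left.1 hd hx hdW)]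
      omega
  · rcases Nat.even_or_odd (B ∩ g.W).card with hev | hodd
    · apply two (g.P \ B) Finset.sdiff_disjoint
      · obtain ⟨r, hr⟩ := hev
        omega
      · intro v hv
        rw [Finset.mem_sdiff] at hv
        rw [Finset.insert_inter_of_notMem (Finset.disjoint_left.1 g.PW hv.1)]
        refine ⟨hev, ?_⟩
        obtain ⟨r, hr⟩ := hev
        omega
    · rcases Nat.lt_or_ge (g.W \ B).card 2 with hlt | hge
      · obtain ⟨v, hv⟩ := Finset.card_pos.1 (show 0 < (g.W \ B).card by omega)
        have hvc := insW v hv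
        refine ⟨insert v B, Finset.subset_insert _ _, ?_, Or.inr (Or.inr ⟨?_, ?_, ?_⟩)⟩
        · rw [Finset.card_insert_of_notMem (Finset.mem_sdiff.1 hv).2]; omega
        · rw [hvc]; exact hodd.add_one
        · omega
        · intro hS
          have : (insert v B ∩ g.W).card ≤ (g.W.erase g.w0).card := by
            apply Finset.card_le_card
            rw [hS]
            unfold S2
            rw [Finset.insert_inter_of_notMem (Finset.disjoint_left.1 g.S1W g.s0S)]
            exact Finset.inter_subset_left
          rw [Finset.card_erase_of_mem g.w0W, g.hW] at this
          omega
      · apply two (g.W \ B) Finset.sdiff_disjoint hge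
        intro v hv
        rw [insW v hv]
        exact ⟨hodd.add_one, by omega⟩

/-- Picking a set with prescribed intersection size. -/
lemma pick (hh : 4 ≤ h) (Y : Finset α) (hY : Disjoint Y g.W) (u : α) (hu : u ∈ Y) (huS : u ∉ g.S1)
    (b : ℕ) (hb : b ≤ (Y ∩ g.P).card) (hb1 : b ≤ h - 1) (hb2 : h - 1 - b ≤ (Y ∩ g.Q).card) :
    ∃ B ⊆ Y, B.card = h - 1 ∧ (B ∩ g.P).card = b ∧ ¬ B ⊆ g.S1 ∧ (u ∈ g.P → u ∈ B ∨ b = 0) := by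
  have hQ := g.hQ
  have build : ∀ β γ : Finset α, β ⊆ Y ∩ g.P → γ ⊆ Y ∩ g.Q → β.card = b → γ.card = h - 1 - b →
      (β ∪ γ ⊆ Y ∧ (β ∪ γ).card = h - 1 ∧ (β ∪ γ) ∩ g.P = β ∧ (β ∪ γ) ∩ g.Q = γ) := by
    intro β γ hβ hγ hβc hγc
    have hβP : β ⊆ g.P := hβ.trans Finset.inter_subset_right
    have hγQ : γ ⊆ g.Q := hγ.trans Finset.inter_subset_right
    have hdis : Disjoint β γ := Finset.disjoint_of_subset_left hβP (Finset.disjoint_of_subset_right hγQ g.PQ)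
    refine ⟨Finset.union_subset (hβ.trans Finset.inter_subset_left) (hγ.trans Finset.inter_subset_left), ?_, ?_, ?_⟩
    · rw [Finset.card_union_of_disjoint hdis]; omega
    · rw [Finset.union_inter_distrib_right, Finset.inter_eq_left.2 hβP,
        Finset.disjoint_iff_inter_eq_empty.1 (Finset.disjoint_of_subset_left hγQ g.PQ.symm), Finset.union_empty]
    · rw [Finset.union_inter_distrib_right, Finset.inter_eq_left.2 hγQ,
        Finset.disjoint_iff_inter_eq_empty.1 (Finset.disjoint_of_subset_left hβP g.PQ), Finset.empty_union]
  have nsP : ∀ B : Finset α, (B ∩ g.P).card = h - 1 → ¬ B ⊆ g.S1 := by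
    intro B hB hs
    have := Finset.card_le_card (Finset.inter_subset_inter_right (u := g.P) hs)
    rw [g.S1P] at this
    omega
  have nsQ : ∀ B : Finset α, (B ∩ g.Q).card = h - 1 → ¬ B ⊆ g.S1 := by
    intro B hB hs
    have := Finset.card_le_card (Finset.inter_subset_inter_right (u := g.Q) hs)
    have := g.S1Q
    omega
  rcases g.cover u with huP | huQ | huW
  · rcases Nat.eq_zero_or_pos b with h0 | hpos
    · obtain ⟨β, hβ, hβc⟩ := Finset.exists_subset_card_eq hb
      obtain ⟨γ, hγ, hγc⟩ := Finset.exists_subset_card_eq hb2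
      obtain ⟨b1, b2, b3, b4⟩ := build β γ hβ hγ hβc hγc
      exact ⟨β ∪ γ, b1, b2, by rw [b3, hβc], nsQ _ (by rw [b4]; omega), fun _ => Or.inr h0⟩
    · obtain ⟨β, hβ1, hβ, hβc⟩ := Finset.exists_subsuperset_card_eq (s := {u}) (t := Y ∩ g.P) (n := b)
        (by simp [hu, huP]) (by simp; omega) hb
      obtain ⟨γ, hγ, hγc⟩ := Finset.exists_subset_card_eq hb2
      obtain ⟨b1, b2, b3, b4⟩ := build β γ hβ hγ hβc hγc
      have hum : u ∈ β ∪ γ := Finset.mem_union_left _ (hβ1 (by simp))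
      exact ⟨β ∪ γ, b1, b2, by rw [b3, hβc], fun hs => huS (hs hum), fun _ => Or.inl hum⟩
  · have huP : u ∉ g.P := fun hx => Finset.disjoint_left.1 g.PQ hx huQ
    rcases Nat.eq_or_lt_of_le hb1 with h0 | hpos
    · obtain ⟨β, hβ, hβc⟩ := Finset.exists_subset_card_eq hb
      obtain ⟨γ, hγ, hγc⟩ := Finset.exists_subset_card_eq hb2
      obtain ⟨b1, b2, b3, b4⟩ := build β γ hβ hγ hβc hγc
      exact ⟨β ∪ γ, b1, b2, by rw [b3, hβc], nsP _ (by rw [b3]; omega), fun hx => absurd hx huP⟩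
    · obtain ⟨β, hβ, hβc⟩ := Finset.exists_subset_card_eq hb
      obtain ⟨γ, hγ1, hγ, hγc⟩ := Finset.exists_subsuperset_card_eq (s := {u}) (t := Y ∩ g.Q)
        (n := h - 1 - b) (by simp [hu, huQ]) (by simp; omega) hb2
      obtain ⟨b1, b2, b3, b4⟩ := build β γ hβ hγ hβc hγc
      have hum : u ∈ β ∪ γ := Finset.mem_union_right _ (hγ1 (by simp))
      exact ⟨β ∪ γ, b1, b2, by rw [b3, hβc], fun hs => huS (hs hum), fun hx => absurd hx huP⟩
  · exact absurd huW (Finset.disjoint_left.1 hY hu)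

/-- Pigeonhole in `W`. -/
lemma pigeon (T : Finset ℕ) (hT : ∀ i ∈ T, i < h) (Z : Finset α) (hZ : Z.card < T.card) :
    ∃ i ∈ T, g.d i ∉ Z := by
  by_contra! hcon
  have := Finset.card_le_card_of_injOn (s := T) (t := Z) g.d hcon
    (fun i hi j hj hij => g.dinj i (hT i hi) j (hT j hj) hij)
  omega

lemma P1 (hh : 4 ≤ h) (C : Finset α) (hC : C.card = h) :
    ∃ B, Disjoint B C ∧ B.card = h - 1 ∧ ∀ v ∈ C, ¬ g.K (insert v B) := by
  have hP := g.hP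
  have hQ := g.hQ
  have hW := g.hW
  have hCs := g.card_split C
  set Y := (g.P ∪ g.Q) \ C with hYdef
  have hYW : Disjoint Y g.W := (g.disjW_iff _).2 Finset.sdiff_subset
  have hYP : Y ∩ g.P = g.P \ C := by
    ext v; simp only [hYdef, Finset.mem_inter, Finset.mem_sdiff, Finset.mem_union]; tauto
  have hYQ : Y ∩ g.Q = g.Q \ C := by
    ext v; simp only [hYdef, Finset.mem_inter, Finset.mem_sdiff, Finset.mem_union]; tauto
  have hcP : (C ∩ g.P).card + (Y ∩ g.P).card = h := by
    rw [hYP, Finset.inter_comm, Finset.card_inter_add_card_sdiff, hP]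
  have hcQ : (C ∩ g.Q).card + (Y ∩ g.Q).card = h - 1 := by
    rw [hYQ, Finset.inter_comm, Finset.card_inter_add_card_sdiff]; omega
  have hYc : Y.card = (Y ∩ g.P).card + (Y ∩ g.Q).card := by
    rw [g.card_split Y, Finset.disjoint_iff_inter_eq_empty.1 hYW]; simp
  have hYC : Disjoint Y C := Finset.sdiff_disjoint
  -- the generic way to finish
  have fin : ∀ B ⊆ Y, B.card = h - 1 → ¬ B ⊆ g.S1 → g.d (g.D B) ∉ C ∩ g.W →
      ∃ B, Disjoint B C ∧ B.card = h - 1 ∧ ∀ v ∈ C, ¬ g.K (insert v B) := by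
    intro B hBY hBc hBS hBD
    refine ⟨B, Finset.disjoint_of_subset_left hBY hYC, hBc, fun v hv hK => ?_⟩
    have hBW : Disjoint B g.W := Finset.disjoint_of_subset_left hBY hYW
    by_cases hvW : v ∈ g.W
    · have := (g.K_one hh hBW hvW hK).2
      exact hBD (this ▸ Finset.mem_inter.2 ⟨hv, hvW⟩)
    · have := g.K_zero hh hK (by rw [Finset.disjoint_insert_left]; exact ⟨hvW, hBW⟩)
      exact hBS (this ▸ Finset.subset_insert _ _)
  by_cases hCS : Disjoint C g.S1
  · refine ⟨g.S1.erase g.s0, ?_, ?_, fun v hv hK => ?_⟩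
    · exact Finset.disjoint_of_subset_left (Finset.erase_subset _ _) hCS.symm
    · rw [Finset.card_erase_of_mem g.s0S, g.S1c]
    · have hBW : Disjoint (g.S1.erase g.s0) g.W :=
        Finset.disjoint_of_subset_left (Finset.erase_subset _ _) g.S1W
      by_cases hvW : v ∈ g.W
      · exact (g.K_one hh hBW hvW hK).1 (Finset.erase_subset _ _)
      · have := g.K_zero hh hK (by rw [Finset.disjoint_insert_left]; exact ⟨hvW, hBW⟩)
        have hv1 : v ∈ g.S1 := by rw [← this]; simp
        exact Finset.disjoint_left.1 hCS hv hv1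
  rcases Nat.eq_zero_or_pos (C ∩ g.W).card with hc0 | hcpos
  · have hCW : Disjoint C g.W := Finset.disjoint_iff_inter_eq_empty.2 (Finset.card_eq_zero.1 hc0)
    obtain ⟨B', hB'Y, hB'c⟩ := Finset.exists_subset_card_eq (s := Y) (n := h - 2) (by omega)
    have hB'W : Disjoint B' g.W := Finset.disjoint_of_subset_left hB'Y hYW
    have hbad : ({g.d 0, g.d (B' ∩ g.P).card, g.d ((B' ∩ g.P).card + 1)} : Finset α).card < g.W.card := by
      have := Finset.card_le_three (a := g.d 0) (b := g.d (B' ∩ g.P).card) (c := g.d ((B' ∩ g.P).card + 1))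
      omega
    obtain ⟨w, hw, hwn⟩ := Finset.exists_mem_notMem_of_card_lt_card hbad
    have hwB : w ∉ B' := fun hx => Finset.disjoint_left.1 hB'W hx hw
    refine ⟨insert w B', ?_, ?_, fun v hv hK => ?_⟩
    · rw [Finset.disjoint_insert_left]
      exact ⟨fun hx => Finset.disjoint_left.1 hCW hx hw, Finset.disjoint_of_subset_left hB'Y hYC⟩
    · rw [Finset.card_insert_of_notMem hwB]; omega
    · rw [Finset.insert_comm] at hK
      have hvW : v ∉ g.W := Finset.disjoint_left.1 hCW hv
      have hvB : v ∉ B' := fun hx => Finset.disjoint_left.1 hYC (hB'Y hx) hv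
      have := (g.K_one hh (by rw [Finset.disjoint_insert_left]; exact ⟨hvW, hB'W⟩) hw hK).2
      apply hwn
      rw [this]
      unfold D
      simp only [Finset.mem_insert, Finset.mem_singleton]
      split_ifs
      · left; rfl
      · by_cases hvP : v ∈ g.P
        · right; right
          rw [Finset.insert_inter_of_mem hvP, Finset.card_insert_of_notMem]
          simp [hvB]
        · right; left
          rw [Finset.insert_inter_of_notMem hvP]
  -- main case
  have hPx : (g.P.erase g.x0 ∩ g.P).card = h - 1 := by
    rw [Finset.inter_eq_left.2 (Finset.erase_subset _ _), Finset.card_erase_of_mem g.x0P, hP]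
  have useP : g.P.erase g.x0 ⊆ Y → g.d 0 ∉ C ∩ g.W →
      ∃ B, Disjoint B C ∧ B.card = h - 1 ∧ ∀ v ∈ C, ¬ g.K (insert v B) := by
    intro hs h0
    apply fin _ hs
    · rw [Finset.card_erase_of_mem g.x0P, hP]
    · intro hs
      have := Finset.card_le_card (Finset.inter_subset_inter_right (u := g.P) hs)
      rw [g.S1P, hPx] at this
      omega
    · unfold D; simpa using h0
  obtain ⟨s, hsC, hsS⟩ := Finset.not_disjoint_iff.1 hCS
  have hsW : s ∉ g.W := Finset.disjoint_left.1 g.S1W hsS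
  by_cases hx : g.x0 ∈ C
  · have hYS : ∃ u ∈ Y, u ∉ g.S1 := by
      have hlt : (g.S1.erase s).card < Y.card := by
        rw [Finset.card_erase_of_mem hsS, g.S1c]; omega
      obtain ⟨u, hu, hu'⟩ := Finset.exists_mem_notMem_of_card_lt_card hlt
      refine ⟨u, hu, fun hu1 => hu' (Finset.mem_erase.2 ⟨?_, hu1⟩)⟩
      rintro rfl
      exact Finset.disjoint_left.1 hYC hu hsC
    obtain ⟨u, hu, huS⟩ := hYS
    have hx1 : 1 ≤ (C ∩ g.P).card := Finset.card_pos.2 ⟨g.x0, Finset.mem_inter.2 ⟨hx, g.x0P⟩⟩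
    have go : ∀ b, b ≤ (Y ∩ g.P).card → b ≤ h - 2 → h - 1 - b ≤ (Y ∩ g.Q).card → g.d b ∉ C ∩ g.W →
        ∃ B, Disjoint B C ∧ B.card = h - 1 ∧ ∀ v ∈ C, ¬ g.K (insert v B) := by
      intro b hb1 hb2 hb3 hb4
      obtain ⟨B, hB1, hB2, hB3, hB4, -⟩ := g.pick hh Y hYW u hu huS b hb1 (by omega) hb3
      apply fin B hB1 hB2 hB4
      have : g.D B = b := by
        unfold D
        rw [if_neg, hB3]
        rintro rfl
        omega
      rwa [this]
    rcases Nat.lt_or_ge (Y ∩ g.P).card (h - 1) with hy | hy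
    · obtain ⟨b, hb, hb'⟩ := g.pigeon (Finset.Icc ((Y ∩ g.P).card - (C ∩ g.W).card) (Y ∩ g.P).card)
        (by intro i hi; rw [Finset.mem_Icc] at hi; omega) (C ∩ g.W) (by rw [Nat.card_Icc]; omega)
      rw [Finset.mem_Icc] at hb
      exact go b hb.2 (by omega) (by omega) hb'
    · have hCP : (C ∩ g.P) = {g.x0} := by
        symm
        apply Finset.eq_of_subset_of_card_le
        · simp [hx, g.x0P]
        · rw [Finset.card_singleton]; omega
      have hsQ : s ∈ g.Q := by
        rcases g.cover s with h1 | h1 | h1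
        · exfalso
          have : s ∈ C ∩ g.P := Finset.mem_inter.2 ⟨hsC, h1⟩
          rw [hCP, Finset.mem_singleton] at this
          exact g.x0S (this ▸ hsS)
        · exact h1
        · exact absurd h1 hsW
      have hQ1 : 1 ≤ (C ∩ g.Q).card := Finset.card_pos.2 ⟨s, Finset.mem_inter.2 ⟨hsC, hsQ⟩⟩
      by_cases h0 : g.d 0 ∈ C ∩ g.W
      · obtain ⟨b, hb, hb'⟩ := g.pigeon (insert 0 (Finset.Icc (h - 1 - (C ∩ g.W).card) (h - 2)))
          (by intro i hi; rw [Finset.mem_insert, Finset.mem_Icc] at hi; omega) (C ∩ g.W) (by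
            rw [Finset.card_insert_of_notMem, Nat.card_Icc]
            · omega
            · rw [Finset.mem_Icc]; omega)
        rw [Finset.mem_insert, Finset.mem_Icc] at hb
        rcases hb with rfl | hb
        · exact absurd h0 hb'
        · exact go b (by omega) (by omega) (by omega) hb'
      · apply useP _ h0
        intro v hv
        rw [Finset.mem_erase] at hv
        rw [hYdef, Finset.mem_sdiff]
        refine ⟨Finset.mem_union_left _ hv.2, fun hvC => ?_⟩
        have : v ∈ C ∩ g.P := Finset.mem_inter.2 ⟨hvC, hv.2⟩
        rw [hCP, Finset.mem_singleton] at this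
        exact hv.1 this
  · have hxY : g.x0 ∈ Y := by
      rw [hYdef, Finset.mem_sdiff]; exact ⟨Finset.mem_union_left _ g.x0P, hx⟩
    have go : ∀ b, b ≤ (Y ∩ g.P).card → b ≤ h - 1 → h - 1 - b ≤ (Y ∩ g.Q).card → g.d b ∉ C ∩ g.W →
        ∃ B, Disjoint B C ∧ B.card = h - 1 ∧ ∀ v ∈ C, ¬ g.K (insert v B) := by
      intro b hb1 hb2 hb3 hb4
      obtain ⟨B, hB1, hB2, hB3, hB4, hB5⟩ := g.pick hh Y hYW g.x0 hxY g.x0S b hb1 hb2 hb3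
      apply fin B hB1 hB2 hB4
      have : g.D B = b := by
        unfold D
        rw [if_neg, hB3]
        rintro rfl
        rcases hB5 g.x0P with h1 | h1
        · simp at h1
        · omega
      rwa [this]
    rcases Nat.lt_or_ge (Y ∩ g.P).card h with hy | hy
    · obtain ⟨b, hb, hb'⟩ := g.pigeon (Finset.Icc ((Y ∩ g.P).card - (C ∩ g.W).card) (Y ∩ g.P).card)
        (by intro i hi; rw [Finset.mem_Icc] at hi; omega) (C ∩ g.W) (by rw [Nat.card_Icc]; omega)
      rw [Finset.mem_Icc] at hb
      exact go b hb.2 (by omega) (by omega) hb'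
    · have hCP : (C ∩ g.P) = ∅ := Finset.card_eq_zero.1 (by omega)
      have hsQ : s ∈ g.Q := by
        rcases g.cover s with h1 | h1 | h1
        · exfalso
          have : s ∈ C ∩ g.P := Finset.mem_inter.2 ⟨hsC, h1⟩
          rw [hCP] at this
          simp at this
        · exact h1
        · exact absurd h1 hsW
      have hQ1 : 1 ≤ (C ∩ g.Q).card := Finset.card_pos.2 ⟨s, Finset.mem_inter.2 ⟨hsC, hsQ⟩⟩
      by_cases h0 : g.d 0 ∈ C ∩ g.W
      · obtain ⟨b, hb, hb'⟩ := g.pigeon (insert 0 (Finset.Icc (h - (C ∩ g.W).card) (h - 1)))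
          (by intro i hi; rw [Finset.mem_insert, Finset.mem_Icc] at hi; omega) (C ∩ g.W) (by
            rw [Finset.card_insert_of_notMem, Nat.card_Icc]
            · omega
            · rw [Finset.mem_Icc]; omega)
        rw [Finset.mem_insert, Finset.mem_Icc] at hb
        rcases hb with rfl | hb
        · exact absurd h0 hb'
        · exact go b (by omega) (by omega) (by omega) hb'
      · apply useP _ h0
        intro v hv
        rw [Finset.mem_erase] at hv
        rw [hYdef, Finset.mem_sdiff]
        refine ⟨Finset.mem_union_left _ hv.2, fun hvC => ?_⟩
        have : v ∈ C ∩ g.P := Finset.mem_inter.2 ⟨hvC, hv.2⟩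
        rw [hCP] at this
        simp at this

lemma P2 (hh : 4 ≤ h) (hcard : Fintype.card α = 3 * h - 1) (C : Finset α) (hC : C.card = h - 1) :
    ∃ A B, Disjoint A B ∧ A ∪ B = Cᶜ ∧ A.card = h ∧ B.card = h ∧ ¬ g.K A ∧ ¬ g.K B := by
  have hP := g.hP
  have hQ := g.hQ
  have hW := g.hW
  have hCs := g.card_split C
  set Y := (g.P ∪ g.Q) \ C with hYdef
  set Z := g.W \ C with hZdef
  have hYW : Disjoint Y g.W := (g.disjW_iff _).2 Finset.sdiff_subset
  have hZW : Z ⊆ g.W := Finset.sdiff_subset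
  have hYZ : Disjoint Y Z := Finset.disjoint_of_subset_right hZW hYW
  have hYZC : Y ∪ Z = Cᶜ := by
    ext v
    have := g.cover v
    simp only [hYdef, hZdef, Finset.mem_union, Finset.mem_sdiff, Finset.mem_compl]
    tauto
  have hYP : Y ∩ g.P = g.P \ C := by
    ext v; simp only [hYdef, Finset.mem_inter, Finset.mem_sdiff, Finset.mem_union]; tauto
  have hYQ : Y ∩ g.Q = g.Q \ C := by
    ext v; simp only [hYdef, Finset.mem_inter, Finset.mem_sdiff, Finset.mem_union]; tauto
  have hcP : (C ∩ g.P).card + (Y ∩ g.P).card = h := by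
    rw [hYP, Finset.inter_comm, Finset.card_inter_add_card_sdiff, hP]
  have hcQ : (C ∩ g.Q).card + (Y ∩ g.Q).card = h - 1 := by
    rw [hYQ, Finset.inter_comm, Finset.card_inter_add_card_sdiff]; omega
  have hcW : (C ∩ g.W).card + Z.card = h := by
    rw [hZdef, Finset.inter_comm, Finset.card_inter_add_card_sdiff, hW]
  have hYc : Y.card = (Y ∩ g.P).card + (Y ∩ g.Q).card := by
    rw [g.card_split Y, Finset.disjoint_iff_inter_eq_empty.1 hYW]; simp
  have fin : ∀ A' ⊆ Y, ∀ Z' ⊆ Z, A'.card + Z'.card = h → ¬ g.K (A' ∪ Z') →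
      ¬ g.K ((Y \ A') ∪ (Z \ Z')) →
      ∃ A B, Disjoint A B ∧ A ∪ B = Cᶜ ∧ A.card = h ∧ B.card = h ∧ ¬ g.K A ∧ ¬ g.K B := by
    intro A' hA' Z' hZ' hc hK1 hK2
    refine ⟨_, _, ?_, ?_, ?_, ?_, hK1, hK2⟩
    · rw [Finset.disjoint_union_left, Finset.disjoint_union_right, Finset.disjoint_union_right]
      exact ⟨⟨Finset.disjoint_sdiff, Finset.disjoint_of_subset_left hA'
        (Finset.disjoint_of_subset_right Finset.sdiff_subset hYZ)⟩,
        ⟨Finset.disjoint_of_subset_left hZ'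
        (Finset.disjoint_of_subset_right Finset.sdiff_subset hYZ.symm), Finset.disjoint_sdiff⟩⟩
    · rw [← hYZC]
      ext v
      have h1 := @hA' v
      have h2 := @hZ' v
      simp only [Finset.mem_union, Finset.mem_sdiff]
      tauto
    · rw [Finset.card_union_of_disjoint, hc]
      exact Finset.disjoint_of_subset_left hA' (Finset.disjoint_of_subset_right hZ' hYZ)
    · rw [Finset.card_union_of_disjoint, Finset.card_sdiff_of_subset hA', Finset.card_sdiff_of_subset hZ']
      · have := Finset.card_le_card hA'
        have := Finset.card_le_card hZ'
        omega
      · exact Finset.disjoint_of_subset_left Finset.sdiff_subset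
          (Finset.disjoint_of_subset_right Finset.sdiff_subset hYZ)
  have interW : ∀ A' ⊆ Y, ∀ Z' ⊆ Z, (A' ∪ Z') ∩ g.W = Z' := by
    intro A' hA' Z' hZ'
    rw [Finset.union_inter_distrib_right, Finset.inter_eq_left.2 (hZ'.trans hZW),
      Finset.disjoint_iff_inter_eq_empty.1 (Finset.disjoint_of_subset_left hA' hYW), Finset.empty_union]
  have odd3 : ∀ A' ⊆ Y, ∀ Z' ⊆ Z, Odd Z'.card → 3 ≤ Z'.card → ¬ g.K (A' ∪ Z') := by
    intro A' hA' Z' hZ' hodd h3 hK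
    have := g.K_card hh hK
    rw [interW A' hA' Z' hZ'] at this
    rcases this with h1 | h1 | h1
    · omega
    · omega
    · exact (Nat.not_even_iff_odd.2 hodd) h1
  have one : ∀ A' ⊆ Y, ∀ w ∈ Z, w ≠ g.d (g.D A') → ¬ g.K (A' ∪ {w}) := by
    intro A' hA' w hw hne hK
    rw [Finset.union_comm, ← Finset.insert_eq] at hK
    exact hne (g.K_one hh (Finset.disjoint_of_subset_left hA' hYW) (hZW hw) hK).2
  have hq : ∃ q ∈ g.Q, q ∉ g.S1 := by
    have hlt : (g.S1 ∩ g.Q).card < g.Q.card := by have := g.S1Q; omega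
    obtain ⟨q, hq, hq'⟩ := Finset.exists_mem_notMem_of_card_lt_card hlt
    exact ⟨q, hq, fun hx => hq' (Finset.mem_inter.2 ⟨hx, hq⟩)⟩
  obtain ⟨q, hqQ, hqS⟩ := hq
  have hPxc : (g.P.erase g.x0 ∩ g.P).card = h - 1 := by
    rw [Finset.inter_eq_left.2 (Finset.erase_subset _ _), Finset.card_erase_of_mem g.x0P, hP]
  have Dsmall : ∀ B : Finset α, (B ∩ g.P).card < h - 1 → g.D B = (B ∩ g.P).card := by
    intro B hB
    unfold D
    rw [if_neg]
    rintro rfl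
    omega
  rcases Nat.even_or_odd Z.card with hev | hodd
  · rcases Nat.lt_or_ge Z.card 4 with h4 | h4
    · have hZ2 : Z.card = 2 := by
        obtain ⟨r, hr⟩ := hev
        omega
      have huY : ∃ u ∈ Y, u ∉ g.S1 := by
        obtain ⟨u, hu, hu'⟩ := Finset.exists_mem_notMem_of_card_lt_card
          (show g.S1.card < Y.card by rw [g.S1c]; omega)
        exact ⟨u, hu, hu'⟩
      obtain ⟨u, hu, huS⟩ := huY
      obtain ⟨A', hA1, hA2, hA3, -, -⟩ := g.pick hh Y hYW u hu huS 1 (by omega) (by omega) (by omega)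
      have hD1 : g.D A' = 1 := by rw [Dsmall A' (by omega), hA3]
      have hP2 : ((Y \ A') ∩ g.P).card + 1 = (Y ∩ g.P).card := by
        have : (Y \ A') ∩ g.P = (Y ∩ g.P) \ (A' ∩ g.P) := by
          ext v; simp only [Finset.mem_inter, Finset.mem_sdiff]; tauto
        rw [this, Finset.card_sdiff_of_subset (Finset.inter_subset_inter_right hA1), hA3]
        omega
      have hD2 : g.D (Y \ A') ≠ 1 := by
        unfold D
        split_ifs <;> omega
      have hlt : g.D A' < h := g.D_lt hh A' hA2
      have hlt2 : g.D (Y \ A') < h := g.D_lt hh _ (by rw [Finset.card_sdiff_of_subset hA1]; omega)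
      have hdne : g.d (g.D A') ≠ g.d (g.D (Y \ A')) := by
        intro hx
        have := g.dinj _ hlt _ hlt2 hx
        omega
      obtain ⟨w, w', hww, hZeq⟩ := Finset.card_eq_two.1 hZ2
      have hw : w ∈ Z := by rw [hZeq]; simp
      have hw' : w' ∈ Z := by rw [hZeq]; simp
      have e1 : Z \ {w} = {w'} := by
        rw [hZeq]; ext v; simp only [Finset.mem_sdiff, Finset.mem_insert, Finset.mem_singleton]
        constructor
        · tauto
        · rintro rfl; exact ⟨Or.inr rfl, hww.symm⟩
      have e2 : Z \ {w'} = {w} := by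
        rw [hZeq]; ext v; simp only [Finset.mem_sdiff, Finset.mem_insert, Finset.mem_singleton]
        constructor
        · tauto
        · rintro rfl; exact ⟨Or.inl rfl, hww⟩
      by_cases hcase : w ≠ g.d (g.D A') ∧ w' ≠ g.d (g.D (Y \ A'))
      · apply fin A' hA1 {w} (by simpa using hw) (by simp; omega) (one A' hA1 w hw hcase.1)
        rw [e1]
        exact one _ Finset.sdiff_subset w' hw' hcase.2
      · have hcase2 : w' ≠ g.d (g.D A') ∧ w ≠ g.d (g.D (Y \ A')) := by
          constructor
          · intro hx
            apply hcase
            exact ⟨fun hy => hww (hy.trans hx.symm), fun hy => hdne (hx.symm.trans hy)⟩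
          · intro hx
            apply hcase
            exact ⟨fun hy => hdne (hy.symm.trans hx), fun hy => hww (hx.trans hy.symm)⟩
        apply fin A' hA1 {w'} (by simpa using hw') (by simp; omega) (one A' hA1 w' hw' hcase2.1)
        rw [e2]
        exact one _ Finset.sdiff_subset w hw hcase2.2
    · obtain ⟨A', hA', hA'c⟩ := Finset.exists_subset_card_eq (s := Y) (n := h - 1) (by omega)
      obtain ⟨w, hw, hwn⟩ := Finset.exists_mem_ne (show 1 < Z.card by omega) (g.d (g.D A'))
      have hwc : (Z \ {w}).card = Z.card - 1 := by
        rw [Finset.card_sdiff_of_subset (by simpa using hw)]; simp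
      apply fin A' hA' {w} (by simpa using hw) (by simp; omega) (one A' hA' w hw hwn)
      apply odd3 _ Finset.sdiff_subset _ Finset.sdiff_subset
      · rw [hwc]; exact Nat.Even.sub_odd (by omega) hev odd_one
      · omega
  · rcases Nat.lt_or_ge Z.card 3 with h3 | h3
    · have hZ1 : Z.card = 1 := by
        obtain ⟨r, hr⟩ := hodd
        omega
      obtain ⟨w, hw⟩ := Finset.card_eq_one.1 hZ1
      have hwZ : w ∈ Z := by rw [hw]; simp
      have hCW : C ⊆ g.W := by
        have : C ∩ g.W = C := Finset.eq_of_subset_of_card_le Finset.inter_subset_left (by omega)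
        exact Finset.inter_eq_left.1 this
      have hPY : g.P ⊆ Y := by
        intro v hv
        rw [hYdef, Finset.mem_sdiff]
        exact ⟨Finset.mem_union_left _ hv, fun hx => Finset.disjoint_left.1 g.PW hv (hCW hx)⟩
      have hQY : g.Q ⊆ Y := by
        intro v hv
        rw [hYdef, Finset.mem_sdiff]
        exact ⟨Finset.mem_union_right _ hv, fun hx => Finset.disjoint_left.1 g.QW hv (hCW hx)⟩
      have go : ∀ B ⊆ Y, B.card = h - 1 → (∃ v ∈ Y \ B, v ∉ g.S1) → w ≠ g.d (g.D B) →
          ∃ A B, Disjoint A B ∧ A ∪ B = Cᶜ ∧ A.card = h ∧ B.card = h ∧ ¬ g.K A ∧ ¬ g.K B := by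
        intro B hB hBc ⟨v, hv, hvS⟩ hne
        have hc : (Y \ B).card = h := by
          rw [Finset.card_sdiff_of_subset hB]
          omega
        apply fin (Y \ B) Finset.sdiff_subset ∅ (by simp) (by rw [hc]; simp)
        · rw [Finset.union_empty]
          intro hK
          have := g.K_zero hh hK (Finset.disjoint_of_subset_left Finset.sdiff_subset hYW)
          exact hvS (this ▸ hv)
        · rw [Finset.sdiff_sdiff_eq_self hB, Finset.sdiff_empty, hw]
          exact one B hB w hwZ hne
      by_cases hw0 : w = g.d 0
      · have hqP : q ∉ g.P := fun hx => Finset.disjoint_left.1 g.PQ hx hqQ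
        have hxQ : g.x0 ∉ g.Q := Finset.disjoint_left.1 g.PQ g.x0P
        have hD : g.D (insert g.x0 (g.Q.erase q)) = 1 := by
          have : (insert g.x0 (g.Q.erase q)) ∩ g.P = {g.x0} := by
            rw [Finset.insert_inter_of_mem g.x0P, Finset.disjoint_iff_inter_eq_empty.1
              (Finset.disjoint_of_subset_left (Finset.erase_subset _ _) g.PQ.symm)]
            rfl
          rw [Dsmall, this]
          · simp
          · rw [this, Finset.card_singleton]; omega
        apply go (insert g.x0 (g.Q.erase q))
        · rw [Finset.insert_subset_iff]
          exact ⟨hPY g.x0P, (Finset.erase_subset _ _).trans hQY⟩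
        · rw [Finset.card_insert_of_notMem (by simp [hxQ]), Finset.card_erase_of_mem hqQ]; omega
        · refine ⟨q, Finset.mem_sdiff.2 ⟨hQY hqQ, ?_⟩, hqS⟩
          simp only [Finset.mem_insert, Finset.mem_erase, not_or]
          refine ⟨fun hx => hqP (hx ▸ g.x0P), fun hx => hx.1 rfl⟩
        · rw [hD, hw0]
          intro hx
          have := g.dinj 0 (by omega) 1 (by omega) hx
          omega
      · have hQP : (g.Q ∩ g.P).card = 0 := by
          rw [Finset.disjoint_iff_inter_eq_empty.1 g.PQ.symm]; rfl
        have hD : g.D g.Q = 0 := by rw [Dsmall _ (by omega), hQP]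
        apply go g.Q hQY (by omega)
        · exact ⟨g.x0, Finset.mem_sdiff.2 ⟨hPY g.x0P, Finset.disjoint_left.1 g.PQ g.x0P⟩, g.x0S⟩
        · rw [hD]; exact hw0
    · by_cases hu : ∃ u ∈ Y, u ∉ g.S1
      · obtain ⟨u, hu, huS⟩ := hu
        obtain ⟨A', hA1, hA', hA'c⟩ := Finset.exists_subsuperset_card_eq (s := {u}) (t := Y) (n := h)
          (by simpa using hu) (by simp; omega) (by omega)
        apply fin A' hA' ∅ (by simp) (by simp [hA'c])
        · rw [Finset.union_empty]
          intro hK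
          have := g.K_zero hh hK (Finset.disjoint_of_subset_left hA' hYW)
          exact huS (this ▸ hA1 (by simp))
        · rw [Finset.sdiff_empty]
          exact odd3 _ Finset.sdiff_subset _ (Finset.Subset.refl _) hodd h3
      · push Not at hu
        have hYS : Y = g.S1 := Finset.eq_of_subset_of_card_le hu (by rw [g.S1c]; omega)
        have hYh : Y.card = h := by rw [hYS, g.S1c]
        have hZW' : Z = g.W := Finset.eq_of_subset_of_card_le hZW (by omega)
        apply fin (Y.erase g.s0) (Finset.erase_subset _ _) {g.w0} (by simp [hZW', g.w0W])
        · rw [Finset.card_erase_of_mem (hYS ▸ g.s0S)]; simp; omega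
        · intro hK
          rw [Finset.union_comm, ← Finset.insert_eq] at hK
          exact (g.K_one hh (Finset.disjoint_of_subset_left (Finset.erase_subset _ _) hYW) g.w0W hK).1
            ((Finset.erase_subset _ _).trans hu)
        · have hS2 : (Y \ Y.erase g.s0) ∪ (Z \ {g.w0}) = g.S2 := by
            rw [Finset.sdiff_erase_self (hYS ▸ g.s0S), hZW', Finset.sdiff_singleton_eq_erase]
            rfl
          have hI := interW (Y \ Y.erase g.s0) Finset.sdiff_subset (Z \ {g.w0}) Finset.sdiff_subset
          have hIc : (Z \ {g.w0}).card = h - 1 := by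
            rw [hZW', Finset.sdiff_singleton_eq_erase, Finset.card_erase_of_mem g.w0W, hW]
          rw [hS2] at hI ⊢
          rw [← hI] at hIc
          rintro (hK | ⟨B, hB, hc, -, hK⟩ | hK)
          · rw [hK, Finset.disjoint_iff_inter_eq_empty.1 g.S1W, Finset.card_empty] at hIc
            omega
          · rw [hK, g.insert_inter_W hB (g.dW _ (g.D_lt hh B hc)), Finset.card_singleton] at hIc
            omega
          · exact hK.2.2 rfl

end Cfg

/-- Lift of a set of naturals to `Fin n`. -/
def liftFin (n : ℕ) (I : Finset ℕ) : Finset (Fin n) := Finset.univ.filter (fun v => v.val ∈ I)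

lemma mem_liftFin {n : ℕ} {I : Finset ℕ} {v : Fin n} : v ∈ liftFin n I ↔ v.val ∈ I := by
  simp [liftFin]

lemma card_liftFin {n : ℕ} {I : Finset ℕ} (hI : ∀ i ∈ I, i < n) : (liftFin n I).card = I.card := by
  rw [← Finset.card_map Fin.valEmbedding]
  congr 1
  ext i
  simp only [Finset.mem_map, mem_liftFin, Fin.valEmbedding_apply]
  constructor
  · rintro ⟨v, hv, rfl⟩; exact hv
  · intro hi; exact ⟨⟨i, hI i hi⟩, hi, rfl⟩

lemma inter_liftFin {n : ℕ} {I J : Finset ℕ} : liftFin n I ∩ liftFin n J = liftFin n (I ∩ J) := by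
  ext v; simp [mem_liftFin]

lemma disj_liftFin {n : ℕ} {I J : Finset ℕ} (hd : ∀ i ∈ I, i ∉ J) :
    Disjoint (liftFin n I) (liftFin n J) := by
  rw [Finset.disjoint_left]
  intro v hv hv'
  rw [mem_liftFin] at hv hv'
  exact hd _ hv hv'

/-- The concrete configuration. -/
def theCfg (h : ℕ) (hh : 4 ≤ h) : Cfg (Fin (3 * h - 1)) h where
  P := liftFin _ (Finset.Ico 0 h)
  Q := liftFin _ (Finset.Ico h (2 * h - 1))
  W := liftFin _ (Finset.Ico (2 * h - 1) (3 * h - 1))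
  hP := by
    rw [card_liftFin (by intro i hi; rw [Finset.mem_Ico] at hi; omega), Nat.card_Ico]; omega
  hQ := by
    rw [card_liftFin (by intro i hi; rw [Finset.mem_Ico] at hi; omega), Nat.card_Ico]; omega
  hW := by
    rw [card_liftFin (by intro i hi; rw [Finset.mem_Ico] at hi; omega), Nat.card_Ico]; omega
  PQ := disj_liftFin (by intro i hi hj; rw [Finset.mem_Ico] at hi hj; omega)
  PW := disj_liftFin (by intro i hi hj; rw [Finset.mem_Ico] at hi hj; omega)
  QW := disj_liftFin (by intro i hi hj; rw [Finset.mem_Ico] at hi hj; omega)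
  cover := by
    intro v
    have := v.isLt
    simp only [mem_liftFin, Finset.mem_Ico]
    omega
  d := fun i => if hi : i < h then ⟨2 * h - 1 + i, by omega⟩ else ⟨0, by omega⟩
  dW := by
    intro i hi
    simp only [hi, dif_pos, mem_liftFin, Finset.mem_Ico]
    omega
  dinj := by
    intro i hi j hj hij
    simp only [hi, hj, dif_pos, Fin.mk.injEq] at hij
    omega
  x0 := ⟨2, by omega⟩
  x0P := by rw [mem_liftFin, Finset.mem_Ico]; simp; omega
  S1 := liftFin _ (Finset.Ico 0 2 ∪ Finset.Ico h (2 * h - 2))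
  S1c := by
    rw [card_liftFin (by intro i hi; rw [Finset.mem_union, Finset.mem_Ico, Finset.mem_Ico] at hi; omega),
      Finset.card_union_of_disjoint, Nat.card_Ico, Nat.card_Ico]
    · omega
    · rw [Finset.disjoint_left]
      intro i hi hj
      rw [Finset.mem_Ico] at hi hj
      omega
  S1W := disj_liftFin (by
    intro i hi hj
    rw [Finset.mem_union, Finset.mem_Ico, Finset.mem_Ico] at hi
    rw [Finset.mem_Ico] at hj; omega)
  x0S := by
    rw [mem_liftFin, Finset.mem_union, Finset.mem_Ico, Finset.mem_Ico]
    simp only []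
    omega
  S1P := by
    have : (Finset.Ico 0 2 ∪ Finset.Ico h (2 * h - 2)) ∩ Finset.Ico 0 h = Finset.Ico 0 2 := by
      ext i
      simp only [Finset.mem_inter, Finset.mem_union, Finset.mem_Ico]
      omega
    rw [inter_liftFin, this, card_liftFin (by intro i hi; rw [Finset.mem_Ico] at hi; omega), Nat.card_Ico]
  S1Q := by
    have : (Finset.Ico 0 2 ∪ Finset.Ico h (2 * h - 2)) ∩ Finset.Ico h (2 * h - 1) =
        Finset.Ico h (2 * h - 2) := by
      ext i
      simp only [Finset.mem_inter, Finset.mem_union, Finset.mem_Ico]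
      omega
    rw [inter_liftFin, this, card_liftFin (by intro i hi; rw [Finset.mem_Ico] at hi; omega), Nat.card_Ico]
    omega
  s0 := ⟨0, by omega⟩
  s0S := by
    rw [mem_liftFin, Finset.mem_union, Finset.mem_Ico, Finset.mem_Ico]
    simp
  w0 := ⟨2 * h - 1, by omega⟩
  w0W := by
    rw [mem_liftFin, Finset.mem_Ico]
    simp only []
    omega

theorem stmt_0 (h : ℕ) (hh : 4 ≤ h) :
    ∃ (n : ℕ) (E : Finset (Finset (Fin n))),
      IsUniform E (2 * h - 1) ∧
      NoPolychromatic3 E ∧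
      HeavyRestrictedTwoColorable E h := by
  have hcard : Fintype.card (Fin (3 * h - 1)) = 3 * h - 1 := Fintype.card_fin _
  exact ⟨3 * h - 1, reduction h hh hcard (theCfg h hh).K ((theCfg h hh).cov hh)
    ((theCfg h hh).P1 hh) ((theCfg h hh).P2 hh hcard)⟩
end

section
/- There exists a 5-uniform hypergraph which has no polychromatic 3-coloring, but all of whose 3-heavy restricted subhypergraphs are 2-colorable. -/
/-- The twelve edges, as bit masks on eight vertices. -/
def edgeMasks : List ℕ := [31, 110, 118, 121, 167, 186, 188, 205, 211, 220, 234, 244]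

/-- The vertex set described by a bit mask. -/
def maskSet (m : ℕ) : Finset (Fin 8) := Finset.univ.filter (fun i => m.testBit i.1 = true)

def popc (m : ℕ) : ℕ :=
  m % 2 + (m / 2 % 2 + (m / 4 % 2 + (m / 8 % 2 + (m / 16 % 2 + (m / 32 % 2 +
    (m / 64 % 2 + m / 128 % 2))))))

def polyOk (a b : ℕ) : Bool :=
  !(Nat.beq (a &&& b) 0) || edgeMasks.any (fun e =>
    Nat.beq (e &&& a) 0 || (Nat.beq (e &&& b) 0 || Nat.beq (e &&& (255 ^^^ (a ^^^ b))) 0))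

def splitOk (x a : ℕ) : Bool :=
  edgeMasks.all (fun e => Nat.ble (popc (e &&& x)) 2 ||
    (!(Nat.beq (e &&& x &&& a) 0) && !(Nat.beq (e &&& x &&& (255 ^^^ a)) 0)))

/-- Structural bounded check. -/
def allBelow (p : ℕ → Bool) : ℕ → Bool
  | 0 => true
  | k + 1 => p k && allBelow p k

theorem allBelow_spec (p : ℕ → Bool) (n : ℕ) (h : allBelow p n = true) :
    ∀ k < n, p k = true := by
  induction n with
  | zero => intro k hk; omega
  | succ m ih =>
    simp only [allBelow, Bool.and_eq_true] at h
    intro k hk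
    rcases Nat.lt_succ_iff_lt_or_eq.mp hk with h1 | h1
    · exact ih h.2 k h1
    · exact h1 ▸ h.1

set_option maxRecDepth 100000 in
theorem poly_check : allBelow (fun a => allBelow (fun b => polyOk a b) 256) 256 = true := by
  decide +kernel

set_option maxRecDepth 100000 in
theorem split_check : allBelow (fun x => (List.range 128).any (splitOk x)) 256 = true := by
  decide +kernel

set_option maxRecDepth 100000 in
theorem card_check : allBelow (fun m => decide ((maskSet m).card = popc m)) 256 = true := by
  decide +kernel

theorem edge_check : ∀ e ∈ edgeMasks, e < 256 ∧ popc e = 5 := by decide +kernel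

theorem mem_maskSet (m : ℕ) (i : Fin 8) : i ∈ maskSet m ↔ m.testBit i.1 = true := by
  simp [maskSet]

theorem maskSet_card (m : ℕ) (h : m < 256) : (maskSet m).card = popc m := by
  simpa using allBelow_spec _ _ card_check m h

/-- The bit mask of a Boolean function. -/
theorem exists_mask (f : Fin 8 → Bool) : ∃ m < 256, ∀ i : Fin 8, m.testBit i.1 = f i := by
  refine ⟨Nat.ofBits f, Nat.ofBits_lt_two_pow f, fun i => ?_⟩
  rw [Nat.testBit_ofBits_lt _ _ i.2]

theorem full_bit : ∀ i : Fin 8, (255 : ℕ).testBit i.1 = true := by decide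

theorem exists_bit (m : ℕ) (hm : m < 256) (h : m ≠ 0) : ∃ i : Fin 8, m.testBit i.1 = true := by
  obtain ⟨i, hi⟩ := Nat.exists_testBit_of_ne_zero h
  refine ⟨⟨i, ?_⟩, hi⟩
  by_contra hge
  have : m < 2 ^ i := lt_of_lt_of_le hm (by
    have : 2 ^ 8 ≤ 2 ^ i := Nat.pow_le_pow_right (by norm_num) (by omega)
    simpa using this)
  rw [Nat.testBit_lt_two_pow this] at hi
  exact absurd hi (by simp)

theorem stmt_1 :
    ∃ (n : ℕ) (E : Finset (Finset (Fin n))),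
      IsUniform E 5 ∧
      NoPolychromatic3 E ∧
      HeavyRestrictedTwoColorable E 3 := by
  refine ⟨8, (edgeMasks.map maskSet).toFinset, ?_, ?_, ?_⟩
  · intro e he
    simp only [List.mem_toFinset, List.mem_map] at he
    obtain ⟨m, hm, rfl⟩ := he
    obtain ⟨h1, h2⟩ := edge_check m hm
    rw [maskSet_card m h1, h2]
  · intro c
    obtain ⟨a, ha, hab⟩ := exists_mask (fun i => decide (c i = 0))
    obtain ⟨b, hb, hbb⟩ := exists_mask (fun i => decide (c i = 1))
    have hdis : a &&& b = 0 := by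
      by_contra hne
      obtain ⟨i, hi⟩ := exists_bit (a &&& b) (lt_of_le_of_lt Nat.and_le_left ha) hne
      rw [Nat.testBit_and, hab, hbb] at hi
      simp only [Bool.and_eq_true, decide_eq_true_eq] at hi
      rw [hi.1] at hi
      exact absurd hi.2 (by decide)
    have hp := allBelow_spec _ _ (allBelow_spec _ _ poly_check a ha) b hb
    simp only [polyOk, hdis, List.any_eq_true, Bool.or_eq_true] at hp
    have hp' := hp.resolve_left (by simp)
    obtain ⟨e, he, hcase⟩ := hp'
    refine ⟨maskSet e, by simp only [List.mem_toFinset, List.mem_map]; exact ⟨e, he, rfl⟩, ?_⟩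
    have key : ∀ s : ℕ, e &&& s = 0 → ∀ v ∈ maskSet e, s.testBit v.1 = false := by
      intro s hs v hv
      rw [mem_maskSet] at hv
      have := congrArg (fun t => t.testBit v.1) hs
      simpa [Nat.testBit_and, hv] using this
    rcases hcase with h | h | h
    · refine ⟨0, fun v hv => ?_⟩
      have := key _ (Nat.eq_of_beq_eq_true h) v hv
      rw [hab] at this
      simpa using this
    · refine ⟨1, fun v hv => ?_⟩
      have := key _ (Nat.eq_of_beq_eq_true h) v hv
      rw [hbb] at this
      simpa using this
    · refine ⟨2, fun v hv h2 => ?_⟩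
      have := key _ (Nat.eq_of_beq_eq_true h) v hv
      rw [Nat.testBit_xor, Nat.testBit_xor, hab, hbb, full_bit, h2] at this
      exact absurd this (by decide)
  · intro X F hF
    obtain ⟨x, hx, hxb⟩ := exists_mask (fun i => decide (i ∈ X))
    have hs := allBelow_spec _ _ split_check x hx
    simp only [List.any_eq_true] at hs
    obtain ⟨a, -, ha⟩ := hs
    simp only [splitOk, List.all_eq_true, Bool.or_eq_true, Bool.and_eq_true] at ha
    refine ⟨fun i => a.testBit i.1, fun f hf => ?_⟩
    obtain ⟨⟨e', he', rfl⟩, hcard⟩ := hF f hf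
    simp only [List.mem_toFinset, List.mem_map] at he'
    obtain ⟨e, he, rfl⟩ := he'
    have hlt : e &&& x < 256 := lt_of_le_of_lt Nat.and_le_right hx
    have hset : maskSet e ∩ X = maskSet (e &&& x) := by
      ext i
      simp [mem_maskSet, Nat.testBit_and, hxb]
    rw [hset] at hcard ⊢
    rw [maskSet_card _ hlt] at hcard
    have h := (ha e he).resolve_left (by
      intro hle
      have := Nat.le_of_ble_eq_true hle
      omega)
    have h1 : e &&& x &&& a ≠ 0 := by
      intro h0
      rw [h0] at h
      exact absurd h.1 (by decide)
    have h2 : e &&& x &&& (255 ^^^ a) ≠ 0 := by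
      intro h0
      rw [h0] at h
      exact absurd h.2 (by decide)
    constructor
    · obtain ⟨i, hi⟩ := exists_bit _ (lt_of_le_of_lt Nat.and_le_left hlt) h1
      rw [Nat.testBit_and, Bool.and_eq_true] at hi
      exact ⟨i, (mem_maskSet _ _).2 hi.1, hi.2⟩
    · obtain ⟨i, hi⟩ := exists_bit _ (lt_of_le_of_lt Nat.and_le_left hlt) h2
      rw [Nat.testBit_and, Bool.and_eq_true, Nat.testBit_xor, full_bit] at hi
      exact ⟨i, (mem_maskSet _ _).2 hi.1, by simpa using hi.2⟩
end

section
/- For every integer h ≥ 3, there exists a (2h−1)-uniform hypergraph which has no polychromatic 3-coloring, but all of whose h-heavy restricted subhypergraphs are 2-colorable. -/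
namespace Poly3

/-- The edges of the base hypergraph (case `h = 3`) inside the vertices `1, …, 6`. -/
def edgesA {β : Type} (a1 a2 a3 a4 a5 a6 : β) : List (List β) :=
  [[a1, a2, a3, a4, a5], [a1, a2, a3, a4, a6], [a1, a2, a3, a5, a6],
   [a1, a2, a4, a5, a6], [a1, a3, a4, a5, a6], [a2, a3, a4, a5, a6]]

/-- The edges of the base hypergraph that contain the vertices `0` and `7`. -/
def edgesB {β : Type} (a0 a1 a2 a3 a4 a5 a6 a7 : β) : List (List β) :=
  [[a0, a1, a2, a3, a7], [a0, a1, a4, a5, a7], [a0, a1, a5, a6, a7], [a0, a2, a4, a6, a7],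
   [a0, a2, a5, a6, a7], [a0, a3, a4, a5, a7], [a0, a3, a4, a6, a7]]

/-- The edges of the base hypergraph (case `h = 3`), on 8 vertices. -/
def baseEdges : List (List (Fin 8)) :=
  edgesA 1 2 3 4 5 6 ++ edgesB 0 1 2 3 4 5 6 7

/-- Colors are coded as the bits 1, 2, 4; the edge misses a color. -/
def misses (l : List ℕ) : Bool := !(Nat.beq (l.foldr Nat.lor 0) 7)

def all3 (f : ℕ → Bool) : Bool := f 1 && (f 2 && f 4)

def code (i : Fin 3) : ℕ := 2 ^ i.val

lemma all3_code {f : ℕ → Bool} (h : all3 f = true) (i : Fin 3) : f (code i) = true := by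
  simp only [all3, Bool.and_eq_true] at h
  fin_cases i
  · exact h.1
  · exact h.2.1
  · exact h.2.2

set_option maxRecDepth 100000 in
lemma chk3_all : (all3 fun a1 => all3 fun a2 => all3 fun a3 => all3 fun a4 => all3 fun a5 =>
    all3 fun a6 => (edgesA a1 a2 a3 a4 a5 a6).any misses || all3 fun a0 => all3 fun a7 =>
      (edgesB a0 a1 a2 a3 a4 a5 a6 a7).any misses) = true := by
  decide +kernel

/-- `p.1` says that the vertex is in `X`, `p.2` is its color. -/
def good (l : List (Bool × Bool)) : Bool :=
  Nat.blt (l.countP Prod.fst) 3 || ((l.any fun p => p.1 && p.2) && (l.any fun p => p.1 && !p.2))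

def chk2 (x0 x1 x2 x3 x4 x5 x6 x7 y0 y1 y2 y3 y4 y5 y6 y7 : Bool) : Bool :=
  (edgesA (x1, y1) (x2, y2) (x3, y3) (x4, y4) (x5, y5) (x6, y6) ++
   edgesB (x0, y0) (x1, y1) (x2, y2) (x3, y3) (x4, y4) (x5, y5) (x6, y6) (x7, y7)).all good

def all2 (f : Bool → Bool) : Bool := f true && f false

lemma all2_spec {f : Bool → Bool} (h : all2 f = true) (b : Bool) : f b = true := by
  simp only [all2, Bool.and_eq_true] at h
  cases b
  · exact h.2
  · exact h.1

def some2 (x0 x1 x2 x3 x4 x5 x6 x7 : Bool) : Bool :=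
  chk2 x0 x1 x2 x3 x4 x5 x6 x7 true true true false true false false false ||
  (chk2 x0 x1 x2 x3 x4 x5 x6 x7 true false true true false true false false ||
  (chk2 x0 x1 x2 x3 x4 x5 x6 x7 true false true false true true false false ||
  (chk2 x0 x1 x2 x3 x4 x5 x6 x7 true true false false true false true false ||
  (chk2 x0 x1 x2 x3 x4 x5 x6 x7 false true true false true false false false ||
  chk2 x0 x1 x2 x3 x4 x5 x6 x7 false true false true false false true false))))

set_option maxRecDepth 100000 in
lemma chk2_all : (all2 fun x0 => all2 fun x1 => all2 fun x2 => all2 fun x3 => all2 fun x4 =>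
    all2 fun x5 => all2 fun x6 => all2 fun x7 => some2 x0 x1 x2 x3 x4 x5 x6 x7) = true := by
  decide +kernel

lemma some2_spec {x0 x1 x2 x3 x4 x5 x6 x7 : Bool} (h : some2 x0 x1 x2 x3 x4 x5 x6 x7 = true) :
    ∃ y0 y1 y2 y3 y4 y5 y6 y7, chk2 x0 x1 x2 x3 x4 x5 x6 x7 y0 y1 y2 y3 y4 y5 y6 y7 = true := by
  simp only [some2, Bool.or_eq_true] at h
  rcases h with h | h | h | h | h | h <;> exact ⟨_, _, _, _, _, _, _, _, h⟩

def vec (a0 a1 a2 a3 a4 a5 a6 a7 : Bool) : Fin 8 → Bool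
  | 0 => a0 | 1 => a1 | 2 => a2 | 3 => a3 | 4 => a4 | 5 => a5 | 6 => a6 | 7 => a7

/-- A convenient reformulation of `HeavyRestrictedTwoColorable`. -/
def Heavy {α : Type*} [DecidableEq α] (E : Finset (Finset α)) (h : ℕ) : Prop :=
  ∀ X : Finset α, ∃ c : α → Bool, ∀ e ∈ E, h ≤ (e ∩ X).card →
    (∃ v ∈ e ∩ X, c v = true) ∧ (∃ v ∈ e ∩ X, c v = false)

lemma Heavy.toOrig {α : Type*} [DecidableEq α] {E : Finset (Finset α)} {h : ℕ}
    (H : Heavy E h) : HeavyRestrictedTwoColorable E h := by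
  intro X F hF
  obtain ⟨c, hc⟩ := H X
  refine ⟨c, fun f hf => ?_⟩
  obtain ⟨⟨e, he, rfl⟩, hcard⟩ := hF f hf
  exact hc e he hcard

def baseE : Finset (Finset (Fin 8)) := (baseEdges.map List.toFinset).toFinset

lemma mem_baseE {e : Finset (Fin 8)} : e ∈ baseE ↔ ∃ l ∈ baseEdges, l.toFinset = e := by
  simp [baseE]

lemma base_uniform : IsUniform baseE 5 := by
  intro e he
  obtain ⟨l, hl, rfl⟩ := mem_baseE.1 he
  revert l
  decide

lemma foldr_code_testBit {c : Fin 8 → Fin 3} (l : List (Fin 8)) (i : Fin 3)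
    (h : ∃ v ∈ l, c v = i) :
    ((l.map fun v => code (c v)).foldr Nat.lor 0).testBit i.val = true := by
  induction l with
  | nil => simp at h
  | cons a l ih =>
    have heq : ((a :: l).map fun v => code (c v)).foldr Nat.lor 0 =
      code (c a) ||| (l.map fun v => code (c v)).foldr Nat.lor 0 := rfl
    rw [heq, Nat.testBit_or, Bool.or_eq_true]
    obtain ⟨v, hv, hvi⟩ := h
    rcases List.mem_cons.1 hv with rfl | hv
    · left
      rw [hvi, code, Nat.testBit_two_pow_self]
    · exact Or.inr (ih ⟨v, hv, hvi⟩)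

lemma foldr_code_lt {c : Fin 8 → Fin 3} (l : List (Fin 8)) :
    (l.map fun v => code (c v)).foldr Nat.lor 0 < 2 ^ 3 := by
  induction l with
  | nil => simp
  | cons a l ih =>
    refine Nat.or_lt_two_pow ?_ ih
    exact Nat.pow_lt_pow_right (by norm_num) (c a).isLt

lemma misses_spec {c : Fin 8 → Fin 3} {l : List (Fin 8)}
    (h : misses (l.map fun v => code (c v)) = true) : ∃ i, ∀ v ∈ l, c v ≠ i := by
  by_contra hcon
  push Not at hcon
  have h7 : (l.map fun v => code (c v)).foldr Nat.lor 0 = 7 := by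
    have h0 := foldr_code_testBit l 0 (hcon 0)
    have h1 := foldr_code_testBit l 1 (hcon 1)
    have h2 := foldr_code_testBit l 2 (hcon 2)
    have h3 := foldr_code_lt (c := c) l
    generalize (l.map fun v => code (c v)).foldr Nat.lor 0 = m at *
    revert h0 h1 h2
    interval_cases m <;> decide
  rw [misses, h7] at h
  exact absurd h (by decide)

lemma base_noPoly : NoPolychromatic3 baseE := by
  intro c
  have h := all3_code (all3_code (all3_code (all3_code (all3_code (all3_code chk3_all
    (c 1)) (c 2)) (c 3)) (c 4)) (c 5)) (c 6)
  have key : ∃ l ∈ baseEdges, misses (l.map fun v => code (c v)) = true := by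
    rcases Bool.or_eq_true_iff.1 h with h | h
    · have h' : (((edgesA 1 2 3 4 5 6 : List (List (Fin 8))).map
          (List.map fun v => code (c v))).any misses) = true := h
      rw [List.any_map, List.any_eq_true] at h'
      obtain ⟨l, hl, h'⟩ := h'
      exact ⟨l, List.mem_append_left _ hl, h'⟩
    · have h' : (((edgesB 0 1 2 3 4 5 6 7 : List (List (Fin 8))).map
          (List.map fun v => code (c v))).any misses) = true :=
        all3_code (all3_code h (c 0)) (c 7)
      rw [List.any_map, List.any_eq_true] at h'
      obtain ⟨l, hl, h'⟩ := h'
      exact ⟨l, List.mem_append_right _ hl, h'⟩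
  obtain ⟨l, hl, h⟩ := key
  obtain ⟨i, hi⟩ := misses_spec h
  exact ⟨l.toFinset, mem_baseE.2 ⟨l, hl, rfl⟩, i, fun v hv => hi v (List.mem_toFinset.1 hv)⟩

lemma base_heavy : Heavy baseE 3 := by
  intro X
  let x : Fin 8 → Bool := fun v => decide (v ∈ X)
  have h := all2_spec (all2_spec (all2_spec (all2_spec (all2_spec (all2_spec (all2_spec (all2_spec
    chk2_all (x 0)) (x 1)) (x 2)) (x 3)) (x 4)) (x 5)) (x 6)) (x 7)
  obtain ⟨y0, y1, y2, y3, y4, y5, y6, y7, h⟩ := some2_spec h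
  obtain ⟨y, hy⟩ : ∃ y, y = vec y0 y1 y2 y3 y4 y5 y6 y7 := ⟨_, rfl⟩
  have h' : ((baseEdges.map (List.map fun v => (x v, y v))).all good) = true := by
    rw [hy]; exact h
  rw [List.all_map, List.all_eq_true] at h'
  refine ⟨y, fun e he hcard => ?_⟩
  obtain ⟨l, hl, rfl⟩ := mem_baseE.1 he
  have h1 : good (l.map fun v => (x v, y v)) = true := h' l hl
  have h2 : (l.toFinset ∩ X).card ≤ l.countP x := by
    have : l.toFinset ∩ X = (l.filter x).toFinset := by
      ext v; simp [x]
    rw [this, List.countP_eq_length_filter]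
    exact List.toFinset_card_le _
  have h3 : Nat.blt ((l.map fun v => (x v, y v)).countP Prod.fst) 3 = false := by
    rw [Bool.eq_false_iff]
    intro hb
    have hb' := Nat.le_of_ble_eq_true hb
    rw [List.countP_map] at hb'
    have : l.countP (Prod.fst ∘ fun v => (x v, y v)) = l.countP x := rfl
    omega
  rw [good, h3, Bool.false_or, Bool.and_eq_true, List.any_map, List.any_map, List.any_eq_true,
    List.any_eq_true] at h1
  obtain ⟨⟨v, hv, h4⟩, ⟨w, hw, h5⟩⟩ := h1
  simp only [x, Function.comp, Bool.and_eq_true, decide_eq_true_eq, Bool.not_eq_true'] at h4 h5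
  exact ⟨⟨v, by simp [hv, h4.1], h4.2⟩, ⟨w, by simp [hw, h5.1], h5.2⟩⟩

lemma exists_split {ι : Type*} [DecidableEq ι] (S : Finset ι) :
    ∃ d : ι → Bool, 2 ≤ S.card → (∃ v ∈ S, d v = true) ∧ (∃ v ∈ S, d v = false) := by
  by_cases hS : 2 ≤ S.card
  · obtain ⟨a, ha, b, hb, hab⟩ := Finset.one_lt_card.1 hS
    refine ⟨fun v => decide (v = a), fun _ => ⟨⟨a, ha, by simp⟩, ⟨b, hb, ?_⟩⟩⟩
    simpa using hab.symm
  · exact ⟨fun _ => true, fun h => absurd h hS⟩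

/-- The vertex set of the hypergraph built in the induction step. -/
abbrev SV (α : Type) (h : ℕ) : Type := α ⊕ (Fin (2 * h + 1) ⊕ (Fin (2 * h + 1) × Fin (2 * h)))

section Step

variable {α : Type} {h : ℕ}

/-- Root vertices. -/
def xv (i : Fin (2 * h + 1)) : SV α h := Sum.inr (Sum.inl i)

/-- Children of the root vertices. -/
def uv (i : Fin (2 * h + 1)) (j : Fin (2 * h)) : SV α h := Sum.inr (Sum.inr (i, j))

variable [DecidableEq α]

def Qe : Finset (SV α h) := Finset.univ.image xv

def Re (i : Fin (2 * h + 1)) : Finset (SV α h) := insert (xv i) (Finset.univ.image (uv i))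

def Pe (e : Finset α) (i : Fin (2 * h + 1)) (j : Fin (2 * h)) : Finset (SV α h) :=
  insert (xv i) (insert (uv i j) (e.image Sum.inl))

def stepE (E : Finset (Finset α)) (h : ℕ) : Finset (Finset (SV α h)) :=
  {Qe} ∪ Finset.univ.image Re ∪
    (E ×ˢ (Finset.univ ×ˢ Finset.univ)).image fun p => Pe p.1 p.2.1 p.2.2

lemma mem_stepE {E : Finset (Finset α)} {f : Finset (SV α h)} :
    f ∈ stepE E h ↔ f = Qe ∨ (∃ i, f = Re i) ∨ ∃ e ∈ E, ∃ i j, f = Pe e i j := by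
  simp only [stepE, Finset.mem_union, Finset.mem_singleton, Finset.mem_image, Finset.mem_univ,
    true_and, Finset.mem_product, Prod.exists, and_true, or_assoc]
  constructor
  · rintro (h | ⟨i, rfl⟩ | ⟨e, i, j, he, rfl⟩)
    · exact Or.inl h
    · exact Or.inr (Or.inl ⟨i, rfl⟩)
    · exact Or.inr (Or.inr ⟨e, he, i, j, rfl⟩)
  · rintro (h | ⟨i, rfl⟩ | ⟨e, he, i, j, rfl⟩)
    · exact Or.inl h
    · exact Or.inr (Or.inl ⟨i, rfl⟩)
    · exact Or.inr (Or.inr ⟨e, i, j, he, rfl⟩)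

lemma step_uniform {E : Finset (Finset α)} (hh : 1 ≤ h) (hE : IsUniform E (2 * h - 1)) :
    IsUniform (stepE E h) (2 * (h + 1) - 1) := by
  intro f hf
  rcases mem_stepE.1 hf with rfl | ⟨i, rfl⟩ | ⟨e, he, i, j, rfl⟩
  · rw [Qe, Finset.card_image_of_injective]
    · simp; omega
    · intro a b hab; simpa [xv] using hab
  · rw [Re, Finset.card_insert_of_notMem, Finset.card_image_of_injective]
    · simp; omega
    · intro a b hab; simpa [uv] using hab
    · simp [xv, uv]
  · rw [Pe, Finset.card_insert_of_notMem, Finset.card_insert_of_notMem,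
      Finset.card_image_of_injective _ Sum.inl_injective, hE e he]
    · omega
    · simp [uv]
    · simp [xv, uv]

lemma step_noPoly {E : Finset (Finset α)} (hE : NoPolychromatic3 E) :
    NoPolychromatic3 (stepE E h) := by
  intro c
  by_contra hcon
  push Not at hcon
  obtain ⟨e, he, k, hk⟩ := hE (fun v => c (Sum.inl v))
  -- a root vertex whose color is not `k`
  have hne : ∃ k' : Fin 3, k' ≠ k :=
    (by decide : ∀ k : Fin 3, ∃ k' : Fin 3, k' ≠ k) k
  obtain ⟨k', hk'⟩ := hne
  obtain ⟨v, hv, hvc⟩ := hcon Qe (mem_stepE.2 (Or.inl rfl)) k'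
  obtain ⟨i, -, rfl⟩ := Finset.mem_image.1 hv
  have hm : ∃ m : Fin 3, m ≠ k ∧ m ≠ k' :=
    (by decide : ∀ k k' : Fin 3, ∃ m : Fin 3, m ≠ k ∧ m ≠ k') k k'
  obtain ⟨m, hmk, hmk'⟩ := hm
  obtain ⟨w, hw, hwc⟩ := hcon (Re i) (mem_stepE.2 (Or.inr (Or.inl ⟨i, rfl⟩))) m
  rcases Finset.mem_insert.1 hw with rfl | hw
  · exact hmk' (hwc.symm.trans hvc)
  obtain ⟨j, -, rfl⟩ := Finset.mem_image.1 hw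
  obtain ⟨z, hz, hzc⟩ :=
    hcon (Pe e i j) (mem_stepE.2 (Or.inr (Or.inr ⟨e, he, i, j, rfl⟩))) k
  rcases Finset.mem_insert.1 hz with rfl | hz
  · exact hk' (hvc.symm.trans hzc)
  rcases Finset.mem_insert.1 hz with rfl | hz
  · exact hmk (hwc.symm.trans hzc)
  obtain ⟨v, hv, rfl⟩ := Finset.mem_image.1 hz
  exact hk v hv hzc

lemma bool_both {β : Type*} {c : β → Bool} {S : Finset β} {v w : β} (hv : v ∈ S) (hw : w ∈ S)
    (h : c v = !(c w)) : (∃ v ∈ S, c v = true) ∧ (∃ v ∈ S, c v = false) := by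
  cases hc : c w
  · exact ⟨⟨v, hv, by simp [h, hc]⟩, ⟨w, hw, hc⟩⟩
  · exact ⟨⟨w, hw, hc⟩, ⟨v, hv, by simp [h, hc]⟩⟩

lemma step_heavy {E : Finset (Finset α)} (hh : 1 ≤ h) (hE : Heavy E h) :
    Heavy (stepE E h) (h + 1) := by
  intro X
  obtain ⟨c, hc⟩ := hE (X.preimage Sum.inl Sum.inl_injective.injOn)
  obtain ⟨d, hd⟩ := exists_split (Finset.univ.filter fun i => (xv i : SV α h) ∈ X)
  choose d' hd' using fun i : Fin (2 * h + 1) =>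
    exists_split (Finset.univ.filter fun j => (uv i j : SV α h) ∈ X)
  let col : SV α h → Bool := fun v =>
    match v with
    | Sum.inl v => c v
    | Sum.inr (Sum.inl i) => d i
    | Sum.inr (Sum.inr (i, j)) => if (xv i : SV α h) ∈ X then !(d i) else d' i j
  have colx : ∀ i, col (xv i) = d i := fun i => rfl
  have colu : ∀ i j, col (uv i j) = if (xv i : SV α h) ∈ X then !(d i) else d' i j :=
    fun i j => rfl
  refine ⟨col, fun f hf hcard => ?_⟩
  rcases mem_stepE.1 hf with rfl | ⟨i, rfl⟩ | ⟨e, he, i, j, rfl⟩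
  · have h1 : (Qe ∩ X : Finset (SV α h)) ⊆
        (Finset.univ.filter fun i => (xv i : SV α h) ∈ X).image xv := by
      intro v hv
      obtain ⟨hv, hvX⟩ := Finset.mem_inter.1 hv
      obtain ⟨i, -, rfl⟩ := Finset.mem_image.1 hv
      exact Finset.mem_image.2 ⟨i, by simpa using hvX, rfl⟩
    have h2 := (Finset.card_le_card h1).trans Finset.card_image_le
    obtain ⟨⟨a, ha, ha'⟩, ⟨b, hb, hb'⟩⟩ := hd (by omega)
    have hmem : ∀ a, a ∈ (Finset.univ.filter fun i => (xv i : SV α h) ∈ X) →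
        (xv a : SV α h) ∈ Qe ∩ X := fun a ha =>
      Finset.mem_inter.2 ⟨Finset.mem_image.2 ⟨a, Finset.mem_univ _, rfl⟩,
        (Finset.mem_filter.1 ha).2⟩
    exact ⟨⟨xv a, hmem a ha, ha'⟩, ⟨xv b, hmem b hb, hb'⟩⟩
  · by_cases hx : (xv i : SV α h) ∈ X
    · obtain ⟨w, hw, hwx⟩ := Finset.exists_mem_ne (by omega : 1 < (Re i ∩ X).card) (xv i)
      have hw' := Finset.mem_inter.1 hw
      rcases Finset.mem_insert.1 hw'.1 with rfl | hw2
      · exact absurd rfl hwx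
      obtain ⟨j, -, rfl⟩ := Finset.mem_image.1 hw2
      refine bool_both hw (Finset.mem_inter.2 ⟨Finset.mem_insert_self _ _, hx⟩) ?_
      rw [colx, colu, if_pos hx]
    · have h1 : (Re i ∩ X : Finset (SV α h)) ⊆
          (Finset.univ.filter fun j => (uv i j : SV α h) ∈ X).image (uv i) := by
        intro v hv
        obtain ⟨hv, hvX⟩ := Finset.mem_inter.1 hv
        rcases Finset.mem_insert.1 hv with rfl | hv
        · exact absurd hvX hx
        obtain ⟨j, -, rfl⟩ := Finset.mem_image.1 hv
        exact Finset.mem_image.2 ⟨j, by simpa using hvX, rfl⟩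
      have h2 := (Finset.card_le_card h1).trans Finset.card_image_le
      obtain ⟨⟨a, ha, ha'⟩, ⟨b, hb, hb'⟩⟩ := hd' i (by omega)
      have hmem : ∀ a, a ∈ (Finset.univ.filter fun j => (uv i j : SV α h) ∈ X) →
          (uv i a : SV α h) ∈ Re i ∩ X := fun a ha =>
        Finset.mem_inter.2 ⟨Finset.mem_insert_of_mem
          (Finset.mem_image.2 ⟨a, Finset.mem_univ _, rfl⟩), (Finset.mem_filter.1 ha).2⟩
      refine ⟨⟨uv i a, hmem a ha, ?_⟩, ⟨uv i b, hmem b hb, ?_⟩⟩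
      · rw [colu, if_neg hx, ha']
      · rw [colu, if_neg hx, hb']
  · by_cases hboth : (xv i : SV α h) ∈ X ∧ (uv i j : SV α h) ∈ X
    · refine bool_both (v := uv i j) (w := xv i)
        (Finset.mem_inter.2 ⟨by simp [Pe], hboth.2⟩)
        (Finset.mem_inter.2 ⟨by simp [Pe], hboth.1⟩) ?_
      rw [colx, colu, if_pos hboth.1]
    · have h1 : ∃ y : SV α h, Pe e i j ∩ X ⊆
          insert y ((e ∩ X.preimage Sum.inl Sum.inl_injective.injOn).image Sum.inl) := by
        by_cases hx : (xv i : SV α h) ∈ X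
        · refine ⟨xv i, fun v hv => ?_⟩
          obtain ⟨hv, hvX⟩ := Finset.mem_inter.1 hv
          rcases Finset.mem_insert.1 hv with rfl | hv
          · simp
          rcases Finset.mem_insert.1 hv with rfl | hv
          · exact absurd ⟨hx, hvX⟩ hboth
          obtain ⟨v, hve, rfl⟩ := Finset.mem_image.1 hv
          exact Finset.mem_insert_of_mem (Finset.mem_image.2 ⟨v, by simp [hve, hvX], rfl⟩)
        · refine ⟨uv i j, fun v hv => ?_⟩
          obtain ⟨hv, hvX⟩ := Finset.mem_inter.1 hv
          rcases Finset.mem_insert.1 hv with rfl | hv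
          · exact absurd hvX hx
          rcases Finset.mem_insert.1 hv with rfl | hv
          · simp
          obtain ⟨v, hve, rfl⟩ := Finset.mem_image.1 hv
          exact Finset.mem_insert_of_mem (Finset.mem_image.2 ⟨v, by simp [hve, hvX], rfl⟩)
      obtain ⟨y, hy⟩ := h1
      have h2 := (Finset.card_le_card hy).trans (Finset.card_insert_le _ _)
      rw [Finset.card_image_of_injective _ Sum.inl_injective] at h2
      obtain ⟨⟨a, ha, ha'⟩, ⟨b, hb, hb'⟩⟩ := hc e he (by omega)
      have hmem : ∀ a, a ∈ e ∩ X.preimage Sum.inl Sum.inl_injective.injOn →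
          (Sum.inl a : SV α h) ∈ Pe e i j ∩ X := by
        intro a ha
        obtain ⟨ha, haX⟩ := Finset.mem_inter.1 ha
        refine Finset.mem_inter.2 ⟨?_, Finset.mem_preimage.1 haX⟩
        simp [Pe, ha]
      exact ⟨⟨Sum.inl a, hmem a ha, ha'⟩, ⟨Sum.inl b, hmem b hb, hb'⟩⟩

end Step

lemma transfer {α : Type} [Fintype α] [DecidableEq α] {E : Finset (Finset α)} {m h : ℕ}
    (h1 : IsUniform E m) (h2 : NoPolychromatic3 E) (h3 : Heavy E h) :
    ∃ (n : ℕ) (E : Finset (Finset (Fin n))),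
      IsUniform E m ∧ NoPolychromatic3 E ∧ Heavy E h := by
  let φ := Fintype.equivFin α
  refine ⟨Fintype.card α, E.image fun e => e.map φ.toEmbedding, ?_, ?_, ?_⟩
  · intro f hf
    obtain ⟨e, he, rfl⟩ := Finset.mem_image.1 hf
    rw [Finset.card_map]
    exact h1 e he
  · intro c
    obtain ⟨e, he, i, hi⟩ := h2 (fun v => c (φ v))
    refine ⟨_, Finset.mem_image_of_mem _ he, i, fun v hv => ?_⟩
    obtain ⟨w, hw, rfl⟩ := Finset.mem_map.1 hv
    exact hi w hw
  · intro X
    obtain ⟨c, hc⟩ := h3 (X.map φ.symm.toEmbedding)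
    refine ⟨fun v => c (φ.symm v), fun f hf hcard => ?_⟩
    obtain ⟨e, he, rfl⟩ := Finset.mem_image.1 hf
    have hX : e.map φ.toEmbedding ∩ X =
        (e ∩ X.map φ.symm.toEmbedding).map φ.toEmbedding := by
      rw [Finset.map_inter]
      congr 1
      ext v
      simp
    rw [hX] at hcard ⊢
    rw [Finset.card_map] at hcard
    obtain ⟨⟨a, ha, ha'⟩, ⟨b, hb, hb'⟩⟩ := hc e he hcard
    exact ⟨⟨φ a, Finset.mem_map_of_mem φ.toEmbedding ha, by simpa using ha'⟩,
      ⟨φ b, Finset.mem_map_of_mem φ.toEmbedding hb, by simpa using hb'⟩⟩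

lemma main (h : ℕ) (hh : 3 ≤ h) :
    ∃ (n : ℕ) (E : Finset (Finset (Fin n))),
      IsUniform E (2 * h - 1) ∧ NoPolychromatic3 E ∧ Heavy E h := by
  induction h, hh using Nat.le_induction with
  | base => exact ⟨8, baseE, base_uniform, base_noPoly, base_heavy⟩
  | succ h hh ih =>
    obtain ⟨n, E, h1, h2, h3⟩ := ih
    exact transfer (step_uniform (by omega) h1) (step_noPoly h2) (step_heavy (by omega) h3)

end Poly3

theorem stmt_2 (h : ℕ) (hh : 3 ≤ h) :
    ∃ (n : ℕ) (E : Finset (Finset (Fin n))),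
      IsUniform E (2 * h - 1) ∧
      NoPolychromatic3 E ∧
      HeavyRestrictedTwoColorable E h := by
  obtain ⟨n, E, h1, h2, h3⟩ := Poly3.main h hh
  exact ⟨n, E, h1, h2, h3.toOrig⟩
end

section
/- Let h ≥ 2, let V be a set of size 3h−1, and let K be a family of h-element subsets of V satisfying (K1), (K2) and (K3). Let G be the family of all h-element subsets of V not in K, and let H be the hypergraph on V whose edges are the complements V \ B for B ∈ G. Then H is (2h−1)-uniform, H has no polychromatic 3-coloring, and every h-heavy restricted subhypergraph of H is 2-colorable. -/
/-- The edges of the hypergraph `H`: complements `V \ B` of the `h`-element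
subsets `B` of `V` that do not belong to `K`. -/
def complEdges {α : Type*} [DecidableEq α]
    (V : Finset α) (h : ℕ) (K : Finset (Finset α)) : Finset (Finset α) :=
  (V.powersetCard h \ K).image (fun B => V \ B)

lemma exists_split {α : Type*} [DecidableEq α] (h : ℕ) (hh : 2 ≤ h)
    (V : Finset α) (hV : V.card = 3 * h - 1)
    (K : Finset (Finset α))
    (hK2 : ∀ X ∈ V.powersetCard (2 * h),
      ∃ R ⊆ X, R.card = h ∧ R ∈ K ∧ X \ R ∈ K)
    (hK3 : ∀ Y ∈ V.powersetCard h,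
      ∃ U ⊆ V \ Y, U.card = h - 1 ∧ ∀ y ∈ Y, insert y U ∈ K)
    (X : Finset α) (hX : X ⊆ V) :
    ∃ R ⊆ X, ∀ B ⊆ V, B.card = h → B ∉ K → h ≤ (X \ B).card →
      ¬ (X \ B ⊆ R) ∧ ¬ (X \ B ⊆ X \ R) := by
  rcases lt_trichotomy X.card (2 * h - 1) with hc | hc | hc
  · obtain ⟨R, hR, hRc⟩ := Finset.exists_subset_card_eq (s := X) (n := min X.card (h - 1))
      (min_le_left _ _)
    refine ⟨R, hR, fun B _ _ _ hf => ⟨fun hs => ?_, fun hs => ?_⟩⟩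
    · have := Finset.card_le_card hs
      omega
    · have := Finset.card_le_card hs
      rw [Finset.card_sdiff_of_subset hR] at this
      omega
  · have hYc : (V \ X).card = h := by
      rw [Finset.card_sdiff_of_subset hX]; omega
    obtain ⟨U, hU, hUc, hUK⟩ := hK3 (V \ X)
      (Finset.mem_powersetCard.2 ⟨Finset.sdiff_subset, hYc⟩)
    have hUX : U ⊆ X := by
      intro u hu
      have := hU hu
      simp only [Finset.mem_sdiff] at this
      tauto
    refine ⟨U, hUX, fun B hBV hBc hBK hf => ⟨fun hs => ?_, fun hs => ?_⟩⟩
    · have := Finset.card_le_card hs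
      omega
    · have hUB : U ⊆ B := by
        intro u hu
        by_contra hb
        have := hs (Finset.mem_sdiff.2 ⟨hUX hu, hb⟩)
        exact (Finset.mem_sdiff.1 this).2 hu
      have he : X \ B = X \ U := by
        apply Finset.eq_of_subset_of_card_le hs
        rw [Finset.card_sdiff_of_subset hUX]; omega
      obtain ⟨v, hvB, hvU⟩ := Finset.exists_mem_notMem_of_card_lt_card
        (show U.card < B.card by omega)
      have hvX : v ∉ X := by
        intro hvX
        have : v ∈ X \ B := he ▸ Finset.mem_sdiff.2 ⟨hvX, hvU⟩
        exact (Finset.mem_sdiff.1 this).2 hvB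
      have hins : insert v U = B := by
        apply Finset.eq_of_subset_of_card_le (Finset.insert_subset hvB hUB)
        rw [Finset.card_insert_of_notMem hvU]; omega
      exact hBK (hins ▸ hUK v (Finset.mem_sdiff.2 ⟨hBV hvB, hvX⟩))
  · obtain ⟨X', hX', hXc'⟩ := Finset.exists_subset_card_eq (s := X) (n := 2 * h) (by omega)
    obtain ⟨R, hR, hRc, hRK, hRK'⟩ := hK2 X'
      (Finset.mem_powersetCard.2 ⟨hX'.trans hX, hXc'⟩)
    have hRX := hR.trans hX'
    refine ⟨R, hRX, fun B hBV hBc hBK hf => ⟨fun hs => ?_, fun hs => ?_⟩⟩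
    · have h1 := Finset.eq_of_subset_of_card_le hs (by omega)
      have h2 : X' \ R = B := by
        apply Finset.eq_of_subset_of_card_le
        · intro u hu
          obtain ⟨hu1, hu2⟩ := Finset.mem_sdiff.1 hu
          by_contra hb
          exact hu2 (hs (Finset.mem_sdiff.2 ⟨hX' hu1, hb⟩))
        · rw [Finset.card_sdiff_of_subset hR]; omega
      exact hBK (h2 ▸ hRK')
    · have h2 : R = B := by
        apply Finset.eq_of_subset_of_card_le
        · intro u hu
          by_contra hb
          exact (Finset.mem_sdiff.1 (hs (Finset.mem_sdiff.2 ⟨hRX hu, hb⟩))).2 hu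
        · omega
      exact hBK (h2 ▸ hRK)

theorem stmt_3 {α : Type*} [DecidableEq α] (h : ℕ) (hh : 2 ≤ h)
    (V : Finset α) (hV : V.card = 3 * h - 1)
    (K : Finset (Finset α)) (hKsub : K ⊆ V.powersetCard h)
    (hK1 : ∀ A ∈ V.powersetCard (h - 1), ∃ v ∈ V \ A, insert v A ∉ K)
    (hK2 : ∀ X ∈ V.powersetCard (2 * h),
      ∃ R ⊆ X, R.card = h ∧ R ∈ K ∧ X \ R ∈ K)
    (hK3 : ∀ Y ∈ V.powersetCard h,
      ∃ U ⊆ V \ Y, U.card = h - 1 ∧ ∀ y ∈ Y, insert y U ∈ K) :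
    -- `H` is `(2h-1)`-uniform
    (∀ e ∈ complEdges V h K, e.card = 2 * h - 1) ∧
    -- `H` has no polychromatic 3-coloring
    (∀ c : α → Fin 3, ∃ e ∈ complEdges V h K, ∃ i : Fin 3, ∀ v ∈ e, c v ≠ i) ∧
    -- every `h`-heavy restricted subhypergraph of `H` is 2-colorable
    (∀ X ⊆ V, ∀ F : Finset (Finset α),
      (∀ f ∈ F, (∃ e ∈ complEdges V h K, f = e ∩ X) ∧ h ≤ f.card) →
      ∃ c : α → Bool, ∀ f ∈ F, (∃ v ∈ f, c v = true) ∧ (∃ v ∈ f, c v = false)) := by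
  have hmem : ∀ e, e ∈ complEdges V h K ↔ ∃ B, (B ⊆ V ∧ B.card = h ∧ B ∉ K) ∧ V \ B = e := by
    intro e
    simp only [complEdges, Finset.mem_image, Finset.mem_sdiff, Finset.mem_powersetCard, and_assoc]
  refine ⟨?_, ?_, ?_⟩
  · intro e he
    obtain ⟨B, ⟨hB, hBc, -⟩, rfl⟩ := (hmem e).1 he
    rw [Finset.card_sdiff_of_subset hB]; omega
  · intro c
    obtain ⟨i, hi⟩ : ∃ i : Fin 3, (V.filter (fun v => c v = i)).card ≤ h - 1 := by
      by_contra! hcon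
      have h1 := Finset.card_eq_sum_card_fiberwise (f := c) (s := V) (t := Finset.univ)
        (fun _ _ => Finset.mem_coe.2 (Finset.mem_univ _))
      rw [Fin.sum_univ_three] at h1
      have h2 := hcon 0
      have h3 := hcon 1
      have h4 := hcon 2
      omega
    obtain ⟨A, hA1, hA2, hAc⟩ := Finset.exists_subsuperset_card_eq
      (Finset.filter_subset (fun v => c v = i) V) hi (by omega)
    obtain ⟨v, hv, hvK⟩ := hK1 A (Finset.mem_powersetCard.2 ⟨hA2, hAc⟩)
    obtain ⟨hvV, hvA⟩ := Finset.mem_sdiff.1 hv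
    refine ⟨V \ insert v A, (hmem _).2 ⟨insert v A, ⟨Finset.insert_subset hvV hA2, ?_, hvK⟩, rfl⟩,
      i, ?_⟩
    · rw [Finset.card_insert_of_notMem hvA]; omega
    · intro w hw hwi
      obtain ⟨hwV, hwA⟩ := Finset.mem_sdiff.1 hw
      exact hwA (Finset.mem_insert_of_mem (hA1 (Finset.mem_filter.2 ⟨hwV, hwi⟩)))
  · intro X hX F hF
    obtain ⟨R, hR, hRB⟩ := exists_split h hh V hV K hK2 hK3 X hX
    refine ⟨fun v => decide (v ∈ R), fun f hf => ?_⟩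
    obtain ⟨⟨e, he, rfl⟩, hfc⟩ := hF f hf
    obtain ⟨B, ⟨hB, hBc, hBK⟩, rfl⟩ := (hmem e).1 he
    have heq : (V \ B) ∩ X = X \ B := by
      ext v
      simp only [Finset.mem_inter, Finset.mem_sdiff]
      have := @hX v
      tauto
    rw [heq] at hfc ⊢
    obtain ⟨h1, h2⟩ := hRB B hB hBc hBK hfc
    obtain ⟨v, hv, hvR⟩ := Finset.not_subset.1 h1
    obtain ⟨w, hw, hwR⟩ := Finset.not_subset.1 h2
    refine ⟨⟨w, hw, ?_⟩, ⟨v, hv, by simpa using hvR⟩⟩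
    have hwX := (Finset.mem_sdiff.1 hw).1
    simp only [Finset.mem_sdiff] at hwR
    simp only [decide_eq_true_eq]
    tauto
end

section
/- Let h ≥ 2, let V be a set of size 3h−1, and let K be a family of h-element subsets of V satisfying (K1). Let H be the hypergraph on V whose edges are the sets V \ B where B ranges over the h-element subsets of V not in K. Then H has no polychromatic 3-coloring: for every coloring of V with 3 colors, some edge of H misses one of the color classes. -/
theorem stmt_4 {α : Type*} [DecidableEq α] (h : ℕ) (hh : 2 ≤ h)
    (V : Finset α) (hV : V.card = 3 * h - 1)
    (K : Finset (Finset α)) (hKsub : K ⊆ V.powersetCard h)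
    (hK1 : ∀ A ∈ V.powersetCard (h - 1), ∃ v ∈ V \ A, insert v A ∉ K) :
    ∀ c : α → Fin 3, ∃ e ∈ complEdges V h K, ∃ i : Fin 3, ∀ v ∈ e, c v ≠ i := by
  intro c
  have hex : ∃ i : Fin 3, (V.filter (fun v => c v = i)).card ≤ h - 1 := by
    by_contra hcon
    push Not at hcon
    have hsum := Finset.card_eq_sum_card_fiberwise (f := c) (s := V)
      (t := Finset.univ) (fun x _ => by simp)
    rw [Fin.sum_univ_three] at hsum
    have h0 := hcon 0
    have h1 := hcon 1
    have h2 := hcon 2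
    omega
  obtain ⟨i, hi⟩ := hex
  obtain ⟨A, hiA, hAV, hA⟩ := Finset.exists_subsuperset_card_eq
    (Finset.filter_subset (fun v => c v = i) V) hi (by omega : h - 1 ≤ V.card)
  obtain ⟨v, hv, hvK⟩ := hK1 A (Finset.mem_powersetCard.2 ⟨hAV, hA⟩)
  rw [Finset.mem_sdiff] at hv
  refine ⟨V \ insert v A, ?_, i, ?_⟩
  · refine Finset.mem_image.2 ⟨insert v A, ?_, rfl⟩
    refine Finset.mem_sdiff.2 ⟨Finset.mem_powersetCard.2 ⟨?_, ?_⟩, hvK⟩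
    · exact Finset.insert_subset hv.1 hAV
    · rw [Finset.card_insert_of_notMem hv.2]
      omega
  · intro w hw hc
    rw [Finset.mem_sdiff] at hw
    exact hw.2 (Finset.mem_insert_of_mem (hiA (Finset.mem_filter.2 ⟨hw.1, hc⟩)))
end

section
/- Let h ≥ 2, let V be a set of size 3h−1, and let K be a family of h-element subsets of V satisfying (K2) and (K3). Let H be the hypergraph on V whose edges are the sets V \ B where B ranges over the h-element subsets of V not in K. Then for every X ⊆ V there is a red–blue coloring of X such that no trace edge e ∩ X (e an edge of H) with |e ∩ X| ≥ h is monochromatic; consequently every h-heavy restricted subhypergraph of H is 2-colorable. -/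
theorem stmt_5 {α : Type*} [DecidableEq α] (h : ℕ) (hh : 2 ≤ h)
    (V : Finset α) (hV : V.card = 3 * h - 1)
    (K : Finset (Finset α)) (hKsub : K ⊆ V.powersetCard h)
    (hK2 : ∀ X ∈ V.powersetCard (2 * h),
      ∃ R ⊆ X, R.card = h ∧ R ∈ K ∧ X \ R ∈ K)
    (hK3 : ∀ Y ∈ V.powersetCard h,
      ∃ U ⊆ V \ Y, U.card = h - 1 ∧ ∀ y ∈ Y, insert y U ∈ K) :
    -- for every `X ⊆ V` there is a red-blue coloring of `X` such that no
    -- trace edge `e ∩ X` of size at least `h` is monochromatic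
    (∀ X ⊆ V, ∃ c : α → Bool, ∀ e ∈ complEdges V h K, h ≤ (e ∩ X).card →
      (∃ v ∈ e ∩ X, c v = true) ∧ (∃ v ∈ e ∩ X, c v = false)) ∧
    -- consequently, every `h`-heavy restricted subhypergraph of `H` is 2-colorable
    (∀ X ⊆ V, ∀ F : Finset (Finset α),
      (∀ f ∈ F, (∃ e ∈ complEdges V h K, f = e ∩ X) ∧ h ≤ f.card) →
      ∃ c : α → Bool, ∀ f ∈ F, (∃ v ∈ f, c v = true) ∧ (∃ v ∈ f, c v = false)) := by
  have main : ∀ X ⊆ V, ∃ c : α → Bool, ∀ e ∈ complEdges V h K, h ≤ (e ∩ X).card →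
      (∃ v ∈ e ∩ X, c v = true) ∧ (∃ v ∈ e ∩ X, c v = false) := by
    intro X hX
    -- it suffices to find a red part `R` of `X`
    suffices hs : ∃ R ⊆ X, ∀ B ⊆ V, B.card = h → B ∉ K → h ≤ (X \ B).card →
        ¬ (X \ B ⊆ X \ R) ∧ ¬ (X \ B ⊆ R) by
      obtain ⟨R, hRX, hR⟩ := hs
      refine ⟨fun v => decide (v ∈ R), ?_⟩
      intro e he hcard
      simp only [complEdges, Finset.mem_image, Finset.mem_sdiff, Finset.mem_powersetCard] at he
      obtain ⟨B, ⟨⟨hBV, hBc⟩, hBK⟩, rfl⟩ := he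
      have hEq : (V \ B) ∩ X = X \ B := by
        ext v
        simp only [Finset.mem_inter, Finset.mem_sdiff]
        constructor
        · rintro ⟨⟨_, h1⟩, h2⟩
          exact ⟨h2, h1⟩
        · rintro ⟨h1, h2⟩
          exact ⟨⟨hX h1, h2⟩, h1⟩
      rw [hEq] at hcard ⊢
      obtain ⟨h1, h2⟩ := hR B hBV hBc hBK hcard
      obtain ⟨v, hv, hv'⟩ := Finset.not_subset.mp h1
      obtain ⟨w, hw, hw'⟩ := Finset.not_subset.mp h2
      refine ⟨⟨v, hv, ?_⟩, ⟨w, hw, by simpa using hw'⟩⟩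
      simp only [Finset.mem_sdiff, not_and, not_not] at hv hv'
      simpa using hv' hv.1
    rcases lt_trichotomy X.card (2 * h - 1) with hlt | heq | hgt
    · -- small `X`: balanced split
      obtain ⟨R, hRX, hRc⟩ := Finset.exists_subset_card_eq (s := X) (n := X.card / 2) (by omega)
      refine ⟨R, hRX, ?_⟩
      intro B _ _ _ hc
      have h3 := Finset.card_sdiff_of_subset hRX
      constructor
      · intro hsub
        have := Finset.card_le_card hsub
        omega
      · intro hsub
        have := Finset.card_le_card hsub
        omega
    · -- `|X| = 2h - 1`: use (K3)
      have hYc : (V \ X).card = h := by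
        rw [Finset.card_sdiff_of_subset hX]
        omega
      obtain ⟨U, hU, hUc, hUK⟩ := hK3 (V \ X)
        (Finset.mem_powersetCard.mpr ⟨Finset.sdiff_subset, hYc⟩)
      rw [Finset.sdiff_sdiff_eq_self hX] at hU
      refine ⟨U, hU, ?_⟩
      intro B hBV hBc hBK hc
      constructor
      · intro hsub
        have h3 := Finset.card_sdiff_of_subset hU
        have hXB : X \ B = X \ U := Finset.eq_of_subset_of_card_le hsub (by omega)
        have hUB : U ⊆ B := by
          intro v hv
          by_contra hvB
          have : v ∈ X \ B := Finset.mem_sdiff.mpr ⟨hU hv, hvB⟩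
          rw [hXB] at this
          exact (Finset.mem_sdiff.mp this).2 hv
        have h4 := Finset.card_sdiff_of_subset hUB
        obtain ⟨y, hy⟩ : (B \ U).Nonempty := Finset.card_pos.mp (by omega)
        obtain ⟨hyB, hyU⟩ := Finset.mem_sdiff.mp hy
        have hyX : y ∉ X := by
          intro hyX
          have : y ∈ X \ U := Finset.mem_sdiff.mpr ⟨hyX, hyU⟩
          rw [← hXB] at this
          exact (Finset.mem_sdiff.mp this).2 hyB
        have hins : insert y U = B := by
          apply Finset.eq_of_subset_of_card_le (Finset.insert_subset hyB hUB)
          rw [Finset.card_insert_of_notMem hyU]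
          omega
        exact hBK (hins ▸ hUK y (Finset.mem_sdiff.mpr ⟨hBV hyB, hyX⟩))
      · intro hsub
        have := Finset.card_le_card hsub
        omega
    · -- `|X| ≥ 2h`: use (K2) on a `2h`-subset
      obtain ⟨Z, hZX, hZc⟩ := Finset.exists_subset_card_eq (s := X) (n := 2 * h) (by omega)
      obtain ⟨R, hRZ, hRc, hRK, hSK⟩ := hK2 Z
        (Finset.mem_powersetCard.mpr ⟨hZX.trans hX, hZc⟩)
      refine ⟨R, hRZ.trans hZX, ?_⟩
      intro B hBV hBc hBK hc
      constructor
      · intro hsub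
        have hRB : R ⊆ B := by
          intro v hv
          by_contra hvB
          exact (Finset.mem_sdiff.mp
            (hsub (Finset.mem_sdiff.mpr ⟨hZX (hRZ hv), hvB⟩))).2 hv
        have := Finset.eq_of_subset_of_card_le hRB (by omega)
        exact hBK (this ▸ hRK)
      · intro hsub
        have hSB : Z \ R ⊆ B := by
          intro v hv
          obtain ⟨hvZ, hvR⟩ := Finset.mem_sdiff.mp hv
          by_contra hvB
          exact hvR (hsub (Finset.mem_sdiff.mpr ⟨hZX hvZ, hvB⟩))
        have h3 := Finset.card_sdiff_of_subset hRZ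
        have := Finset.eq_of_subset_of_card_le hSB (by omega)
        exact hBK (this ▸ hSK)
  refine ⟨main, ?_⟩
  intro X hX F hF
  obtain ⟨c, hc⟩ := main X hX
  refine ⟨c, ?_⟩
  intro f hf
  obtain ⟨⟨e, he, rfl⟩, hcard⟩ := hF f hf
  exact hc e he hcard
end

section
/- Let h ≥ 2, let V be a set of size 3h−1, let K be a family of h-element subsets of V, and let H be the hypergraph on V whose edges are the sets V \ B where B ranges over the h-element subsets of V not in K. Let X ⊆ V with |X| = 2h−1 and set Y = V \ X. Suppose U ⊆ X is an (h−1)-element set such that U ∪ {y} ∈ K for every y ∈ Y. Then the coloring of X in which U is blue and X \ U is red has no monochromatic trace edge of size at least h, i.e., there is no edge e of H with e ∩ X ⊆ U and |e ∩ X| ≥ h, and no edge e of H with e ∩ X ⊆ X \ U and |e ∩ X| ≥ h. -/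
theorem stmt_6 {α : Type*} [DecidableEq α] (h : ℕ) (hh : 2 ≤ h)
    (V : Finset α) (hV : V.card = 3 * h - 1)
    (K : Finset (Finset α)) (hKsub : K ⊆ V.powersetCard h)
    (X : Finset α) (hX : X ⊆ V) (hXcard : X.card = 2 * h - 1)
    (U : Finset α) (hU : U ⊆ X) (hUcard : U.card = h - 1)
    (hstar : ∀ y ∈ V \ X, insert y U ∈ K) :
    (¬ ∃ e ∈ complEdges V h K, e ∩ X ⊆ U ∧ h ≤ (e ∩ X).card) ∧
    (¬ ∃ e ∈ complEdges V h K, e ∩ X ⊆ X \ U ∧ h ≤ (e ∩ X).card) := by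
  constructor
  · rintro ⟨e, -, h1, h2⟩
    have := Finset.card_le_card h1
    omega
  · rintro ⟨e, he, h1, h2⟩
    simp only [complEdges, Finset.mem_image, Finset.mem_sdiff, Finset.mem_powersetCard] at he
    obtain ⟨B, ⟨⟨hBV, hBc⟩, hBK⟩, rfl⟩ := he
    have hUB : U ⊆ B := by
      intro u hu
      by_contra hb
      have h3 : u ∈ (V \ B) ∩ X := by
        simp [hb, hU hu, hX (hU hu)]
      exact (Finset.mem_sdiff.mp (h1 h3)).2 hu
    have hc : (X \ U).card = h := by
      rw [Finset.card_sdiff_of_subset hU]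
      omega
    have heq : (V \ B) ∩ X = X \ U :=
      Finset.eq_of_subset_of_card_le h1 (by omega)
    have hc1 : (B \ U).card = 1 := by
      rw [Finset.card_sdiff_of_subset hUB]
      omega
    obtain ⟨y, hy⟩ := Finset.card_eq_one.mp hc1
    have hyB : y ∈ B \ U := by simp [hy]
    rw [Finset.mem_sdiff] at hyB
    have hyX : y ∉ X := by
      intro hx
      have h4 : y ∈ (V \ B) ∩ X := by
        rw [heq]
        exact Finset.mem_sdiff.mpr ⟨hx, hyB.2⟩
      simp only [Finset.mem_inter, Finset.mem_sdiff] at h4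
      exact h4.1.2 hyB.1
    apply hBK
    have h5 : insert y U = B := by
      rw [Finset.insert_eq, ← hy, Finset.sdiff_union_of_subset hUB]
    rw [← h5]
    exact hstar y (Finset.mem_sdiff.mpr ⟨hBV hyB.1, hyX⟩)
end

section
/- Let h ≥ 2, let V be a set of size 3h−1, let K be a family of h-element subsets of V, and let H be the hypergraph on V whose edges are the sets V \ B where B ranges over the h-element subsets of V not in K. Let X ⊆ V with |X| = 2h, and suppose X = R ∪ S is a partition with |R| = |S| = h, R ∈ K, and S ∈ K. Then the coloring of X in which R is red and S is blue has no monochromatic trace edge of size at least h: there is no edge e of H with e ∩ X ⊆ R and |e ∩ X| ≥ h, and no edge e of H with e ∩ X ⊆ S and |e ∩ X| ≥ h. -/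
theorem stmt_7 {α : Type*} [DecidableEq α] (h : ℕ) (hh : 2 ≤ h)
    (V : Finset α) (hV : V.card = 3 * h - 1)
    (K : Finset (Finset α)) (hKsub : K ⊆ V.powersetCard h)
    (X : Finset α) (hX : X ⊆ V) (hXcard : X.card = 2 * h)
    (R S : Finset α) (hRS : X = R ∪ S) (hdisj : Disjoint R S)
    (hR : R.card = h) (hS : S.card = h) (hRK : R ∈ K) (hSK : S ∈ K) :
    (¬ ∃ e ∈ complEdges V h K, e ∩ X ⊆ R ∧ h ≤ (e ∩ X).card) ∧
    (¬ ∃ e ∈ complEdges V h K, e ∩ X ⊆ S ∧ h ≤ (e ∩ X).card) := by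
  have key : ∀ P Q : Finset α, X = P ∪ Q → Disjoint P Q → Q.card = h → Q ∈ K →
      ¬ ∃ e ∈ complEdges V h K, e ∩ X ⊆ P ∧ h ≤ (e ∩ X).card := by
    rintro P Q hPQ hd hQ hQK ⟨e, he, hsub, -⟩
    simp only [complEdges, Finset.mem_image, Finset.mem_sdiff, Finset.mem_powersetCard] at he
    obtain ⟨B, ⟨⟨-, hBc⟩, hBK⟩, rfl⟩ := he
    have hQB : Q ⊆ B := by
      intro x hx
      by_contra hxB
      have hxX : x ∈ X := by
        rw [hPQ]
        exact Finset.mem_union_right _ hx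
      have hxP : x ∈ P :=
        hsub (Finset.mem_inter.2 ⟨Finset.mem_sdiff.2 ⟨hX hxX, hxB⟩, hxX⟩)
      exact Finset.disjoint_left.1 hd hxP hx
    have hEq : Q = B := Finset.eq_of_subset_of_card_le hQB (by omega)
    exact hBK (hEq ▸ hQK)
  exact ⟨key R S hRS hdisj hS hSK,
    key S R (by rw [hRS, Finset.union_comm]) hdisj.symm hR hRK⟩
end

section
/- Let h ≥ 2, let V be a set of size 3h−1, let K be a family of h-element subsets of V, and let H be the hypergraph on V whose edges are the sets V \ B where B ranges over the h-element subsets of V not in K. Let X ⊆ V with |X| ≥ 2h+1, and let R ⊆ X be an h-element set with R ∈ K. Then the coloring of X in which R is red and X \ R is blue has no monochromatic trace edge of size at least h: there is no edge e of H with e ∩ X ⊆ R and |e ∩ X| ≥ h, and no edge e of H with e ∩ X ⊆ X \ R and |e ∩ X| ≥ h. -/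
theorem stmt_8 {α : Type*} [DecidableEq α] (h : ℕ) (hh : 2 ≤ h)
    (V : Finset α) (hV : V.card = 3 * h - 1)
    (K : Finset (Finset α)) (hKsub : K ⊆ V.powersetCard h)
    (X : Finset α) (hX : X ⊆ V) (hXcard : 2 * h + 1 ≤ X.card)
    (R : Finset α) (hR : R ⊆ X) (hRcard : R.card = h) (hRK : R ∈ K) :
    (¬ ∃ e ∈ complEdges V h K, e ∩ X ⊆ R ∧ h ≤ (e ∩ X).card) ∧
    (¬ ∃ e ∈ complEdges V h K, e ∩ X ⊆ X \ R ∧ h ≤ (e ∩ X).card) := by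
  constructor
  · rintro ⟨e, he, hs, -⟩
    simp only [complEdges, Finset.mem_image, Finset.mem_sdiff, Finset.mem_powersetCard] at he
    obtain ⟨B, ⟨⟨hBV, hBc⟩, hBK⟩, rfl⟩ := he
    have hsub : X ⊆ R ∪ B := by
      intro x hx
      by_cases hxB : x ∈ B
      · exact Finset.mem_union_right _ hxB
      · exact Finset.mem_union_left _ (hs (by simp [hx, hX hx, hxB]))
    have h1 := Finset.card_le_card hsub
    have h2 := Finset.card_union_le R B
    omega
  · rintro ⟨e, he, hs, -⟩
    simp only [complEdges, Finset.mem_image, Finset.mem_sdiff, Finset.mem_powersetCard] at he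
    obtain ⟨B, ⟨⟨hBV, hBc⟩, hBK⟩, rfl⟩ := he
    have hsub : R ⊆ B := by
      intro x hx
      by_contra hxB
      have h1 : x ∈ X \ R := hs (by simp [hR hx, hX (hR hx), hxB])
      exact (Finset.mem_sdiff.mp h1).2 hx
    have hEq : R = B := Finset.eq_of_subset_of_card_le hsub (by omega)
    exact hBK (hEq ▸ hRK)
end

section
/- For every integer h ≥ 9 there exists, on a vertex set V of size 3h−1, a family K of h-element subsets of V satisfying (K1), (K2) and (K3). -/
/-- `K` is a family of `h`-element subsets of `V` satisfying conditions
(K1), (K2) and (K3). -/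
def SatisfiesK {α : Type*} [DecidableEq α]
    (V : Finset α) (h : ℕ) (K : Finset (Finset α)) : Prop :=
  K ⊆ V.powersetCard h ∧
  -- (K1)
  (∀ A ∈ V.powersetCard (h - 1), ∃ v ∈ V \ A, insert v A ∉ K) ∧
  -- (K2)
  (∀ X ∈ V.powersetCard (2 * h), ∃ R ⊆ X, R.card = h ∧ R ∈ K ∧ X \ R ∈ K) ∧
  -- (K3)
  (∀ Y ∈ V.powersetCard h, ∃ U ⊆ V \ Y, U.card = h - 1 ∧ ∀ y ∈ Y, insert y U ∈ K)

open Classical in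
/-- probability of `P` for a `p`-random subset of `β` -/
noncomputable def PrK {β : Type*} [Fintype β] (p : ℝ) (P : Finset β → Prop) : ℝ :=
  ∑ K : Finset β, p ^ K.card * (1 - p) ^ (Fintype.card β - K.card) * (if P K then 1 else 0)

section prob
variable {β : Type*} [Fintype β] [DecidableEq β] {p : ℝ}

lemma PrK_true : PrK (β := β) p (fun _ => True) = 1 := by
  have := Fintype.sum_pow_mul_eq_add_pow β p (1 - p)
  simp [PrK] at *
  exact this

lemma PrK_mono (h0 : 0 ≤ p) (h1 : p ≤ 1) {P Q : Finset β → Prop} (h : ∀ K, P K → Q K) :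
    PrK p P ≤ PrK p Q := by
  have : 0 ≤ 1 - p := by linarith
  unfold PrK
  apply Finset.sum_le_sum
  intro K _
  apply mul_le_mul_of_nonneg_left _ (by positivity)
  have := h K
  split_ifs <;> simp_all

lemma PrK_or (h0 : 0 ≤ p) (h1 : p ≤ 1) (P Q : Finset β → Prop) :
    PrK p (fun K => P K ∨ Q K) ≤ PrK p P + PrK p Q := by
  have : 0 ≤ 1 - p := by linarith
  unfold PrK
  rw [← Finset.sum_add_distrib]
  apply Finset.sum_le_sum
  intro K _
  rw [← mul_add]
  apply mul_le_mul_of_nonneg_left _ (by positivity)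
  by_cases hP : P K <;> by_cases hQ : Q K <;> simp [hP, hQ]

lemma PrK_ex (h0 : 0 ≤ p) (h1 : p ≤ 1) {ι : Type*} (S : Finset ι) (P : ι → Finset β → Prop)
    (c : ℝ) (hc : ∀ i ∈ S, PrK p (P i) ≤ c) :
    PrK p (fun K => ∃ i ∈ S, P i K) ≤ S.card * c := by
  classical
  induction S using Finset.induction_on with
  | empty => simp [PrK]
  | insert a S ha ih =>
    have e : (fun K => ∃ i ∈ insert a S, P i K) = fun K => P a K ∨ ∃ i ∈ S, P i K := by
      funext K; simp
    rw [e, Finset.card_insert_of_notMem ha]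
    have := PrK_or h0 h1 (P a) (fun K => ∃ i ∈ S, P i K)
    have h2 := ih (fun i hi => hc i (Finset.mem_insert_of_mem hi))
    have h3 := hc a (Finset.mem_insert_self _ _)
    push_cast
    linarith

lemma PrK_exists {P : Finset β → Prop} (h : PrK p P < 1) : ∃ K, ¬ P K := by
  by_contra hc
  push Not at hc
  have : P = fun _ => True := by funext K; simp [hc K]
  rw [this, PrK_true] at h
  exact lt_irrefl _ h

lemma PrK_step {P : Finset β → Prop} (b : β) (hP : ∀ K, P (insert b K) ↔ P K) :
    PrK p (fun K => P K ∧ b ∈ K) = p * PrK p P := by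
  unfold PrK
  have hu : (Finset.univ : Finset (Finset β)) = (insert b (Finset.univ.erase b)).powerset := by
    rw [Finset.insert_erase (Finset.mem_univ b)]; simp
  rw [hu, Finset.sum_powerset_insert (by simp), Finset.sum_powerset_insert (by simp),
    ← Finset.sum_add_distrib, ← Finset.sum_add_distrib, Finset.mul_sum]
  apply Finset.sum_congr rfl
  intro t ht
  have hb : b ∉ t := fun h => by
    have := Finset.mem_powerset.1 ht h
    simp at this
  have hc : t.card < Fintype.card β := Finset.card_lt_univ_of_notMem hb
  obtain ⟨m, hm⟩ := Nat.exists_eq_add_of_lt hc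
  rw [Finset.card_insert_of_notMem hb]
  have e1 : Fintype.card β - t.card = m + 1 := by omega
  have e2 : Fintype.card β - (t.card + 1) = m := by omega
  rw [e1, e2]
  by_cases h : P t
  · simp [hP, h, hb]; ring
  · simp [hP, h]

lemma PrK_block (B : Finset β) {P : Finset β → Prop} (hP : ∀ b ∈ B, ∀ K, P (insert b K) ↔ P K) :
    PrK p (fun K => P K ∧ B ⊆ K) = p ^ B.card * PrK p P := by
  induction B using Finset.induction_on with
  | empty => simp
  | insert a S ha ih =>
    have e : (fun K => P K ∧ insert a S ⊆ K) = fun K => (P K ∧ S ⊆ K) ∧ a ∈ K := by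
      funext K; simp [Finset.insert_subset_iff]; tauto
    rw [e, PrK_step, ih, Finset.card_insert_of_notMem ha]
    · ring
    · intro b hb; exact hP b (Finset.mem_insert_of_mem hb)
    · intro K
      rw [hP a (Finset.mem_insert_self _ _), Finset.subset_insert_iff_of_notMem ha]

lemma PrK_sub (B : Finset β) : PrK p (fun K => B ⊆ K) = p ^ B.card := by
  have := PrK_block (p := p) B (P := fun _ => True) (by simp)
  simpa [PrK_true] using this

lemma PrK_blocks {ι : Type*} (I : Finset ι) (B : ι → Finset β) (k : ℕ)
    (hk : ∀ i ∈ I, (B i).card = k)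
    (hd : ∀ i ∈ I, ∀ j ∈ I, i ≠ j → Disjoint (B i) (B j)) :
    PrK p (fun K => ∀ i ∈ I, ¬ B i ⊆ K) = (1 - p ^ k) ^ I.card := by
  classical
  induction I using Finset.induction_on with
  | empty => simp [PrK_true]
  | insert a S ha ih =>
    have ih := ih (fun i hi => hk i (Finset.mem_insert_of_mem hi))
      (fun i hi j hj => hd i (Finset.mem_insert_of_mem hi) j (Finset.mem_insert_of_mem hj))
    have hb := PrK_block (p := p) (B a) (P := fun K => ∀ i ∈ S, ¬ B i ⊆ K) (by
      intro b hb K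
      apply forall₂_congr
      intro i hi
      rw [Finset.subset_insert_iff_of_notMem]
      intro hbi
      have := hd a (Finset.mem_insert_self _ _) i (Finset.mem_insert_of_mem hi)
        (by rintro rfl; exact ha hi)
      exact Finset.disjoint_left.1 this hb hbi)
    have hs : PrK p (fun K => ∀ i ∈ insert a S, ¬ B i ⊆ K) +
        PrK p (fun K => (∀ i ∈ S, ¬ B i ⊆ K) ∧ B a ⊆ K) = PrK p (fun K => ∀ i ∈ S, ¬ B i ⊆ K) := by
      unfold PrK
      rw [← Finset.sum_add_distrib]
      apply Finset.sum_congr rfl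
      intro K _
      rw [← mul_add]
      congr 1
      by_cases h1 : ∀ i ∈ S, ¬ B i ⊆ K <;> by_cases h2 : B a ⊆ K <;>
        simp only [Finset.forall_mem_insert, h1, h2] <;> simp
    rw [hb, ih, hk a (Finset.mem_insert_self _ _)] at hs
    rw [Finset.card_insert_of_notMem ha, pow_succ]
    linarith

end prob

lemma numM (h : ℕ) (hh : 1 ≤ h) :
    (Nat.choose (2 * (h+1) - 1) h) * (h + 1) = (2 * (2 * h + 1)) * Nat.choose (2 * h - 1) (h - 1) := by
  obtain ⟨m, rfl⟩ := Nat.exists_eq_add_of_le' hh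
  have a1 : 2 * (m + 1 + 1) - 1 = 2 * m + 3 := by omega
  have a2 : 2 * (m + 1) - 1 = 2 * m + 1 := by omega
  rw [a1, a2, Nat.add_sub_cancel]
  have h1 := Nat.add_one_mul_choose_eq (2*m+2) m
  have h2 := Nat.choose_mul_succ_eq (2*m+1) m
  have e : 2*m+1+1-m = m+2 := by omega
  rw [e] at h2
  simp only [show 2*m+2+1 = 2*m+3 by omega, show 2*m+1+1 = 2*m+2 by omega] at h1 h2
  apply Nat.eq_of_mul_eq_mul_right (show 0 < m + 1 by omega)
  nlinarith

lemma numN (h : ℕ) (hh : 1 ≤ h) :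
    (Nat.choose (3 * (h+1) - 1) h) * (2 * (h + 1) * (2 * h + 1)) =
      (3 * (3 * h + 2) * (3 * h + 1)) * Nat.choose (3 * h - 1) (h - 1) := by
  obtain ⟨m, rfl⟩ := Nat.exists_eq_add_of_le' hh
  have a1 : 3 * (m + 1 + 1) - 1 = 3 * m + 5 := by omega
  have a2 : 3 * (m + 1) - 1 = 3 * m + 2 := by omega
  rw [a1, a2, Nat.add_sub_cancel]
  have h1 := Nat.add_one_mul_choose_eq (3*m+4) m
  have h2 := Nat.choose_mul_succ_eq (3*m+3) m
  have h3 := Nat.choose_mul_succ_eq (3*m+2) m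
  have e : 3*m+3+1-m = 2*m+4 := by omega
  have e' : 3*m+2+1-m = 2*m+3 := by omega
  rw [e] at h2
  rw [e'] at h3
  simp only [show 3*m+4+1 = 3*m+5 by omega, show 3*m+3+1 = 3*m+4 by omega,
    show 3*m+2+1 = 3*m+3 by omega] at h1 h2 h3
  generalize (3*m+5).choose (m+1) = A at *
  generalize (3*m+4).choose m = B at *
  generalize (3*m+3).choose m = C at *
  generalize (3*m+2).choose m = D at *
  apply Nat.eq_of_mul_eq_mul_right (show 0 < m + 1 by omega)
  zify at *
  linear_combination (-(2 * (m + 2) * (2 * m + 3) : ℤ)) * h1 - (3*m+5:ℤ) * (2*m+3) * h2 - (3*m+5:ℤ) * (3*m+4) * h3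

lemma num_step (x N N' M M' C : ℝ) (hk : 0 ≤ x) (p1 : 0 ≤ N) (p2 : 0 ≤ M)
    (h1' : M' * (x + 9 + 1) = (2 * (2 * (x + 9) + 1)) * M)
    (h2' : N' * (2 * (x + 9 + 1) * (2 * (x + 9) + 1)) =
      (3 * (3 * (x + 9) + 2) * (3 * (x + 9) + 1)) * N)
    (i1 : N ≤ C) (i2 : N * (17.7 + 2 * x) ^ 2 ≤ 0.83 * M ^ 2) :
    N' ≤ 6.75 * C ∧ N' * (17.7 + 2 * (x + 1)) ^ 2 ≤ 0.83 * M' ^ 2 := by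
  have hN : N' ≤ 6.75 * N := by
    have hp : 0 < (2 * (x + 9 + 1) * (2 * (x + 9) + 1)) := by positivity
    apply le_of_mul_le_mul_right _ hp
    rw [h2']
    have : (3 * (3 * (x + 9) + 2) * (3 * (x + 9) + 1)) ≤ 6.75 * (2 * (x + 9 + 1) * (2 * (x + 9) + 1)) := by
      nlinarith
    nlinarith
  have hM : 3.8 * M ≤ M' := by
    have hp : 0 < x + 9 + 1 := by positivity
    apply le_of_mul_le_mul_right _ hp
    rw [h1']
    nlinarith
  constructor
  · linarith
  · have a : (17.7 + 2 * (x + 1)) ^ 2 ≤ 2 * (17.7 + 2 * x) ^ 2 := by nlinarith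
    have b : (3.8 * M) ^ 2 ≤ M' ^ 2 := by gcongr
    calc N' * (17.7 + 2 * (x + 1)) ^ 2 ≤ (6.75 * N) * (2 * (17.7 + 2 * x) ^ 2) := by gcongr
      _ = 13.5 * (N * (17.7 + 2 * x) ^ 2) := by ring
      _ ≤ 13.5 * (0.83 * M ^ 2) := by gcongr
      _ ≤ 0.83 * (3.8 * M) ^ 2 := by nlinarith [sq_nonneg M]
      _ ≤ _ := by gcongr

lemma numeric (k : ℕ) :
    ((Nat.choose (3 * (k + 9) - 1) (k + 9 - 1) : ℝ) ≤ 1562275 * 6.75 ^ k) ∧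
    (Nat.choose (3 * (k + 9) - 1) (k + 9 - 1) : ℝ) * (17.7 + 2 * k) ^ 2 ≤
      0.83 * (Nat.choose (2 * (k + 9) - 1) (k + 9 - 1) : ℝ) ^ 2 := by
  induction k with
  | zero =>
    have e1 : Nat.choose (3 * (0 + 9) - 1) (0 + 9 - 1) = 1562275 := by decide +kernel
    have e2 : Nat.choose (2 * (0 + 9) - 1) (0 + 9 - 1) = 24310 := by decide +kernel
    rw [e1, e2]
    norm_num
  | succ k ih =>
    have h1 := numM (k + 9) (by omega)
    have h2 := numN (k + 9) (by omega)
    have e : k + 1 + 9 = (k + 9) + 1 := by omega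
    rw [e, Nat.add_sub_cancel]
    obtain ⟨i1, i2⟩ := ih
    have h1' : ((2 * (k + 9 + 1) - 1).choose (k + 9) : ℝ) * (k + 9 + 1) =
      (2 * (2 * (k + 9) + 1)) * ((2 * (k + 9) - 1).choose (k + 9 - 1) : ℝ) := by exact_mod_cast h1
    have h2' : ((3 * (k + 9 + 1) - 1).choose (k + 9) : ℝ) * (2 * (k + 9 + 1) * (2 * (k + 9) + 1)) =
      (3 * (3 * (k + 9) + 2) * (3 * (k + 9) + 1)) * ((3 * (k + 9) - 1).choose (k + 9 - 1) : ℝ) := by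
      exact_mod_cast h2
    have key := num_step k _ _ _ _ (1562275 * 6.75 ^ k) (Nat.cast_nonneg k) (Nat.cast_nonneg _)
      (Nat.cast_nonneg _) h1' h2' i1 i2
    rw [pow_succ, Nat.cast_succ]
    exact ⟨key.1.trans_eq (by ring), key.2⟩

lemma exp_bound (k : ℕ) : 18.75 * (1562275 * 6.75 ^ k : ℝ) ≤ Real.exp (17.7 + 2 * k) := by
  have e1 : (2.718 : ℝ) ≤ Real.exp 1 := by have := Real.exp_one_gt_d9; linarith
  have e2 : (6.75 : ℝ) ≤ Real.exp 2 := by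
    have : Real.exp 2 = Real.exp 1 ^ 2 := by rw [← Real.exp_nat_mul]; norm_num
    rw [this]
    calc (6.75:ℝ) ≤ 2.718 ^ 2 := by norm_num
      _ ≤ _ := by gcongr
  have e3 : (2.718 : ℝ) ^ 17 ≤ Real.exp 17 := by
    have : Real.exp 17 = Real.exp 1 ^ 17 := by rw [← Real.exp_nat_mul]; norm_num
    rw [this]; gcongr
  have e4 : (1.7 : ℝ) ≤ Real.exp 0.7 := by have := Real.add_one_le_exp (0.7:ℝ); linarith
  have : Real.exp (17.7 + 2 * k) = Real.exp 17 * Real.exp 0.7 * Real.exp 2 ^ k := by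
    rw [← Real.exp_nat_mul, ← Real.exp_add, ← Real.exp_add]; congr 1; ring
  rw [this]
  calc 18.75 * (1562275 * 6.75 ^ k : ℝ) = (18.75 * 1562275) * 6.75 ^ k := by ring
    _ ≤ (2.718 ^ 17 * 1.7) * 6.75 ^ k :=
      mul_le_mul_of_nonneg_right (by norm_num) (by positivity)
    _ ≤ _ := by gcongr

/-- the choice of `p` -/
lemma choose_p (h : ℕ) (hh : 9 ≤ h) : ∃ p : ℝ, 0 ≤ p ∧ p ≤ 1 ∧
    (Nat.choose (3 * h - 1) (h - 1) : ℝ) * p ^ (2 * h) +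
      3 * Nat.choose (3 * h - 1) (h - 1) * (1 - p ^ h) ^ (Nat.choose (2 * h - 1) (h - 1)) < 1 := by
  obtain ⟨k, rfl⟩ := Nat.exists_eq_add_of_le' hh
  obtain ⟨h1, h2⟩ := numeric k
  have h3 := exp_bound k
  have hN1 : (1:ℝ) ≤ (Nat.choose (3 * (k + 9) - 1) (k + 9 - 1) : ℝ) := by
    exact_mod_cast Nat.choose_pos (by omega)
  generalize (Nat.choose (3 * (k + 9) - 1) (k + 9 - 1) : ℝ) = N at *
  generalize (Nat.choose (2 * (k + 9) - 1) (k + 9 - 1)) = M at *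
  have hN0 : 0 < N := by linarith
  set q := Real.sqrt (0.83 / N) with hq
  have hq0 : 0 ≤ q := Real.sqrt_nonneg _
  have hqs : q ^ 2 = 0.83 / N := Real.sq_sqrt (by positivity)
  have hq1 : q ≤ 1 := by
    rw [hq, Real.sqrt_le_one, div_le_one hN0]; linarith
  have hpq : (q ^ ((k + 9 : ℕ) : ℝ)⁻¹) ^ (k + 9) = q := Real.rpow_inv_natCast_pow hq0 (by omega)
  refine ⟨q ^ ((k + 9 : ℕ) : ℝ)⁻¹, Real.rpow_nonneg hq0 _, Real.rpow_le_one hq0 hq1 (by positivity), ?_⟩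
  rw [mul_comm 2, pow_mul, hpq, hqs]
  have a1 : N * (0.83 / N) = 0.83 := by field_simp
  rw [a1]
  have a2 : 17.7 + 2 * k ≤ q * M := by
    apply le_of_sq_le_sq _ (by positivity)
    rw [mul_pow, hqs, div_mul_eq_mul_div, le_div_iff₀ hN0]
    linarith
  have a3 : (1 - q) ^ M ≤ Real.exp (-(q * M)) := by
    calc (1 - q) ^ M ≤ Real.exp (-q) ^ M :=
          pow_le_pow_left₀ (by linarith) (Real.one_sub_le_exp_neg q) M
      _ = _ := by rw [← Real.exp_nat_mul]; congr 1; ring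
  have a4 : 18.75 * N ≤ Real.exp (q * M) := by
    have := Real.exp_le_exp.2 a2
    linarith
  have a5 : 18.75 * N * (1 - q) ^ M ≤ 1 := by
    calc 18.75 * N * (1 - q) ^ M ≤ Real.exp (q * M) * Real.exp (-(q * M)) := by
          apply mul_le_mul a4 a3 (pow_nonneg (by linarith) _) (Real.exp_pos _).le
      _ = 1 := by rw [← Real.exp_add]; simp
  linarith

theorem stmt_9 (h : ℕ) (hh : 9 ≤ h) :
    ∃ K : Finset (Finset (Fin (3 * h - 1))),
      SatisfiesK (Finset.univ : Finset (Fin (3 * h - 1))) h K := by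
  obtain ⟨p, hp0, hp1, hp⟩ := choose_p h hh
  set N := Nat.choose (3 * h - 1) (h - 1) with hN
  set M := Nat.choose (2 * h - 1) (h - 1) with hM
  have hph : p ^ h ≤ 1 := pow_le_one₀ hp0 hp1
  set V := (Finset.univ : Finset (Fin (3 * h - 1))) with hV
  have hVc : V.card = 3 * h - 1 := by simp [hV]
  have c1 : (V.powersetCard (h - 1)).card = N := by simp [hVc]; rfl
  have c2 : (V.powersetCard (2 * h)).card = N := by
    rw [Finset.card_powersetCard, hVc, hN]
    apply Nat.choose_symm_of_eq_add; omega
  have c3 : (V.powersetCard h).card = 2 * N := by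
    rw [Finset.card_powersetCard, hVc, hN]
    have := Nat.choose_succ_right_eq (3 * h - 1) (h - 1)
    rw [show h - 1 + 1 = h by omega, show 3 * h - 1 - (h - 1) = 2 * h by omega] at this
    apply Nat.eq_of_mul_eq_mul_right (show 0 < h by omega)
    rw [this]; ring
  -- (K1)
  have b1 := PrK_ex hp0 hp1 (V.powersetCard (h - 1))
    (fun A (K : Finset (Finset (Fin (3 * h - 1)))) => (V \ A).image (fun v => insert v A) ⊆ K)
    (p ^ (2 * h)) (by
      intro A hA
      rw [Finset.mem_powersetCard] at hA
      rw [PrK_sub, Finset.card_image_of_injOn, Finset.card_sdiff_of_subset hA.1, hA.2, hVc,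
        show 3 * h - 1 - (h - 1) = 2 * h by omega]
      intro x hx y hy hxy
      simp only [Finset.coe_sdiff, Set.mem_sdiff, Finset.mem_coe] at hx hy
      exact (Finset.insert_inj hx.2).1 hxy)
  -- (K2)
  have b2 := PrK_ex hp0 hp1 (V.powersetCard (2 * h))
    (fun X (K : Finset (Finset (Fin (3 * h - 1)))) =>
      ∀ R ∈ X.powersetCard h, ¬ ({R, X \ R} : Finset (Finset _)) ⊆ K)
    ((1 - p ^ h) ^ M) (by
      intro X hX
      rw [Finset.mem_powersetCard] at hX
      obtain ⟨x, hx⟩ : X.Nonempty := Finset.card_pos.1 (by omega)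
      have key := PrK_blocks (p := p) ((X.erase x).powersetCard (h - 1))
        (fun R => ({insert x R, X \ insert x R} : Finset (Finset (Fin (3 * h - 1))))) 2 (by
          intro R hR
          apply Finset.card_pair
          intro he
          have : x ∈ X \ insert x R := he ▸ Finset.mem_insert_self x R
          simp at this) (by
          intro R hR S hS hRS
          rw [Finset.mem_powersetCard] at hR hS
          have hxR : x ∉ R := fun h => by simpa using hR.1 h
          have hxS : x ∉ S := fun h => by simpa using hS.1 h
          have n1 : insert x R ≠ insert x S := by
            intro e
            apply hRS
            rw [← Finset.erase_insert hxR, e, Finset.erase_insert hxS]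
          have n2 : insert x R ≠ X \ insert x S := by
            intro e
            have : x ∈ X \ insert x S := e ▸ Finset.mem_insert_self x R
            simp at this
          have n3 : X \ insert x R ≠ insert x S := by
            intro e
            have : x ∈ X \ insert x R := e ▸ Finset.mem_insert_self x S
            simp at this
          have sub : ∀ T ⊆ X.erase x, insert x T ⊆ X := fun T hT =>
            Finset.insert_subset hx (hT.trans (Finset.erase_subset _ _))
          have n4 : X \ insert x R ≠ X \ insert x S := by
            intro e
            apply n1
            rw [← Finset.sdiff_sdiff_eq_self (sub R hR.1), e,
              Finset.sdiff_sdiff_eq_self (sub S hS.1)]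
          simp [n1, n2.symm, n3.symm, n4, n1.symm, n4.symm])
      rw [Finset.card_powersetCard, Finset.card_erase_of_mem hx, hX.2, ← hM] at key
      refine le_trans (PrK_mono (Q := fun K => ∀ i ∈ (X.erase x).powersetCard (h - 1),
        ¬ ({insert x i, X \ insert x i} : Finset (Finset _)) ⊆ K) hp0 hp1 ?_)
        (key.le.trans ?_)
      · intro K hK R hR
        rw [Finset.mem_powersetCard] at hR
        have hxR : x ∉ R := fun h => by simpa using hR.1 h
        apply hK
        rw [Finset.mem_powersetCard, Finset.card_insert_of_notMem hxR]
        exact ⟨Finset.insert_subset hx (hR.1.trans (Finset.erase_subset _ _)), by omega⟩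
      · apply pow_le_pow_left₀
        · have : p ^ 2 ≤ 1 := pow_le_one₀ hp0 hp1
          linarith
        · have : p ^ h ≤ p ^ 2 := pow_le_pow_of_le_one hp0 hp1 (by omega)
          linarith)
  -- (K3)
  have b3 := PrK_ex hp0 hp1 (V.powersetCard h)
    (fun Y (K : Finset (Finset (Fin (3 * h - 1)))) =>
      ∀ U ∈ (V \ Y).powersetCard (h - 1), ¬ Y.image (fun y => insert y U) ⊆ K)
    ((1 - p ^ h) ^ M) (by
      intro Y hY
      rw [Finset.mem_powersetCard] at hY
      have nm : ∀ U ∈ (V \ Y).powersetCard (h - 1), ∀ y ∈ Y, y ∉ U := by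
        intro U hU y hy hyU
        have := (Finset.mem_powersetCard.1 hU).1 hyU
        simp [hy] at this
      rw [PrK_blocks (p := p) _ _ h]
      · rw [Finset.card_powersetCard, Finset.card_sdiff_of_subset hY.1, hY.2, hVc,
          show 3 * h - 1 - h = 2 * h - 1 by omega]
      · intro U hU
        rw [Finset.card_image_of_injOn, hY.2]
        intro a ha b hb hab
        exact (Finset.insert_inj (nm U hU a ha)).1 hab
      · intro U hU W hW hUW
        rw [Finset.disjoint_left]
        intro S h1 h2
        simp only [Finset.mem_image] at h1 h2
        obtain ⟨a, ha, rfl⟩ := h1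
        obtain ⟨b, hb, hab⟩ := h2
        apply hUW
        have e1 : insert a U \ Y = U := by
          rw [Finset.insert_sdiff_of_mem _ ha, Finset.sdiff_eq_self_iff_disjoint,
            Finset.disjoint_right]
          exact nm U hU
        have e2 : insert b W \ Y = W := by
          rw [Finset.insert_sdiff_of_mem _ hb, Finset.sdiff_eq_self_iff_disjoint,
            Finset.disjoint_right]
          exact nm W hW
        rw [← e1, ← e2, hab])
  rw [c1] at b1
  rw [c2] at b2
  rw [c3] at b3
  have o1 := PrK_or hp0 hp1 _ _ |>.trans (add_le_add b2 b3)
  have o2 := PrK_or hp0 hp1 _ _ |>.trans (add_le_add b1 o1)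
  obtain ⟨K, hK⟩ := PrK_exists (lt_of_le_of_lt o2 (by push_cast; linarith))
  simp only [not_or] at hK
  obtain ⟨k1, k2, k3⟩ := hK
  refine ⟨K ∩ V.powersetCard h, Finset.inter_subset_right, ?_, ?_, ?_⟩
  · intro A hA
    by_contra hc
    push Not at hc
    apply k1
    refine ⟨A, hA, ?_⟩
    intro S hS
    obtain ⟨v, hv, rfl⟩ := Finset.mem_image.1 hS
    exact (Finset.mem_inter.1 (hc v hv)).1
  · intro X hX
    by_contra hc
    apply k2
    refine ⟨X, hX, ?_⟩
    intro R hR hRK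
    rw [Finset.mem_powersetCard] at hR hX
    apply hc
    refine ⟨R, hR.1, hR.2, ?_, ?_⟩
    · rw [Finset.mem_inter, Finset.mem_powersetCard]
      exact ⟨hRK (by simp), Finset.subset_univ _, hR.2⟩
    · rw [Finset.mem_inter, Finset.mem_powersetCard, Finset.card_sdiff_of_subset hR.1]
      exact ⟨hRK (by simp), Finset.subset_univ _, by omega⟩
  · intro Y hY
    by_contra hc
    apply k3
    refine ⟨Y, hY, ?_⟩
    intro U hU hUK
    rw [Finset.mem_powersetCard] at hU
    apply hc
    refine ⟨U, hU.1, hU.2, ?_⟩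
    intro y hy
    have hyU : y ∉ U := fun h => by
      have := hU.1 h
      simp [hy] at this
    rw [Finset.mem_inter, Finset.mem_powersetCard, Finset.card_insert_of_notMem hyU]
    exact ⟨hUK (Finset.mem_image_of_mem _ hy), Finset.subset_univ _, by omega⟩
end

section
/- For every integer h with 4 ≤ h ≤ 8 there exists, on a vertex set V of size 3h−1, a family K of h-element subsets of V satisfying (K1), (K2) and (K3). -/
section Aux
variable {α : Type*} [LinearOrder α]

/-- the elements of `S`, other than `o`, that have no mate in `S` -/
def DD (m : α → α) (o : α) (S : Finset α) : Finset α :=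
  S.filter (fun x => x ≠ o ∧ (m x = x ∨ m x ∉ S))

/-- lower elements of the full pairs in `S` -/
def LL (m : α → α) (S : Finset α) : Finset α :=
  S.filter (fun x => x < m x ∧ m x ∈ S)

lemma card_image_m (m : α → α) (hm : ∀ x, m (m x) = x) (S : Finset α) :
    (S.image m).card = S.card :=
  Finset.card_image_of_injective _ (fun a b hab => by rw [← hm a, ← hm b, hab])

lemma card_pairs (m : α → α) (hm : ∀ x, m (m x) = x) (o : α) (S : Finset α) (ho : o ∉ S) :
    S.card = 2 * (LL m S).card + (DD m o S).card := by
  have h1 : S = (LL m S ∪ (LL m S).image m) ∪ DD m o S := by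
    ext x
    simp only [LL, DD, Finset.mem_union, Finset.mem_filter, Finset.mem_image]
    constructor
    · intro hx
      have hxo : x ≠ o := fun e => ho (e ▸ hx)
      by_cases h2 : m x ∈ S
      · rcases lt_trichotomy x (m x) with h | h | h
        · exact Or.inl (Or.inl ⟨hx, h, h2⟩)
        · exact Or.inr ⟨hx, hxo, Or.inl h.symm⟩
        · exact Or.inl (Or.inr ⟨m x, ⟨h2, by rwa [hm], by rwa [hm]⟩, hm x⟩)
      · exact Or.inr ⟨hx, hxo, Or.inr h2⟩
    · rintro ((h | ⟨y, h, rfl⟩) | h)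
      · exact h.1
      · exact h.2.2
      · exact h.1
  have d1 : Disjoint (LL m S) ((LL m S).image m) := by
    rw [Finset.disjoint_left]
    intro x hx hx'
    simp only [LL, Finset.mem_filter, Finset.mem_image] at hx hx'
    obtain ⟨y, hy, rfl⟩ := hx'
    have := hx.2.1
    rw [hm] at this
    exact lt_asymm this hy.2.1
  have d2 : Disjoint (LL m S ∪ (LL m S).image m) (DD m o S) := by
    rw [Finset.disjoint_left]
    intro x hx hx'
    simp only [LL, DD, Finset.mem_union, Finset.mem_filter, Finset.mem_image] at hx hx'
    obtain ⟨_, _, h3⟩ := hx'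
    rcases hx with h | ⟨y, hy, rfl⟩
    · rcases h3 with h3 | h3
      · exact absurd h.2.1 (by rw [h3]; exact lt_irrefl _)
      · exact h3 h.2.2
    · rw [hm] at h3
      rcases h3 with h3 | h3
      · exact absurd hy.2.1 (by rw [← h3]; exact lt_irrefl _)
      · exact h3 hy.1
  conv_lhs => rw [h1]
  rw [Finset.card_union_of_disjoint d2, Finset.card_union_of_disjoint d1, card_image_m m hm]
  ring

/-- splitting an even set into two halves without full pairs -/
lemma split_even (m : α → α) (hm : ∀ x, m (m x) = x) (o : α) (S : Finset α) (ho : o ∉ S)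
    (k : ℕ) (hk : S.card = 2 * k) :
    ∃ R ⊆ S, R.card = k ∧ DD m o R = R ∧ DD m o (S \ R) = S \ R := by
  have hc := card_pairs m hm o S ho
  have hsub : (LL m S).image m ⊆ S := by
    intro x hx
    simp only [LL, Finset.mem_filter, Finset.mem_image] at hx
    obtain ⟨y, hy, rfl⟩ := hx
    exact hy.2.2
  have hs2 : LL m S ⊆ S \ (LL m S).image m := by
    intro x hx
    simp only [LL, Finset.mem_filter, Finset.mem_image, Finset.mem_sdiff] at hx ⊢
    refine ⟨hx.1, ?_⟩
    rintro ⟨y, hy, rfl⟩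
    have := hx.2.1
    rw [hm] at this
    exact lt_asymm this hy.2.1
  have hcs : (S \ (LL m S).image m).card = S.card - (LL m S).card := by
    rw [Finset.card_sdiff_of_subset hsub, card_image_m m hm]
  obtain ⟨R, hR1, hR2, hR3⟩ := Finset.exists_subsuperset_card_eq (n := k) hs2
    (by omega) (by omega)
  have hRS : R ⊆ S := hR2.trans Finset.sdiff_subset
  have hup : ∀ x ∈ S, m x ∈ S → x < m x → x ∈ R ∧ m x ∉ R := by
    intro x hx hmx hlt
    have hxL : x ∈ LL m S := by simp [LL, hx, hmx, hlt]
    refine ⟨hR1 hxL, fun h => ?_⟩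
    exact (Finset.mem_sdiff.1 (hR2 h)).2 (Finset.mem_image_of_mem m hxL)
  refine ⟨R, hRS, hR3, ?_, ?_⟩
  · refine Finset.filter_true_of_mem fun x hx => ⟨fun e => ho (e ▸ hRS hx), ?_⟩
    by_contra hcon
    push Not at hcon
    rcases lt_or_gt_of_ne hcon.1 with h | h
    · have := hup (m x) (hRS hcon.2) (by rw [hm]; exact hRS hx) (by rwa [hm])
      rw [hm] at this
      exact this.2 hx
    · exact (hup x (hRS hx) (hRS hcon.2) h).2 hcon.2
  · refine Finset.filter_true_of_mem fun x hx => ?_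
    rw [Finset.mem_sdiff] at hx
    refine ⟨fun e => ho (e ▸ hx.1), ?_⟩
    by_contra hcon
    simp only [Finset.mem_sdiff] at hcon
    push Not at hcon
    obtain ⟨h1, h2, h3⟩ := hcon
    rcases lt_or_gt_of_ne h1 with h | h
    · exact h3 (hup (m x) h2 (by rw [hm]; exact hx.1) (by rwa [hm])).1
    · exact hx.2 (hup x hx.1 h2 h).1

lemma two_le_DD (m : α → α) (o : α) (S : Finset α) (a b : α) (hab : a ≠ b)
    (ha : a ∈ DD m o S) (hb : b ∈ DD m o S) : 2 ≤ (DD m o S).card := by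
  have : ({a, b} : Finset α) ⊆ DD m o S := by
    intro x hx
    simp only [Finset.mem_insert, Finset.mem_singleton] at hx
    rcases hx with rfl | rfl <;> assumption
  have h2 := Finset.card_le_card this
  rwa [Finset.card_pair hab] at h2

/-- a union of `k` full pairs in `C`. -/
lemma exists_union (m : α → α) (hm : ∀ x, m (m x) = x) (C : Finset α)
    (k : ℕ) (hk : k ≤ (LL m C).card) :
    ∃ T ⊆ C, T.card = 2 * k ∧ ∀ x ∈ T, m x ∈ T ∧ m x ≠ x := by
  obtain ⟨L, hL, hLk⟩ := Finset.exists_subset_card_eq hk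
  have hL' : ∀ x ∈ L, x ∈ C ∧ x < m x ∧ m x ∈ C := by
    intro x hx
    simpa [LL] using hL hx
  refine ⟨L ∪ L.image m, ?_, ?_, ?_⟩
  · intro x hx
    simp only [Finset.mem_union, Finset.mem_image] at hx
    rcases hx with h | ⟨y, hy, rfl⟩
    · exact (hL' x h).1
    · exact (hL' y hy).2.2
  · rw [Finset.card_union_of_disjoint, card_image_m m hm, hLk]
    · ring
    · rw [Finset.disjoint_left]
      intro x hx hx'
      rw [Finset.mem_image] at hx'
      obtain ⟨y, hy, rfl⟩ := hx'
      have := (hL' _ hx).2.1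
      rw [hm] at this
      exact lt_asymm this (hL' y hy).2.1
  · intro x hx
    simp only [Finset.mem_union, Finset.mem_image] at hx ⊢
    rcases hx with h | ⟨y, hy, rfl⟩
    · exact ⟨Or.inr ⟨x, h, rfl⟩, (hL' x h).2.1.ne'⟩
    · rw [hm]
      exact ⟨Or.inl hy, (hL' y hy).2.1.ne⟩

/-- choose an element of `T`, equal to `z` if `z ∈ T`. -/
lemma exists_pick (T : Finset α) (z : α) (hT : T.Nonempty) :
    ∃ t ∈ T, z ∉ T.erase t := by
  by_cases hz : z ∈ T
  · exact ⟨z, hz, by simp⟩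
  · obtain ⟨t, ht⟩ := hT
    exact ⟨t, ht, fun h => hz (Finset.mem_of_mem_erase h)⟩

/-- Certificate for the key lemma. -/
lemma cert (m : α → α) (hm : ∀ x, m (m x) = x) (o : α) (C U : Finset α) (ho : o ∉ C)
    (hUC : U ⊆ C) (t b : α) (htC : t ∈ C) (htU : t ∉ U) (hmt : m t ∈ U)
    (hU : ∀ x ∈ U, m x ∈ C) (hbC : b ∈ C) (hbU : b ∉ U) (hbt : b ≠ t)
    (hb : m b = b ∨ m b ∉ C \ U) :
    (∀ y, y ∉ C → y ≠ o → 2 ≤ (DD m o (insert y U)).card) ∧ 2 ≤ (DD m o (C \ U)).card := by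
  constructor
  · intro y hy hyo
    have hmy : m y ∉ U := fun h => hy (by simpa [hm] using hU _ h)
    refine two_le_DD m o _ y (m t) ?_ ?_ ?_
    · rintro rfl
      exact hy (hUC hmt)
    · simp only [DD, Finset.mem_filter, Finset.mem_insert, true_or, true_and]
      refine ⟨hyo, ?_⟩
      by_cases h : m y = y
      · exact Or.inl h
      · exact Or.inr (by tauto)
    · simp only [DD, Finset.mem_filter, Finset.mem_insert, hm]
      refine ⟨Or.inr hmt, fun e => ho (e ▸ hUC hmt), Or.inr ?_⟩
      rintro (rfl | h)
      · exact hy htC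
      · exact htU h
  · refine two_le_DD m o _ b t hbt ?_ ?_
    · simp only [DD, Finset.mem_filter]
      exact ⟨Finset.mem_sdiff.2 ⟨hbC, hbU⟩, fun e => ho (e ▸ hbC), hb⟩
    · simp only [DD, Finset.mem_filter]
      exact ⟨Finset.mem_sdiff.2 ⟨htC, htU⟩, fun e => ho (e ▸ htC),
        Or.inr fun h => (Finset.mem_sdiff.1 h).2 hmt⟩

variable [Fintype α]

lemma key (m : α → α) (hm : ∀ x, m (m x) = x) (o z : α) (hmo : m o = o) (hz : m z ≠ z)
    (h : ℕ) (hh : 4 ≤ h) (hcard : Fintype.card α = 3 * h - 1)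
    (hfix : (h % 2 = 0 ∧ ∀ x, m x = x → x = o) ∨
      (h % 2 = 1 ∧ ∃ w, w ≠ o ∧ m w = w ∧ ∀ x, m x = x → x = o ∨ x = w))
    (C : Finset α) (ho : o ∉ C) (hC : C.card = 2 * h - 1) :
    ∃ U ⊆ C, U.card = h - 1 ∧ z ∉ U ∧ (DD m o U).card ≤ 2 ∧
      (∀ y, y ∉ C → y ≠ o → 2 ≤ (DD m o (insert y U)).card) ∧ 2 ≤ (DD m o (C \ U)).card := by
  have hp := card_pairs m hm o C ho
  have hcomp : (Finset.univ \ insert o C).card = h - 1 := by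
    rw [Finset.card_sdiff_of_subset (Finset.subset_univ _), Finset.card_univ, hcard,
      Finset.card_insert_of_notMem ho, hC]
    omega
  -- mates of unmatched elements
  have hmate : ∀ x ∈ DD m o C, m x ≠ x → m x ∈ Finset.univ \ insert o C := by
    intro x hx hne
    simp only [DD, Finset.mem_filter] at hx
    simp only [Finset.mem_sdiff, Finset.mem_univ, true_and, Finset.mem_insert, not_or]
    refine ⟨fun e => hx.2.1 ?_, ?_⟩
    · rw [← hm x, e, hmo]
    · tauto
  rcases hfix with ⟨hpar, hfix⟩ | ⟨hpar, w, hwo, hw, hfix⟩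
  · have hDle : (DD m o C).card ≤ h - 1 := by
      rw [← hcomp, ← card_image_m m hm (DD m o C)]
      apply Finset.card_le_card
      intro x hx
      rw [Finset.mem_image] at hx
      obtain ⟨y, hy, rfl⟩ := hx
      refine hmate y hy fun e => ?_
      have := hfix y e
      simp [DD] at hy
      tauto
    obtain ⟨T, hTC, hTk, hT⟩ := exists_union m hm C (h / 2) (by omega)
    obtain ⟨t, htT, hzt⟩ := exists_pick T z (Finset.card_pos.1 (by omega))
    have hDpos : (DD m o C).Nonempty := Finset.card_pos.1 (by omega)
    obtain ⟨b, hb⟩ := hDpos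
    have hb' := hb
    simp only [DD, Finset.mem_filter] at hb'
    have hbT : b ∉ T := fun hbT => by
      have h1 := hT b hbT
      have h2 := hTC h1.1
      tauto
    refine ⟨T.erase t, (Finset.erase_subset _ _).trans hTC, ?_, hzt, ?_, ?_⟩
    · rw [Finset.card_erase_of_mem htT]; omega
    · have : DD m o (T.erase t) ⊆ {m t} := by
        intro x hx
        simp only [DD, Finset.mem_filter, Finset.mem_erase, Finset.mem_singleton] at hx ⊢
        obtain ⟨⟨h1, h2⟩, h3, h4⟩ := hx
        have h5 := hT x h2
        have : m x = t := by tauto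
        rw [← this, hm]
      exact (Finset.card_le_card this).trans (by simp)
    · refine cert m hm o C _ ho ((Finset.erase_subset _ _).trans hTC) t b (hTC htT) (by simp)
        ?_ ?_ hb'.1 ?_ ?_ ?_
      · exact Finset.mem_erase.2 ⟨(hT t htT).2, (hT t htT).1⟩
      · intro x hx
        exact hTC (hT x (Finset.mem_of_mem_erase hx)).1
      · exact fun h => hbT (Finset.mem_of_mem_erase h)
      · rintro rfl; exact hbT htT
      · rcases hb'.2.2 with h | h
        · exact Or.inl h
        · exact Or.inr fun h' => h (Finset.mem_sdiff.1 h').1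
  · by_cases hL : (h + 1) / 2 ≤ (LL m C).card
    · obtain ⟨T, hTC, hTk, hT⟩ := exists_union m hm C ((h + 1) / 2) hL
      obtain ⟨t, htT, hzt⟩ := exists_pick T z (Finset.card_pos.1 (by omega))
      have : ∃ b ∈ T, b ∉ ({t, m t} : Finset α) := by
        by_contra hcon
        push Not at hcon
        have h1 := Finset.card_le_card (show T ⊆ {t, m t} from hcon)
        have h2 : ({t, m t} : Finset α).card ≤ 2 := Finset.card_le_two
        omega
      obtain ⟨b, hbT, hb⟩ := this
      simp only [Finset.mem_insert, Finset.mem_singleton, not_or] at hb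
      have hsub : (T.erase t).erase b ⊆ T :=
        (Finset.erase_subset _ _).trans (Finset.erase_subset _ _)
      refine ⟨(T.erase t).erase b, hsub.trans hTC, ?_,
        fun h => hzt (Finset.mem_of_mem_erase h), ?_, ?_⟩
      · rw [Finset.card_erase_of_mem (Finset.mem_erase.2 ⟨hb.1, hbT⟩),
          Finset.card_erase_of_mem htT]
        omega
      · have : DD m o ((T.erase t).erase b) ⊆ {m t, m b} := by
          intro x hx
          simp only [DD, Finset.mem_filter, Finset.mem_erase, Finset.mem_insert,
            Finset.mem_singleton] at hx ⊢
          obtain ⟨⟨h1, h2, h3⟩, h4, h5⟩ := hx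
          have h6 := hT x h3
          have : m x = t ∨ m x = b := by tauto
          rcases this with h | h
          · left; rw [← h, hm]
          · right; rw [← h, hm]
        exact (Finset.card_le_card this).trans Finset.card_le_two
      · refine cert m hm o C _ ho (hsub.trans hTC) t b (hTC htT) (by simp)
          ?_ ?_ (hTC hbT) (by simp) hb.1 ?_
        · exact Finset.mem_erase.2 ⟨fun e => hb.2 e.symm,
            Finset.mem_erase.2 ⟨(hT t htT).2, (hT t htT).1⟩⟩
        · intro x hx
          exact hTC (hT x (hsub hx)).1
        · right
          intro hmem
          apply (Finset.mem_sdiff.1 hmem).2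
          simp only [Finset.mem_erase]
          refine ⟨(hT b hbT).2, fun e => hb.2 ?_, (hT b hbT).1⟩
          rw [← e, hm]
    · -- few pairs : the fixed point lies in `C`
      have himg : ((DD m o C).erase w).image m ⊆ (Finset.univ \ insert o C).erase w := by
        intro x hx
        rw [Finset.mem_image] at hx
        obtain ⟨y, hy, rfl⟩ := hx
        rw [Finset.mem_erase] at hy
        refine Finset.mem_erase.2 ⟨fun e => hy.1 ?_, hmate y hy.2 fun e => ?_⟩
        · rw [← hm y, e, hw]
        · have := hfix y e
          have h2 := hy.2
          simp only [DD, Finset.mem_filter] at h2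
          tauto
      have hle := Finset.card_le_card himg
      rw [card_image_m m hm] at hle
      have hwC : w ∈ C := by
        by_contra hwC
        have h1 : w ∉ DD m o C := fun h => hwC (Finset.mem_filter.1 h).1
        rw [Finset.erase_eq_of_notMem h1, Finset.card_erase_of_mem (by simp [hwo, hwC]),
          hcomp] at hle
        omega
      have hwD : w ∈ DD m o C := by simp [DD, hwC, hwo, hw]
      rw [Finset.card_erase_of_mem hwD, Finset.erase_eq_of_notMem (by simp [hwC]), hcomp] at hle
      obtain ⟨T, hTC, hTk, hT⟩ := exists_union m hm C ((h - 1) / 2) (by omega)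
      obtain ⟨t, htT, hzt⟩ := exists_pick T z (Finset.card_pos.1 (by omega))
      have hwT : w ∉ T := fun h => (hT w h).2 hw
      have : ((DD m o C).erase w).Nonempty := by
        apply Finset.card_pos.1
        rw [Finset.card_erase_of_mem hwD]
        omega
      obtain ⟨b, hb⟩ := this
      simp only [DD, Finset.mem_filter, Finset.mem_erase] at hb
      have hbT : b ∉ T := fun hbT => by
        have h1 := hT b hbT
        have h2 := hTC h1.1
        tauto
      have hsub : insert w (T.erase t) ⊆ C := by
        intro x hx
        rcases Finset.mem_insert.1 hx with rfl | hx
        · exact hwC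
        · exact hTC (Finset.mem_of_mem_erase hx)
      refine ⟨insert w (T.erase t), hsub, ?_, ?_, ?_, ?_⟩
      · rw [Finset.card_insert_of_notMem (fun h => hwT (Finset.mem_of_mem_erase h)),
          Finset.card_erase_of_mem htT]
        omega
      · intro hzz
        rcases Finset.mem_insert.1 hzz with rfl | hx
        · exact hz hw
        · exact hzt hx
      · have : DD m o (insert w (T.erase t)) ⊆ {w, m t} := by
          intro x hx
          simp only [DD, Finset.mem_filter, Finset.mem_erase, Finset.mem_insert,
            Finset.mem_singleton] at hx ⊢
          obtain ⟨h1, h4, h5⟩ := hx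
          rcases h1 with h1 | h1
          · exact Or.inl h1
          · have h6 := hT x h1.2
            have : m x = t := by tauto
            right; rw [← this, hm]
        exact (Finset.card_le_card this).trans Finset.card_le_two
      · refine cert m hm o C _ ho hsub t b (hTC htT) ?_ ?_ ?_ hb.2.1 ?_ ?_ ?_
        · simp only [Finset.mem_insert, Finset.mem_erase]
          rintro (rfl | h)
          · exact hwT htT
          · exact h.1 rfl
        · exact Finset.mem_insert_of_mem (Finset.mem_erase.2 ⟨(hT t htT).2, (hT t htT).1⟩)
        · intro x hx
          rcases Finset.mem_insert.1 hx with rfl | hx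
          · rwa [hw]
          · exact hTC (hT x (Finset.mem_of_mem_erase hx)).1
        · simp only [Finset.mem_insert, Finset.mem_erase]
          tauto
        · rintro rfl; exact hbT htT
        · rcases hb.2.2.2 with h | h
          · exact Or.inl h
          · exact Or.inr fun h' => h (Finset.mem_sdiff.1 h').1

/-- the family -/
def KK (m : α → α) (o z : α) (h : ℕ) : Finset (Finset α) :=
  (Finset.univ.powersetCard h).filter fun T =>
    (o ∉ T ∧ 2 ≤ (DD m o T).card) ∨ (o ∈ T ∧ z ∉ T ∧ (DD m o (T.erase o)).card ≤ 2)

lemma main_abs (m : α → α) (hm : ∀ x, m (m x) = x) (o z : α) (hmo : m o = o) (hz : m z ≠ z)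
    (h : ℕ) (hh : 4 ≤ h) (hcard : Fintype.card α = 3 * h - 1)
    (hfix : (h % 2 = 0 ∧ ∀ x, m x = x → x = o) ∨
      (h % 2 = 1 ∧ ∃ w, w ≠ o ∧ m w = w ∧ ∀ x, m x = x → x = o ∨ x = w)) :
    SatisfiesK (Finset.univ : Finset α) h (KK m o z h) := by
  have hzo : z ≠ o := by rintro rfl; exact hz hmo
  refine ⟨Finset.filter_subset _ _, ?_, ?_, ?_⟩
  · intro A hA
    rw [Finset.mem_powersetCard] at hA
    have hA := hA.2
    have hex : ∃ v, v ∉ insert o A := by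
      by_contra hcon
      push Not at hcon
      have h1 : (insert o A).card = 3 * h - 1 := by
        rw [← hcard, ← Finset.card_univ]
        congr 1
        ext x; simp [hcon x]
      have := Finset.card_insert_le o A
      omega
    obtain ⟨v0, hv0⟩ := hex
    have hv0' := hv0
    simp only [Finset.mem_insert, not_or] at hv0'
    by_cases hoA : o ∈ A
    · by_cases hzA : z ∈ A
      · exact ⟨v0, by simp [hv0'.2], by simp [KK, hoA, hzA]⟩
      · exact ⟨z, by simp [hzA], by simp [KK, hoA]⟩
    · by_cases hD : (DD m o A).card ≤ 2
      · suffices ∃ v, v ∉ A ∧ v ≠ o ∧ (DD m o (insert v A)).card ≤ 1 by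
          obtain ⟨v, h1, h2, h3⟩ := this
          refine ⟨v, by simp [h1], ?_⟩
          simp only [KK, Finset.mem_filter, Finset.mem_insert, hoA, or_false]
          rintro ⟨-, h4 | h4⟩
          · omega
          · exact h2 h4.1.symm
        by_cases hne : ∃ a ∈ DD m o A, m a ≠ a
        · obtain ⟨a, ha, hane⟩ := hne
          have ha' := ha
          simp only [DD, Finset.mem_filter] at ha'
          have hma : m a ∉ A := by tauto
          refine ⟨m a, hma, fun e => ha'.2.1 (by rw [← hm a, e, hmo]), ?_⟩
          have : DD m o (insert (m a) A) ⊆ (DD m o A).erase a := by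
            intro x hx
            simp only [DD, Finset.mem_filter, Finset.mem_insert, Finset.mem_erase, not_or] at hx ⊢
            obtain ⟨h1, h2, h3⟩ := hx
            rcases h1 with rfl | h1
            · rw [hm] at h3
              exfalso
              rcases h3 with h3 | h3
              · exact hane h3.symm
              · exact h3.2 ha'.1
            · refine ⟨?_, h1, h2, ?_⟩
              · rintro rfl
                tauto
              · tauto
          have := Finset.card_le_card this
          rw [Finset.card_erase_of_mem ha] at this
          omega
        · push Not at hne
          have hemp : DD m o A = ∅ := by
            by_contra hcon
            obtain ⟨a, ha⟩ := Finset.nonempty_iff_ne_empty.2 hcon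
            have hc := card_pairs m hm o A hoA
            rcases hfix with ⟨-, hfix⟩ | ⟨hpar, w, -, -, hfix⟩
            · exact (Finset.mem_filter.1 ha).2.1 (hfix a (hne a ha))
            · have hs : DD m o A ⊆ {w} := by
                intro x hx
                have h1 := hfix x (hne x hx)
                have h2 := (Finset.mem_filter.1 hx).2.1
                simp only [Finset.mem_singleton]
                tauto
              have h1 := Finset.card_le_card hs
              have h2 := Finset.card_pos.2 ⟨a, ha⟩
              simp only [Finset.card_singleton] at h1
              omega
          refine ⟨v0, hv0'.2, hv0'.1, ?_⟩
          have : DD m o (insert v0 A) ⊆ {v0} := by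
            intro x hx
            simp only [DD, Finset.mem_filter, Finset.mem_insert, Finset.mem_singleton] at hx ⊢
            by_contra hxv
            have : x ∈ DD m o A := by
              simp only [DD, Finset.mem_filter]
              tauto
            rw [hemp] at this
            simp at this
          exact (Finset.card_le_card this).trans (by simp)
      · refine ⟨o, by simp [hoA], ?_⟩
        simp only [KK, Finset.mem_filter, Finset.mem_insert, true_or, not_true, false_and,
          false_or, true_and, Finset.erase_insert hoA]
        tauto
  · intro X hX
    rw [Finset.mem_powersetCard] at hX
    have hX := hX.2
    by_cases hoX : o ∈ X
    · have hC : (X.erase o).card = 2 * h - 1 := by rw [Finset.card_erase_of_mem hoX, hX]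
      obtain ⟨U, hUC, hUc, hzU, hDU, -, hD2⟩ := key m hm o z hmo hz h hh hcard hfix
        (X.erase o) (by simp) hC
      have hoU : o ∉ U := fun h => by simpa using hUC h
      have hRX : insert o U ⊆ X := by
        intro x hx
        rcases Finset.mem_insert.1 hx with rfl | hx
        · exact hoX
        · exact Finset.mem_of_mem_erase (hUC hx)
      have hRc : (insert o U).card = h := by
        rw [Finset.card_insert_of_notMem hoU]; omega
      have hEq : X \ insert o U = X.erase o \ U := by
        ext x; simp; tauto
      refine ⟨insert o U, hRX, hRc, ?_, ?_⟩
      · simp only [KK, Finset.mem_filter, Finset.mem_powersetCard, Finset.subset_univ, hRc,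
          true_and]
        right
        rw [Finset.erase_insert hoU]
        simp [hzo, hzU, hDU]
      · simp only [KK, Finset.mem_filter, Finset.mem_powersetCard, Finset.subset_univ,
          true_and]
        refine ⟨by rw [Finset.card_sdiff_of_subset hRX]; omega, Or.inl ⟨by simp, ?_⟩⟩
        rw [hEq]
        exact hD2
    · obtain ⟨R, hRX, hRc, hD1, hD2⟩ := split_even m hm o X hoX h hX
      have hRc' : (X \ R).card = h := by rw [Finset.card_sdiff_of_subset hRX]; omega
      refine ⟨R, hRX, hRc, ?_, ?_⟩
      · simp only [KK, Finset.mem_filter, Finset.mem_powersetCard, Finset.subset_univ, hRc,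
          true_and]
        left
        refine ⟨fun h => hoX (hRX h), ?_⟩
        rw [hD1]; omega
      · simp only [KK, Finset.mem_filter, Finset.mem_powersetCard, Finset.subset_univ, hRc',
          true_and]
        left
        refine ⟨fun h => hoX (Finset.mem_sdiff.1 h).1, ?_⟩
        rw [hD2]; omega
  · intro Y hY
    rw [Finset.mem_powersetCard] at hY
    have hY := hY.2
    have hYc : (Finset.univ \ Y).card = 2 * h - 1 := by
      rw [Finset.card_sdiff_of_subset (Finset.subset_univ _), Finset.card_univ, hcard]
      omega
    by_cases hoY : o ∈ Y
    · obtain ⟨U, hUC, hUc, hzU, hDU, hDy, -⟩ := key m hm o z hmo hz h hh hcard hfix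
        (Finset.univ \ Y) (by simp [hoY]) hYc
      refine ⟨U, hUC, hUc, ?_⟩
      have hUY : ∀ y ∈ Y, y ∉ U := fun y hy h => (Finset.mem_sdiff.1 (hUC h)).2 hy
      intro y hy
      have hc : (insert y U).card = h := by
        rw [Finset.card_insert_of_notMem (hUY y hy)]; omega
      simp only [KK, Finset.mem_filter, Finset.mem_powersetCard, Finset.subset_univ, hc,
          true_and]
      by_cases hyo : y = o
      · subst hyo
        right
        rw [Finset.erase_insert (hUY y hy)]
        simp [hzo, hzU, hDU]
      · left
        refine ⟨?_, hDy y (by simp [hy]) hyo⟩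
        simp only [Finset.mem_insert, not_or]
        exact ⟨fun e => hyo e.symm, hUY o hoY⟩
    · have hC : ((Finset.univ \ Y).erase o).card = 2 * (h - 1) := by
        rw [Finset.card_erase_of_mem (by simp [hoY]), hYc]; omega
      obtain ⟨U, hUC, hUc, hD1, -⟩ := split_even m hm o _ (by simp) (h - 1) hC
      have hUY : ∀ y ∈ Y, y ∉ U := fun y hy h =>
        (Finset.mem_sdiff.1 (Finset.mem_of_mem_erase (hUC h))).2 hy
      refine ⟨U, hUC.trans (Finset.erase_subset _ _), hUc, ?_⟩
      intro y hy
      have hc : (insert y U).card = h := by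
        rw [Finset.card_insert_of_notMem (hUY y hy)]; omega
      have hoU : o ∉ U := fun h => by simpa using hUC h
      simp only [KK, Finset.mem_filter, Finset.mem_powersetCard, Finset.subset_univ, hc,
          true_and]
      left
      constructor
      · simp only [Finset.mem_insert, not_or]
        exact ⟨fun e => hoY (e ▸ hy), hoU⟩
      · have hs : U.erase (m y) ⊆ DD m o (insert y U) := by
          intro x hx
          rw [Finset.mem_erase] at hx
          have h1 := hx.2
          rw [← hD1] at h1
          simp only [DD, Finset.mem_filter, Finset.mem_insert] at h1 ⊢
          refine ⟨Or.inr hx.2, h1.2.1, ?_⟩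
          rcases h1.2.2 with h2 | h2
          · exact Or.inl h2
          · right
            rintro (h3 | h3)
            · exact hx.1 (by rw [← h3, hm])
            · exact h2 h3
        have h1 := Finset.card_le_card hs
        have h2 := Finset.pred_card_le_card_erase (s := U) (a := m y)
        omega

end Aux

/-- the pairing `{1,2}, {3,4}, ...` on `Fin n` -/
def mate (n : ℕ) (x : Fin n) : Fin n :=
  if x.val = 0 then x
  else if x.val % 2 = 0 then ⟨x.val - 1, by omega⟩
  else if hx : x.val + 1 < n then ⟨x.val + 1, hx⟩ else x

lemma mate_val (n : ℕ) (x : Fin n) : (mate n x).val =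
    if x.val = 0 then x.val else if x.val % 2 = 0 then x.val - 1
    else if x.val + 1 < n then x.val + 1 else x.val := by
  unfold mate
  split_ifs <;> rfl

theorem stmt_10 (h : ℕ) (hh1 : 4 ≤ h) (hh2 : h ≤ 8) :
    ∃ K : Finset (Finset (Fin (3 * h - 1))),
      SatisfiesK (Finset.univ : Finset (Fin (3 * h - 1))) h K := by
  have key := main_abs (mate (3 * h - 1)) ?_ ⟨0, by omega⟩ ⟨1, by omega⟩ ?_ ?_ h hh1 (by simp) ?_
  · refine ⟨KK (mate (3 * h - 1)) ⟨0, by omega⟩ ⟨1, by omega⟩ h, ?_⟩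
    convert key
  · intro x
    have := x.isLt
    apply Fin.ext
    have h1 := mate_val _ x
    have h2 := mate_val _ (mate _ x)
    split_ifs at h1 h2 <;> omega
  · apply Fin.ext
    simp [mate_val]
  · intro e
    have e := congrArg Fin.val e
    rw [mate_val] at e
    simp only at e
    split_ifs at e <;> omega
  · have hf : ∀ x : Fin (3 * h - 1), mate _ x = x → x.val = 0 ∨ (x.val = 3 * h - 2 ∧ h % 2 = 1) := by
      intro x e
      have := x.isLt
      have e := congrArg Fin.val e
      rw [mate_val] at e
      split_ifs at e <;> omega
    rcases Nat.mod_two_eq_zero_or_one h with hp | hp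
    · left
      refine ⟨hp, fun x e => Fin.ext ?_⟩
      have := hf x e
      simp only
      omega
    · right
      refine ⟨hp, ⟨3 * h - 2, by omega⟩, ?_, ?_, ?_⟩
      · intro e
        have e := congrArg Fin.val e
        simp only at e
        omega
      · apply Fin.ext
        rw [mate_val]
        simp only
        split_ifs <;> omega
      · intro x e
        rcases hf x e with h1 | h1
        · exact Or.inl (Fin.ext h1)
        · exact Or.inr (Fin.ext h1.1)
end

section
/- Let h ≥ 2 and let q ∈ (0,1) be a real number. If Φ_h(q) = C(3h−1, h−1)·q^{2h} + C(3h−1, 2h)·(1−q²)^{C(2h,h)/2} + C(3h−1, h)·(1−q^h)^{C(2h−1,h−1)} < 1, then on a vertex set V of size 3h−1 there exists a family K of h-element subsets of V satisfying (K1), (K2) and (K3). -/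
open Finset in
lemma aux_sup {ι : Type*} [Fintype ι] [DecidableEq ι] (q : ℝ) (B : Finset ι) :
    ∑ K : Finset ι, q ^ K.card * (1 - q) ^ Kᶜ.card * (if B ⊆ K then 1 else 0) = q ^ B.card := by
  have key := Finset.prod_add (fun _ : ι => q) (fun i => if i ∈ B then (0:ℝ) else 1 - q) univ
  have h1 : ∏ i : ι, (q + if i ∈ B then (0:ℝ) else 1 - q) = q ^ B.card := by
    have : ∀ i : ι, (q + if i ∈ B then (0:ℝ) else 1 - q) = if i ∈ B then q else 1 := by
      intro i; split_ifs <;> ring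
    simp [this]
  rw [h1, Finset.powerset_univ] at key
  rw [key]
  refine Finset.sum_congr rfl fun K _ => ?_
  rw [Finset.prod_const, mul_assoc]
  congr 1
  rw [← Finset.compl_eq_univ_sdiff]
  split_ifs with hB
  · rw [mul_one, ← Finset.prod_const]
    refine Finset.prod_congr rfl fun i hi => ?_
    rw [if_neg]
    intro h
    exact (Finset.mem_compl.1 hi) (hB h)
  · rw [mul_zero]
    obtain ⟨i, hi, hi'⟩ := Finset.not_subset.1 hB
    exact (Finset.prod_eq_zero (Finset.mem_compl.2 hi') (by simp [hi])).symm

open Finset in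
lemma aux_indep {ι κ : Type*} [Fintype ι] [DecidableEq ι] [DecidableEq κ] (q : ℝ) (J : Finset κ)
    (B : κ → Finset ι) (m : ℕ) (hm : ∀ j ∈ J, (B j).card = m)
    (hd : ∀ i ∈ J, ∀ j ∈ J, i ≠ j → Disjoint (B i) (B j)) :
    ∑ K : Finset ι, q ^ K.card * (1 - q) ^ Kᶜ.card * (if ∀ j ∈ J, ¬ B j ⊆ K then 1 else 0)
      = (1 - q ^ m) ^ J.card := by
  have e : ∀ K : Finset ι, (if ∀ j ∈ J, ¬ B j ⊆ K then (1:ℝ) else 0)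
      = ∑ T ∈ J.powerset, (-1) ^ T.card * (if T.biUnion B ⊆ K then 1 else 0) := by
    intro K
    have key := Finset.prod_add (fun j => -(if B j ⊆ K then (1:ℝ) else 0)) (fun _ => 1) J
    have h1 : (if ∀ j ∈ J, ¬ B j ⊆ K then (1:ℝ) else 0)
        = ∏ j ∈ J, (-(if B j ⊆ K then (1:ℝ) else 0) + 1) := by
      split_ifs with h
      · exact (Finset.prod_eq_one fun j hj => by simp [h j hj]).symm
      · push Not at h
        obtain ⟨j, hj, hj'⟩ := h
        exact (Finset.prod_eq_zero hj (by simp [hj'])).symm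
    rw [h1, key]
    refine Finset.sum_congr rfl fun T _ => ?_
    rw [Finset.prod_const_one, mul_one, Finset.prod_neg]
    congr 1
    split_ifs with h
    · exact Finset.prod_eq_one fun j hj => by
        rw [if_pos ((Finset.subset_biUnion_of_mem B hj).trans h)]
    · rw [Finset.biUnion_subset] at h
      push Not at h
      obtain ⟨j, hj, hj'⟩ := h
      exact (Finset.prod_eq_zero hj (by simp [hj']))
  simp_rw [e, Finset.mul_sum]
  rw [Finset.sum_comm]
  have key := Finset.prod_add (fun _ : κ => -(q ^ m)) (fun _ => 1) J
  have h2 : (1 - q ^ m) ^ J.card = ∏ j ∈ J, (-(q ^ m) + 1) := by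
    rw [Finset.prod_const]; ring
  rw [h2, key]
  refine Finset.sum_congr rfl fun T hT => ?_
  have hTJ := Finset.mem_powerset.1 hT
  have hc : (T.biUnion B).card = T.card * m := by
    rw [Finset.card_biUnion (fun i hi j hj hij => hd i (hTJ hi) j (hTJ hj) hij)]
    rw [Finset.sum_congr rfl (fun j hj => hm j (hTJ hj))]
    simp
  rw [Finset.prod_const_one, mul_one, Finset.prod_const, neg_pow (q ^ m), ← pow_mul, mul_comm m, ← hc,
    ← aux_sup q (T.biUnion B), Finset.mul_sum]
  refine Finset.sum_congr rfl fun K _ => ?_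
  ring

open Finset in
lemma aux_pow {ι : Type*} [Fintype ι] [DecidableEq ι] (q : ℝ) :
    ∑ K : Finset ι, q ^ K.card * (1 - q) ^ Kᶜ.card = 1 := by
  simpa using aux_sup q (∅ : Finset ι)

lemma aux_choose (h : ℕ) (hh : 1 ≤ h) : (2 * h).choose h / 2 = (2 * h - 1).choose (h - 1) := by
  obtain ⟨k, rfl⟩ : ∃ k, h = k + 1 := ⟨h - 1, by omega⟩
  have e : 2 * (k + 1) = (2 * k + 1) + 1 := by ring
  rw [e, Nat.choose_succ_succ]
  have : (2 * k + 1).choose (k + 1) = (2 * k + 1).choose k :=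
    Nat.choose_symm_of_eq_add (by omega)
  simp only [Nat.add_sub_cancel]
  rw [Nat.succ_eq_add_one, this]
  omega

open Finset in
/-- Probability of failure of (K1) at `A`. -/
lemma bad1 {n h : ℕ} (hh : 2 ≤ h) (hn : n = 3 * h - 1) (q : ℝ) (A : Finset (Fin n))
    (hA : A ∈ (univ : Finset (Fin n)).powersetCard (h - 1)) :
    ∑ K : Finset (Finset (Fin n)), q ^ K.card * (1 - q) ^ Kᶜ.card *
      (if Aᶜ.image (fun v => insert v A) ⊆ K then 1 else 0) = q ^ (2 * h) := by
  rw [aux_sup]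
  congr 1
  rw [Finset.card_image_of_injOn, Finset.card_compl, (Finset.mem_powersetCard.1 hA).2,
    Fintype.card_fin]
  · omega
  · intro v hv w hw hvw
    simp only [coe_compl, Set.mem_compl_iff, mem_coe] at hv hw hvw
    have : v ∈ insert w A := hvw ▸ mem_insert_self v A
    exact (mem_insert.1 this).resolve_right hv

open Finset in
/-- Probability of failure of (K2) at `X`. -/
lemma bad2 {n h : ℕ} (hh : 2 ≤ h) (q : ℝ) (X : Finset (Fin n)) (x : Fin n) (hx : x ∈ X)
    (hX : X.card = 2 * h) :
    ∑ K : Finset (Finset (Fin n)), q ^ K.card * (1 - q) ^ Kᶜ.card *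
      (if ∀ U ∈ (X.erase x).powersetCard (h - 1),
        ¬ ({insert x U, X \ insert x U} : Finset (Finset (Fin n))) ⊆ K then 1 else 0)
      = (1 - q ^ 2) ^ ((2 * h).choose h / 2) := by
  have key := aux_indep q ((X.erase x).powersetCard (h - 1))
    (fun U => ({insert x U, X \ insert x U} : Finset (Finset (Fin n)))) 2 ?_ ?_
  rw [Finset.card_powersetCard, Finset.card_erase_of_mem hx, hX,
    ← aux_choose h (by omega)] at key
  · convert key
  · intro U hU
    apply Finset.card_pair
    intro e
    have : x ∈ X \ insert x U := e ▸ mem_insert_self x U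
    simp at this
  · intro U hU W hW hUW
    have hU' : x ∉ U := fun hc => by simpa using (mem_powersetCard.1 hU).1 hc
    have hW' : x ∉ W := fun hc => by simpa using (mem_powersetCard.1 hW).1 hc
    have hUX : insert x U ⊆ X := insert_subset hx
      ((mem_powersetCard.1 hU).1.trans (erase_subset _ _))
    have hWX : insert x W ⊆ X := insert_subset hx
      ((mem_powersetCard.1 hW).1.trans (erase_subset _ _))
    have hne : insert x U ≠ insert x W := fun e => hUW (by
      rw [← erase_insert hU', e, erase_insert hW'])
    rw [Finset.disjoint_left]
    intro S hS hS'
    simp only [mem_insert, mem_singleton] at hS hS'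
    rcases hS with rfl | rfl <;> rcases hS' with e | e
    · exact hne e
    · have : x ∈ X \ insert x W := e ▸ mem_insert_self x U
      simp at this
    · have : x ∈ X \ insert x U := e ▸ mem_insert_self x W
      simp at this
    · apply hne
      rw [← Finset.sdiff_sdiff_eq_self hUX, e, Finset.sdiff_sdiff_eq_self hWX]

open Finset in
/-- Probability of failure of (K3) at `Y`. -/
lemma bad3 {n h : ℕ} (hh : 2 ≤ h) (hn : n = 3 * h - 1) (q : ℝ) (Y : Finset (Fin n))
    (hY : Y.card = h) :
    ∑ K : Finset (Finset (Fin n)), q ^ K.card * (1 - q) ^ Kᶜ.card *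
      (if ∀ U ∈ (univ \ Y).powersetCard (h - 1),
        ¬ Y.image (fun y => insert y U) ⊆ K then 1 else 0)
      = (1 - q ^ h) ^ ((2 * h - 1).choose (h - 1)) := by
  have key := aux_indep q ((univ \ Y).powersetCard (h - 1))
    (fun U => Y.image (fun y => insert y U)) h ?_ ?_
  rw [Finset.card_powersetCard, Finset.card_sdiff_of_subset (subset_univ Y), Finset.card_univ,
    hY, Fintype.card_fin, show n - h = 2 * h - 1 by omega] at key
  · convert key
  · intro U hU
    rw [Finset.card_image_of_injOn, hY]
    intro v hv w hw hvw
    have hvU : v ∉ U := fun hc => by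
      have := (mem_powersetCard.1 hU).1 hc
      simp only [mem_sdiff] at this
      exact this.2 hv
    simp only at hvw
    have : v ∈ insert w U := hvw ▸ mem_insert_self v U
    exact (mem_insert.1 this).resolve_right hvU
  · have hrec : ∀ U ∈ (univ \ Y).powersetCard (h - 1), ∀ y ∈ Y, insert y U \ Y = U := by
      intro U hU y hy
      rw [insert_sdiff_of_mem _ hy]
      apply sdiff_eq_self_of_disjoint
      rw [Finset.disjoint_left]
      intro u hu
      have := (mem_powersetCard.1 hU).1 hu
      simp only [mem_sdiff] at this
      exact this.2
    intro U hU W hW hUW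
    rw [Finset.disjoint_left]
    intro S hS hS'
    simp only [mem_image] at hS hS'
    obtain ⟨y, hy, rfl⟩ := hS
    obtain ⟨z, hz, e⟩ := hS'
    apply hUW
    rw [← hrec U hU y hy, ← e, hrec W hW z hz]

open Finset in
theorem stmt_11_aux (n h : ℕ) (hn : n = 3 * h - 1) (hh : 2 ≤ h) (q : ℝ) (hq0 : 0 < q) (hq1 : q < 1)
    (hPhi : (n.choose (h - 1) : ℝ) * q ^ (2 * h) +
        (n.choose (2 * h) : ℝ) * (1 - q ^ 2) ^ ((2 * h).choose h / 2) +
        (n.choose h : ℝ) * (1 - q ^ h) ^ ((2 * h - 1).choose (h - 1)) < 1) :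
    ∃ K : Finset (Finset (Fin n)),
      SatisfiesK (Finset.univ : Finset (Fin n)) h K := by
  have : NeZero n := ⟨by omega⟩
  have hx : ∀ X : Finset (Fin n), ∃ x, X.card = 2 * h → x ∈ X := by
    intro X
    by_cases hX : X.Nonempty
    · obtain ⟨x, hx⟩ := hX
      exact ⟨x, fun _ => hx⟩
    · refine ⟨0, fun hc => ?_⟩
      rw [not_nonempty_iff_eq_empty.1 hX, card_empty] at hc
      omega
  choose x hx using hx
  obtain ⟨P1, hP1⟩ : ∃ P : Finset (Finset (Fin n)) → Finset (Fin n) → Prop, ∀ K A, P K A ↔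
    (Aᶜ.image (fun v => insert v A) ⊆ K) :=
    ⟨_, fun _ _ => Iff.rfl⟩
  obtain ⟨P2, hP2⟩ : ∃ P : Finset (Finset (Fin n)) → Finset (Fin n) → Prop, ∀ K X, P K X ↔
    (∀ U ∈ (X.erase (x X)).powersetCard (h - 1),
        ¬ ({insert (x X) U, X \ insert (x X) U} : Finset (Finset (Fin n))) ⊆ K) :=
    ⟨_, fun _ _ => Iff.rfl⟩
  obtain ⟨P3, hP3⟩ : ∃ P : Finset (Finset (Fin n)) → Finset (Fin n) → Prop, ∀ K Y, P K Y ↔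
    (∀ U ∈ (univ \ Y).powersetCard (h - 1), ¬ Y.image (fun y => insert y U) ⊆ K) :=
    ⟨_, fun _ _ => Iff.rfl⟩
  have main : ∃ K : Finset (Finset (Fin n)),
      (∀ A ∈ (univ : Finset (Fin n)).powersetCard (h - 1), ¬ P1 K A) ∧
      (∀ X ∈ (univ : Finset (Fin n)).powersetCard (2 * h), ¬ P2 K X) ∧
      (∀ Y ∈ (univ : Finset (Fin n)).powersetCard h, ¬ P3 K Y) := by
    classical
    by_contra hcon
    push Not at hcon
    have S1 : ∑ K : Finset (Finset (Fin n)), q ^ K.card * (1 - q) ^ Kᶜ.card *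
        ∑ A ∈ (univ : Finset (Fin n)).powersetCard (h - 1), (if P1 K A then (1:ℝ) else 0)
        = (n.choose (h - 1) : ℝ) * q ^ (2 * h) := by
      simp_rw [Finset.mul_sum]
      rw [Finset.sum_comm, Finset.sum_congr rfl (g := fun _ => q ^ (2 * h)), Finset.sum_const,
        Finset.card_powersetCard, nsmul_eq_mul, Finset.card_univ, Fintype.card_fin]
      intro A hA
      simp only [hP1]
      convert bad1 hh hn q A hA
    have S2 : ∑ K : Finset (Finset (Fin n)), q ^ K.card * (1 - q) ^ Kᶜ.card *
        ∑ A ∈ (univ : Finset (Fin n)).powersetCard (2 * h), (if P2 K A then (1:ℝ) else 0)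
        = (n.choose (2 * h) : ℝ) * (1 - q ^ 2) ^ ((2 * h).choose h / 2) := by
      simp_rw [Finset.mul_sum]
      rw [Finset.sum_comm, Finset.sum_congr rfl
        (g := fun _ => (1 - q ^ 2) ^ ((2 * h).choose h / 2)), Finset.sum_const,
        Finset.card_powersetCard, nsmul_eq_mul, Finset.card_univ, Fintype.card_fin]
      intro A hA
      have hc := (mem_powersetCard.1 hA).2
      simp only [hP2]
      convert bad2 hh q A (x A) (hx A hc) hc
    have S3 : ∑ K : Finset (Finset (Fin n)), q ^ K.card * (1 - q) ^ Kᶜ.card *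
        ∑ A ∈ (univ : Finset (Fin n)).powersetCard h, (if P3 K A then (1:ℝ) else 0)
        = (n.choose h : ℝ) * (1 - q ^ h) ^ ((2 * h - 1).choose (h - 1)) := by
      simp_rw [Finset.mul_sum]
      rw [Finset.sum_comm, Finset.sum_congr rfl
        (g := fun _ => (1 - q ^ h) ^ ((2 * h - 1).choose (h - 1))), Finset.sum_const,
        Finset.card_powersetCard, nsmul_eq_mul, Finset.card_univ, Fintype.card_fin]
      intro A hA
      have hc := (mem_powersetCard.1 hA).2
      simp only [hP3]
      convert bad3 hh hn q A hc
    rw [← S1, ← S2, ← S3, ← Finset.sum_add_distrib, ← Finset.sum_add_distrib] at hPhi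
    refine absurd hPhi (not_lt.2 ?_)
    refine (aux_pow (ι := Finset (Fin n)) q).symm.le.trans (Finset.sum_le_sum fun K _ => ?_)
    rw [← mul_add, ← mul_add]
    have hw : 0 ≤ q ^ K.card * (1 - q) ^ Kᶜ.card :=
      mul_nonneg (pow_nonneg hq0.le _) (pow_nonneg (by linarith) _)
    refine le_mul_of_one_le_right hw ?_
    have nn : ∀ (P : Finset (Fin n) → Prop) (s : Finset (Finset (Fin n))),
        0 ≤ ∑ A ∈ s, (if P A then (1:ℝ) else 0) := fun P s =>
      Finset.sum_nonneg fun A _ => by split_ifs <;> norm_num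
    have one : ∀ (P : Finset (Fin n) → Prop) (s : Finset (Finset (Fin n))), ∀ A ∈ s, P A →
        1 ≤ ∑ A ∈ s, (if P A then (1:ℝ) else 0) := fun P s A hA hP => by
      have := Finset.single_le_sum (f := fun A => if P A then (1:ℝ) else 0) (s := s)
        (fun A _ => by split_ifs <;> norm_num) hA
      simpa [hP] using this
    have n1 := nn (P1 K) ((univ : Finset (Fin n)).powersetCard (h - 1))
    have n2 := nn (P2 K) ((univ : Finset (Fin n)).powersetCard (2 * h))
    have n3 := nn (P3 K) ((univ : Finset (Fin n)).powersetCard h)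
    by_cases c1 : ∃ A ∈ (univ : Finset (Fin n)).powersetCard (h - 1), P1 K A
    · obtain ⟨A, hA, hP⟩ := c1
      have := one (P1 K) _ A hA hP
      linarith
    by_cases c2 : ∃ A ∈ (univ : Finset (Fin n)).powersetCard (2 * h), P2 K A
    · obtain ⟨A, hA, hP⟩ := c2
      have := one (P2 K) _ A hA hP
      linarith
    push Not at c1 c2
    obtain ⟨A, hA, hP⟩ := hcon K c1 c2
    have := one (P3 K) _ A hA hP
    linarith
  obtain ⟨K, h1, h2, h3⟩ := main
  refine ⟨K.filter (fun S => S.card = h), ?_, ?_, ?_, ?_⟩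
  · intro S hS
    simpa [mem_powersetCard] using (mem_filter.1 hS).2
  · intro A hA
    have := h1 A hA
    simp only [hP1, Finset.not_subset, mem_image, mem_compl] at this
    obtain ⟨_, ⟨v, hv, rfl⟩, hK⟩ := this
    exact ⟨v, by simpa using hv, fun hc => hK (mem_filter.1 hc).1⟩
  · intro X hX
    have := h2 X hX
    have hXc := (mem_powersetCard.1 hX).2
    simp only [hP2] at this
    push Not at this
    obtain ⟨U, hU, hK⟩ := this
    have hxX := hx X hXc
    have hU' : x X ∉ U := fun hc => by simpa using (mem_powersetCard.1 hU).1 hc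
    have hUX : insert (x X) U ⊆ X := insert_subset hxX
      ((mem_powersetCard.1 hU).1.trans (erase_subset _ _))
    have hc : (insert (x X) U).card = h := by
      rw [card_insert_of_notMem hU', (mem_powersetCard.1 hU).2]; omega
    refine ⟨insert (x X) U, hUX, hc, mem_filter.2 ⟨hK (by simp), hc⟩,
      mem_filter.2 ⟨hK (by simp), ?_⟩⟩
    rw [card_sdiff_of_subset hUX, hc, hXc]; omega
  · intro Y hY
    have := h3 Y hY
    simp only [hP3] at this
    push Not at this
    obtain ⟨U, hU, hK⟩ := this
    obtain ⟨hUs, hUc⟩ := mem_powersetCard.1 hU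
    refine ⟨U, hUs, hUc, fun y hy => mem_filter.2 ⟨hK (mem_image_of_mem _ hy), ?_⟩⟩
    have hyU : y ∉ U := fun hc => (mem_sdiff.1 (hUs hc)).2 hy
    rw [card_insert_of_notMem hyU, hUc]; omega

theorem stmt_11 (h : ℕ) (hh : 2 ≤ h) (q : ℝ) (hq0 : 0 < q) (hq1 : q < 1)
    (hPhi : ((3 * h - 1).choose (h - 1) : ℝ) * q ^ (2 * h) +
        ((3 * h - 1).choose (2 * h) : ℝ) * (1 - q ^ 2) ^ ((2 * h).choose h / 2) +
        ((3 * h - 1).choose h : ℝ) * (1 - q ^ h) ^ ((2 * h - 1).choose (h - 1)) < 1) :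
    ∃ K : Finset (Finset (Fin (3 * h - 1))),
      SatisfiesK (Finset.univ : Finset (Fin (3 * h - 1))) h K :=
  stmt_11_aux (3 * h - 1) h rfl hh q hq0 hq1 hPhi
end

section
/- For every integer h ≥ 31, with q = 7/20 one has Φ_h(q) = C(3h−1, h−1)·q^{2h} + C(3h−1, 2h)·(1−q²)^{C(2h,h)/2} + C(3h−1, h)·(1−q^h)^{C(2h−1,h−1)} < 1. -/
theorem growth_aux (h : ℕ) (hh : 31 ≤ h) :
    4 * (h : ℝ) * (3 * h + 1) ≤ (7 / 5 : ℝ) ^ h := by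
  induction h, hh using Nat.le_induction with
  | base => norm_num
  | succ n hn ih =>
    have hn' : (31 : ℝ) ≤ n := by exact_mod_cast hn
    rw [pow_succ]
    push_cast
    nlinarith

theorem choose_aux (h k : ℕ) (hh : 31 ≤ h) :
    ((3 * h - 1).choose k : ℝ) ≤ 8 ^ h / 2 := by
  have h1 : (3 * h - 1).choose k ≤ 2 ^ (3 * h - 1) := Nat.choose_le_two_pow _ _
  have h2 : (2 : ℝ) ^ (3 * h - 1) * 2 = 8 ^ h := by
    rw [← pow_succ, show 3 * h - 1 + 1 = 3 * h by omega, pow_mul]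
    norm_num
  have h3 : ((3 * h - 1).choose k : ℝ) ≤ 2 ^ (3 * h - 1) := by exact_mod_cast h1
  linarith

theorem tail_aux (h N : ℕ) (hh : 31 ≤ h) (hN : 2 * N = (2 * h).choose h) :
    (8 : ℝ) ^ h / 2 * (1 - ((7 : ℝ) / 20) ^ h) ^ N ≤ 1 / 4 := by
  have hc : 4 ^ h ≤ 2 * h * (2 * h).choose h := by
    have := Nat.four_pow_le_two_mul_self_mul_centralBinom h (by omega)
    simpa [Nat.centralBinom] using this
  have hc' : (4 : ℝ) ^ h ≤ 4 * h * N := by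
    have : 4 ^ h ≤ 4 * h * N := by rw [← hN] at hc; linarith
    exact_mod_cast this
  have hh' : (31 : ℝ) ≤ h := by exact_mod_cast hh
  have hq : (0 : ℝ) < (7 / 20) ^ h := by positivity
  have hg := growth_aux h hh
  have e : (7 / 5 : ℝ) ^ h = (7 / 20) ^ h * 4 ^ h := by rw [← mul_pow]; norm_num
  have key : 3 * (h : ℝ) + 1 ≤ N * (7 / 20) ^ h := by
    have h1 : 4 * (h : ℝ) * (3 * h + 1) ≤ 4 * h * (N * (7 / 20) ^ h) := by
      calc _ ≤ _ := hg
        _ = _ := e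
        _ ≤ (7 / 20) ^ h * (4 * h * N) := by gcongr
        _ = _ := by ring
    exact le_of_mul_le_mul_left h1 (by positivity)
  have hq1 : ((7 : ℝ) / 20) ^ h ≤ 1 := pow_le_one₀ (by norm_num) (by norm_num)
  have hexp : (1 - ((7 : ℝ) / 20) ^ h) ^ N ≤ Real.exp (-(3 * h + 1)) := by
    calc (1 - ((7 : ℝ) / 20) ^ h) ^ N ≤ (Real.exp (-(7 / 20) ^ h)) ^ N := by
          apply pow_le_pow_left₀ (by linarith)
          exact Real.one_sub_le_exp_neg _
      _ = Real.exp (N * (-(7 / 20) ^ h)) := (Real.exp_nat_mul _ _).symm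
      _ ≤ _ := by
          apply Real.exp_le_exp.mpr
          linarith
  have he : (2 : ℝ) ≤ Real.exp 1 := by
    have := Real.add_one_le_exp (1 : ℝ)
    linarith
  have h8 : (8 : ℝ) ^ h * 2 ≤ Real.exp (3 * h + 1) := by
    have : Real.exp (3 * h + 1) = (Real.exp 1) ^ (3 * h + 1) := by
      rw [← Real.exp_nat_mul]; push_cast; ring_nf
    rw [this, show (8 : ℝ) ^ h * 2 = 2 ^ (3 * h + 1) by rw [pow_succ, pow_mul]; norm_num]
    gcongr
  have hp := Real.exp_pos (3 * (h : ℝ) + 1)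
  calc _ ≤ (8 : ℝ) ^ h / 2 * Real.exp (-(3 * h + 1)) := by gcongr
    _ ≤ (Real.exp (3 * h + 1) / 4) * Real.exp (-(3 * h + 1)) := by
        gcongr ?_ * _
        linarith
    _ = 1 / 4 := by rw [Real.exp_neg]; field_simp

theorem stmt_12 (h : ℕ) (hh : 31 ≤ h) :
    ((3 * h - 1).choose (h - 1) : ℝ) * ((7 : ℝ) / 20) ^ (2 * h) +
      ((3 * h - 1).choose (2 * h) : ℝ) *
        (1 - ((7 : ℝ) / 20) ^ 2) ^ ((2 * h).choose h / 2) +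
      ((3 * h - 1).choose h : ℝ) *
        (1 - ((7 : ℝ) / 20) ^ h) ^ ((2 * h - 1).choose (h - 1)) < 1 := by
  have hN : 2 * (2 * h - 1).choose (h - 1) = (2 * h).choose h := by
    obtain ⟨n, rfl⟩ : ∃ n, h = n + 1 := ⟨h - 1, by omega⟩
    have h1 : (2 * (n + 1)).choose (n + 1) = (2 * n + 1).choose n + (2 * n + 1).choose (n + 1) :=
      Nat.choose_succ_succ _ _
    have h2 : (2 * n + 1).choose (n + 1) = (2 * n + 1).choose n :=
      Nat.choose_symm_half n
    rw [show 2 * (n + 1) - 1 = 2 * n + 1 by omega, Nat.add_sub_cancel, h1, h2]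
    ring
  have hN2 : (2 * h).choose h / 2 = (2 * h - 1).choose (h - 1) := by omega
  rw [hN2]
  have ht := tail_aux h _ hh hN
  set N := (2 * h - 1).choose (h - 1)
  have hq1 : ((7 : ℝ) / 20) ^ h ≤ (7 / 20) ^ 2 :=
    pow_le_pow_of_le_one (by norm_num) (by norm_num) (by omega)
  have hpos : (0 : ℝ) ≤ 1 - ((7 : ℝ) / 20) ^ h := by
    have : ((7 : ℝ) / 20) ^ h ≤ 1 := pow_le_one₀ (by norm_num) (by norm_num)
    linarith
  have t1 : ((3 * h - 1).choose (h - 1) : ℝ) * ((7 : ℝ) / 20) ^ (2 * h) < 1 / 2 := by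
    calc _ ≤ (8 : ℝ) ^ h / 2 * ((7 : ℝ) / 20) ^ (2 * h) := by
          gcongr
          exact choose_aux h _ hh
      _ = (49 / 50) ^ h / 2 := by
          rw [pow_mul, div_mul_eq_mul_div, ← mul_pow]; norm_num
      _ < 1 / 2 := by
          have : (49 / 50 : ℝ) ^ h < 1 := pow_lt_one₀ (by norm_num) (by norm_num) (by omega)
          linarith
  have t2 : ((3 * h - 1).choose (2 * h) : ℝ) * (1 - ((7 : ℝ) / 20) ^ 2) ^ N ≤ 1 / 4 := by
    refine le_trans ?_ ht
    apply mul_le_mul (choose_aux h _ hh) _ (by apply pow_nonneg; norm_num) (by positivity)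
    exact pow_le_pow_left₀ (by norm_num) (by linarith) _
  have t3 : ((3 * h - 1).choose h : ℝ) * (1 - ((7 : ℝ) / 20) ^ h) ^ N ≤ 1 / 4 :=
    le_trans (mul_le_mul_of_nonneg_right (choose_aux h _ hh) (pow_nonneg hpos _)) ht
  linarith
end

section
/- For every integer h ≥ 1, C(3h−1, h)·(1−(7/20)^h)^{C(2h−1,h−1)} ≤ (27/4)^h · exp(−(7/5)^h/(2(2h+1))). -/
theorem stmt_15 (h : ℕ) (hh : 1 ≤ h) :
    ((3 * h - 1).choose h : ℝ) *
      (1 - ((7 : ℝ) / 20) ^ h) ^ ((2 * h - 1).choose (h - 1)) ≤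
    ((27 : ℝ) / 4) ^ h *
      Real.exp (-(((7 : ℝ) / 5) ^ h / (2 * (2 * (h : ℝ) + 1)))) := by
  have hx1 : ((7 : ℝ) / 20) ^ h ≤ 1 := pow_le_one₀ (by norm_num) (by norm_num)
  have hx0 : 0 < ((7 : ℝ) / 20) ^ h := by positivity
  have hA : ((3 * h - 1).choose h : ℝ) ≤ ((27 : ℝ) / 4) ^ h := by
    have h1 : ((3 * h - 1).choose h : ℝ) ≤ ((3 * h).choose h : ℝ) := by
      exact_mod_cast Nat.choose_le_choose h (by omega)
    have h2 : ((1 : ℝ) / 3) ^ h * (2 / 3) ^ (3 * h - h) * ((3 * h).choose h : ℝ) ≤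
        (1 / 3 + 2 / 3) ^ (3 * h) := by
      rw [add_pow]
      exact Finset.single_le_sum
        (f := fun m => ((1 : ℝ) / 3) ^ m * (2 / 3) ^ (3 * h - m) * ((3 * h).choose m : ℝ))
        (fun i _ => by positivity) (Finset.mem_range.2 (by omega))
    have h3 : ((1 : ℝ) / 3) ^ h * (2 / 3) ^ (3 * h - h) = (4 / 27) ^ h := by
      rw [show 3 * h - h = 2 * h by omega, pow_mul, ← mul_pow]; norm_num
    have h4 : ((27 : ℝ) / 4) ^ h * (4 / 27) ^ h = 1 := by
      rw [← mul_pow]; norm_num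
    rw [h3, show (1 / 3 + 2 / 3 : ℝ) = 1 by norm_num, one_pow] at h2
    have h5 := mul_le_mul_of_nonneg_left h2 (show (0 : ℝ) ≤ (27 / 4) ^ h by positivity)
    rw [← mul_assoc, h4] at h5
    linarith
  have hN : (4 : ℝ) ^ h / (2 * (2 * (h : ℝ) + 1)) ≤ ((2 * h - 1).choose (h - 1) : ℝ) := by
    have e : Nat.centralBinom h = 2 * (2 * h - 1).choose (h - 1) := by
      obtain ⟨k, rfl⟩ : ∃ k, h = k + 1 := ⟨h - 1, by omega⟩
      rw [Nat.centralBinom_eq_two_mul_choose, show 2 * (k + 1) - 1 = 2 * k + 1 by omega,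
        show 2 * (k + 1) = 2 * k + 1 + 1 by ring, Nat.choose_succ_succ', Nat.add_sub_cancel,
        Nat.choose_symm_half]
      ring
    have h1 := Nat.four_pow_le_two_mul_self_mul_centralBinom h hh
    rw [e] at h1
    have h2 : (4 : ℝ) ^ h ≤ 2 * h * (2 * ((2 * h - 1).choose (h - 1) : ℝ)) := by
      exact_mod_cast h1
    rw [div_le_iff₀ (by positivity)]
    have : (0 : ℝ) ≤ ((2 * h - 1).choose (h - 1) : ℝ) := by positivity
    nlinarith
  have hB : (1 - ((7 : ℝ) / 20) ^ h) ^ ((2 * h - 1).choose (h - 1)) ≤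
      Real.exp (-(((7 : ℝ) / 5) ^ h / (2 * (2 * (h : ℝ) + 1)))) := by
    calc _ ≤ (Real.exp (-(((7 : ℝ) / 20) ^ h))) ^ ((2 * h - 1).choose (h - 1)) :=
          pow_le_pow_left₀ (by linarith) (Real.one_sub_le_exp_neg _) _
      _ = Real.exp (((2 * h - 1).choose (h - 1) : ℝ) * (-(((7 : ℝ) / 20) ^ h))) := by
          rw [Real.exp_nat_mul]
      _ ≤ _ := by
          apply Real.exp_le_exp.2
          have e : ((7 : ℝ) / 5) ^ h = (7 / 20) ^ h * 4 ^ h := by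
            rw [← mul_pow]; norm_num
          rw [e, mul_div_assoc]
          have := mul_le_mul_of_nonneg_left hN hx0.le
          linarith
  exact mul_le_mul hA hB (pow_nonneg (by linarith) _) (by positivity)
end
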